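/- arXiv:1208.3818 — 2 statements merged into one kernel-verified Lean document; each statement's English description precedes it below -/
import Mathlib

section
/- There exists a function R(z,w) which is a homogeneous polynomial of degree 3 in z_1,…,z_n, their complex conjugates, w_1,…,w_n and their complex conjugates, each of whose monomials z̄^α z^β w̄^γ w^δ satisfies (α'',β') = (0,0), such that ψ(z,w) − E(z,w) − R(z,w) = O(|(z,w)|^4) as (z,w) → (0,0), where E(z,w) := i Σ_{j=1}^n |λ_j||z_j−w_j|^2 + i Σ_{j=1}^n λ_j(z̄_j w_j − w̄_j z_j) + i Σ_{|α|+|β|=3, (α'',β')≠(0,0)} [(⟨λ'',α''⟩+⟨λ',β'⟩)/(⟨|λ''|,α''⟩+⟨|λ'|,β'⟩)] (∂^3φ/∂z̄^α∂z^β(0)) z̄^α z^β/(α!β!) + i Σ_{j=1}^q Σ_{|α|+|β|=2, α''≠0} (∂^3φ/∂z̄^α∂z^β∂z_j(0)/(α!β!)) [2|λ_j|⟨|λ''|,α''⟩/((⟨|λ''|,α''⟩+⟨|λ'|,β'⟩)(⟨|λ''|,α''⟩+⟨|λ'|,β'⟩+|λ_j|))] z̄^α z^β w_j − i Σ_{j=q+1}^n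 Σ_{|α|+|β|=2, β'≠0} (∂^3φ/∂z̄^α∂z^β∂z̄_j(0)/(α!β!)) [2|λ_j|⟨|λ'|,β'⟩/((⟨|λ''|,α''⟩+⟨|λ'|,β'⟩)(⟨|λ''|,α''⟩+⟨|λ'|,β'⟩+|λ_j|))] z̄^α z^β w̄_j + i Σ_{q+1≤k≤n, 1≤j,s≤q} (∂^3φ/∂z̄_k∂z_j∂z_s(0)) [|λ_j||λ_s|/(|λ_k|+|λ_j|+|λ_s|)](1/(|λ_j|+|λ_k|)+1/(|λ_k|+|λ_s|)) z̄_k w_j w_s − i Σ_{1≤k≤q, q+1≤j,s≤n} (∂^3φ/∂z_k∂z̄_j∂z̄_s(0)) [|λ_j||λ_s|/(|λ_k|+|λ_j|+|λ_s|)](1/(|λ_j|+|λ_k|)+1/(|λ_k|+|λ_s|)) z_k w̄_j w̄_s + i Σ_{q+1≤s,k≤n, 1≤j≤q} (∂^3φ/∂z̄_s∂z_j∂z̄_k(0)) [2|λ_j||λ_k|/((|λ_s|+|λ_j|)(|λ_s|+|λ_j|+|λ_k|))] z̄_s w̄_k w_j − i Σ_{q+1≤k≤n, 1≤j,s≤q}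 (∂^3φ/∂z_s∂z_j∂z̄_k(0)) [2|λ_j||λ_k|/((|λ_s|+|λ_k|)(|λ_s|+|λ_j|+|λ_k|))] z_s w̄_k w_j. -/
open Complex Asymptotics

attribute [local instance] Classical.propDecidable

noncomputable section

/-- `ℂⁿ` as `Fin n → ℂ`. -/
abbrev Cn (n : ℕ) := Fin n → ℂ

/-- Wirtinger derivative `∂/∂z_j = (1/2)(∂/∂x_{2j-1} − i ∂/∂x_{2j})`. -/
def wd {n : ℕ} (j : Fin n) (f : Cn n → ℂ) : Cn n → ℂ := fun z =>
  (1 / 2 : ℂ) *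
    (fderiv ℝ f z (Pi.single j 1) - Complex.I * fderiv ℝ f z (Pi.single j Complex.I))

/-- Wirtinger derivative `∂/∂z̄_j = (1/2)(∂/∂x_{2j-1} + i ∂/∂x_{2j})`. -/
def wdb {n : ℕ} (j : Fin n) (f : Cn n → ℂ) : Cn n → ℂ := fun z =>
  (1 / 2 : ℂ) *
    (fderiv ℝ f z (Pi.single j 1) + Complex.I * fderiv ℝ f z (Pi.single j Complex.I))

/-- A real-valued function regarded as complex-valued. -/
def cplx {n : ℕ} (φ : Cn n → ℝ) : Cn n → ℂ := fun z => (φ z : ℂ)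

/-- `φ` is smooth and `φ(z) = Σ_j λ_j |z_j|² + O(|z|³)` as `z → 0`. -/
def PhiOK {n : ℕ} (lam : Fin n → ℝ) (φ : Cn n → ℝ) : Prop :=
  ContDiff ℝ (⊤ : ℕ∞) φ ∧
    (fun z : Cn n => φ z - ∑ j, lam j * Complex.normSq (z j)) =O[nhds 0] fun z => ‖z‖ ^ 3

/-- The conditions (a)–(e) on the phase function `ψ`. -/
def Admissible {n : ℕ} (lam : Fin n → ℝ) (φ : Cn n → ℝ) (ψ : Cn n → Cn n → ℂ) : Prop :=
  ContDiff ℝ (⊤ : ℕ∞) (fun p : Cn n × Cn n => ψ p.1 p.2) ∧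
  -- (a)
  (∀ z, ψ z z = 0) ∧
  (∀ z w, ψ z w = - (starRingEnd ℂ) (ψ w z)) ∧
  -- (b)
  (∃ c : ℝ, 0 < c ∧ ∀ z w, c * ‖z - w‖ ^ 2 ≤ (ψ z w).im) ∧
  -- (c): on the diagonal, ∂ψ/∂z̄_j = i ∂φ/∂z̄_j, ∂ψ/∂z_j = −i ∂φ/∂z_j,
  --      ∂ψ/∂w̄_j = −i ∂φ/∂z̄_j, ∂ψ/∂w_j = i ∂φ/∂z_j
  (∀ (z : Cn n) (j : Fin n), wdb j (fun x => ψ x z) z = Complex.I * wdb j (cplx φ) z) ∧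
  (∀ (z : Cn n) (j : Fin n), wd j (fun x => ψ x z) z = - Complex.I * wd j (cplx φ) z) ∧
  (∀ (z : Cn n) (j : Fin n), wdb j (fun w => ψ z w) z = - Complex.I * wdb j (cplx φ) z) ∧
  (∀ (z : Cn n) (j : Fin n), wd j (fun w => ψ z w) z = Complex.I * wd j (cplx φ) z) ∧
  -- (d): Σ_j (i ∂ψ/∂z̄_j + ∂φ/∂z̄_j)(−i ∂ψ/∂z_j + ∂φ/∂z_j) vanishes to infinite
  --      order on the diagonal
  (∀ (m : ℕ) (z : Cn n),
    iteratedFDeriv ℝ m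
      (fun p : Cn n × Cn n =>
        ∑ j, (Complex.I * wdb j (fun x => ψ x p.2) p.1 + wdb j (cplx φ) p.1) *
             (- Complex.I * wd j (fun x => ψ x p.2) p.1 + wd j (cplx φ) p.1))
      (z, z) = 0) ∧
  -- (e)
  ((fun p : Cn n × Cn n =>
      ψ p.1 p.2 -
        (Complex.I * ∑ j, ((|lam j| * Complex.normSq (p.1 j - p.2 j) : ℝ) : ℂ)
          + Complex.I * ∑ j, ((lam j : ℝ) : ℂ) *
              ((starRingEnd ℂ) (p.1 j) * p.2 j - (starRingEnd ℂ) (p.2 j) * p.1 j)))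
    =O[nhds 0] fun p => ‖p‖ ^ 3)
/-- Directional Wirtinger operator: `inl j ↦ ∂/∂z̄_j`, `inr j ↦ ∂/∂z_j`. -/
def Dv {n : ℕ} : Fin n ⊕ Fin n → (Cn n → ℂ) → Cn n → ℂ
  | Sum.inl j => wdb j
  | Sum.inr j => wd j

/-- The variable attached to an index: `inl j ↦ z̄_j`, `inr j ↦ z_j`. -/
def Mv {n : ℕ} (v : Fin n ⊕ Fin n) (z : Cn n) : ℂ :=
  match v with
  | Sum.inl j => (starRingEnd ℂ) (z j)
  | Sum.inr j => z j

/-- `α` for a triple of variable indices. -/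
def aOf3 {n : ℕ} (v₁ v₂ v₃ : Fin n ⊕ Fin n) : Fin n → ℕ := fun j =>
  (if v₁ = Sum.inl j then 1 else 0) + (if v₂ = Sum.inl j then 1 else 0) +
    (if v₃ = Sum.inl j then 1 else 0)

/-- `β` for a triple of variable indices. -/
def bOf3 {n : ℕ} (v₁ v₂ v₃ : Fin n ⊕ Fin n) : Fin n → ℕ := fun j =>
  (if v₁ = Sum.inr j then 1 else 0) + (if v₂ = Sum.inr j then 1 else 0) +
    (if v₃ = Sum.inr j then 1 else 0)

/-- `α` for a pair of variable indices. -/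
def aOf2 {n : ℕ} (v₁ v₂ : Fin n ⊕ Fin n) : Fin n → ℕ := fun j =>
  (if v₁ = Sum.inl j then 1 else 0) + (if v₂ = Sum.inl j then 1 else 0)

/-- `β` for a pair of variable indices. -/
def bOf2 {n : ℕ} (v₁ v₂ : Fin n ⊕ Fin n) : Fin n → ℕ := fun j =>
  (if v₁ = Sum.inr j then 1 else 0) + (if v₂ = Sum.inr j then 1 else 0)

/-- The condition `(α'', β') = (0,0)`. -/
def cond0 {n : ℕ} (q : ℕ) (α β : Fin n → ℕ) : Prop :=
  ∀ j : Fin n, (q ≤ (j : ℕ) → α j = 0) ∧ ((j : ℕ) < q → β j = 0)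

/-- `⟨|λ''|, α''⟩`. -/
def wA {n : ℕ} (q : ℕ) (lam : Fin n → ℝ) (α : Fin n → ℕ) : ℝ :=
  ∑ j : Fin n, if q ≤ (j : ℕ) then |lam j| * α j else 0

/-- `⟨|λ'|, β'⟩`. -/
def wB {n : ℕ} (q : ℕ) (lam : Fin n → ℝ) (β : Fin n → ℕ) : ℝ :=
  ∑ j : Fin n, if (j : ℕ) < q then |lam j| * β j else 0

/-- `⟨λ'', α''⟩ + ⟨λ', β'⟩`. -/
def swgt {n : ℕ} (q : ℕ) (lam : Fin n → ℝ) (α β : Fin n → ℕ) : ℝ :=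
  ∑ j : Fin n, if (j : ℕ) < q then lam j * β j else lam j * α j

/-- The explicit expansion `E(z,w)` of Statement 5.  Sums over multiindices with
`|α|+|β| = d` are written as `1/d!` times sums over ordered `d`-tuples of variables
(using that mixed partials of the smooth function `φ` commute, and that a multiindex
`(α,β)` is represented by exactly `d!/(α!β!)` ordered tuples). -/
def E5 {n : ℕ} (q : ℕ) (lam : Fin n → ℝ) (φ : Cn n → ℝ) (z w : Cn n) : ℂ :=
  Complex.I * ∑ j, ((|lam j| * Complex.normSq (z j - w j) : ℝ) : ℂ)
  + Complex.I * ∑ j, ((lam j : ℝ) : ℂ) *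
      ((starRingEnd ℂ) (z j) * w j - (starRingEnd ℂ) (w j) * z j)
  + (Complex.I / 6) *
      ∑ v₁ : Fin n ⊕ Fin n, ∑ v₂ : Fin n ⊕ Fin n, ∑ v₃ : Fin n ⊕ Fin n,
        (if ¬ cond0 q (aOf3 v₁ v₂ v₃) (bOf3 v₁ v₂ v₃) then
          ((swgt q lam (aOf3 v₁ v₂ v₃) (bOf3 v₁ v₂ v₃) /
              (wA q lam (aOf3 v₁ v₂ v₃) + wB q lam (bOf3 v₁ v₂ v₃)) : ℝ) : ℂ)
        else 0) *
          Dv v₁ (Dv v₂ (Dv v₃ (cplx φ))) 0 * Mv v₁ z * Mv v₂ z * Mv v₃ z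
  + (Complex.I / 2) *
      ∑ j : Fin n, ∑ v₁ : Fin n ⊕ Fin n, ∑ v₂ : Fin n ⊕ Fin n,
        (if (j : ℕ) < q ∧ ¬ (∀ t : Fin n, q ≤ (t : ℕ) → aOf2 v₁ v₂ t = 0) then
          ((2 * |lam j| * wA q lam (aOf2 v₁ v₂) /
              ((wA q lam (aOf2 v₁ v₂) + wB q lam (bOf2 v₁ v₂)) *
               (wA q lam (aOf2 v₁ v₂) + wB q lam (bOf2 v₁ v₂) + |lam j|)) : ℝ) : ℂ)
        else 0) *
          Dv v₁ (Dv v₂ (wd j (cplx φ))) 0 * Mv v₁ z * Mv v₂ z * w j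
  - (Complex.I / 2) *
      ∑ j : Fin n, ∑ v₁ : Fin n ⊕ Fin n, ∑ v₂ : Fin n ⊕ Fin n,
        (if q ≤ (j : ℕ) ∧ ¬ (∀ t : Fin n, (t : ℕ) < q → bOf2 v₁ v₂ t = 0) then
          ((2 * |lam j| * wB q lam (bOf2 v₁ v₂) /
              ((wA q lam (aOf2 v₁ v₂) + wB q lam (bOf2 v₁ v₂)) *
               (wA q lam (aOf2 v₁ v₂) + wB q lam (bOf2 v₁ v₂) + |lam j|)) : ℝ) : ℂ)
        else 0) *
          Dv v₁ (Dv v₂ (wdb j (cplx φ))) 0 * Mv v₁ z * Mv v₂ z * (starRingEnd ℂ) (w j)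
  + Complex.I *
      ∑ k : Fin n, ∑ j : Fin n, ∑ s : Fin n,
        (if q ≤ (k : ℕ) ∧ (j : ℕ) < q ∧ (s : ℕ) < q then
          ((|lam j| * |lam s| / (|lam k| + |lam j| + |lam s|) *
              (1 / (|lam j| + |lam k|) + 1 / (|lam k| + |lam s|)) : ℝ) : ℂ) *
            wdb k (wd j (wd s (cplx φ))) 0 * (starRingEnd ℂ) (z k) * w j * w s
        else 0)
  - Complex.I *
      ∑ k : Fin n, ∑ j : Fin n, ∑ s : Fin n,
        (if (k : ℕ) < q ∧ q ≤ (j : ℕ) ∧ q ≤ (s : ℕ) then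
          ((|lam j| * |lam s| / (|lam k| + |lam j| + |lam s|) *
              (1 / (|lam j| + |lam k|) + 1 / (|lam k| + |lam s|)) : ℝ) : ℂ) *
            wd k (wdb j (wdb s (cplx φ))) 0 * z k * (starRingEnd ℂ) (w j) *
              (starRingEnd ℂ) (w s)
        else 0)
  + Complex.I *
      ∑ s : Fin n, ∑ k : Fin n, ∑ j : Fin n,
        (if q ≤ (s : ℕ) ∧ q ≤ (k : ℕ) ∧ (j : ℕ) < q then
          ((2 * |lam j| * |lam k| /
              ((|lam s| + |lam j|) * (|lam s| + |lam j| + |lam k|)) : ℝ) : ℂ) *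
            wdb s (wd j (wdb k (cplx φ))) 0 * (starRingEnd ℂ) (z s) *
              (starRingEnd ℂ) (w k) * w j
        else 0)
  - Complex.I *
      ∑ k : Fin n, ∑ j : Fin n, ∑ s : Fin n,
        (if q ≤ (k : ℕ) ∧ (j : ℕ) < q ∧ (s : ℕ) < q then
          ((2 * |lam j| * |lam k| /
              ((|lam s| + |lam k|) * (|lam s| + |lam j| + |lam k|)) : ℝ) : ℂ) *
            wd s (wd j (wdb k (cplx φ))) 0 * z s * (starRingEnd ℂ) (w k) * w j
        else 0)

/-- The 4n formal variables, encoded as `Fin 4 × Fin n`: `(0,j) = z_j`, `(1,j) = z̄_j`,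
`(2,j) = w_j`, `(3,j) = w̄_j`. -/
abbrev Var (n : ℕ) := Fin 4 × Fin n

def zV {n : ℕ} (j : Fin n) : Var n := (0, j)
def zbV {n : ℕ} (j : Fin n) : Var n := (1, j)

/-- Evaluation of the formal variables at the point `(z,w)`. -/
def evalVars {n : ℕ} (z w : Cn n) : Var n → ℂ := fun v =>
  if v.1 = 0 then z v.2
  else if v.1 = 1 then (starRingEnd ℂ) (z v.2)
  else if v.1 = 2 then w v.2
  else (starRingEnd ℂ) (w v.2)

/-!
Let `ψ₃`, `φ₃` be the cubic Taylor parts at `0` of `ψ` and `(z, w) ↦ φ z`. Since the quadratic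
parts of `ψ` and `φ` are known, the cubic part at `0` of the eikonal equation (d) is a linear
transport equation
`∑ᵥ |sᵥ| (xᵥ - wᵥ) ∂ψ₃/∂xᵥ = i ∑ᵥ sᵥ (xᵥ - wᵥ) ∂φ₃/∂xᵥ`,
where `xᵥ` runs over the variables `z̄ⱼ`, `zⱼ`, `wᵥ` is the corresponding `w̄ⱼ`, `wⱼ`, and `sᵥ` is
`max(λⱼ, 0)` for `z̄ⱼ` and `min(λⱼ, 0)` for `zⱼ`. The cubic part of `E` is an explicit solution.
The difference `R` of two solutions is annihilated by `∑ᵥ |sᵥ| (xᵥ - wᵥ) ∂/∂xᵥ`. Weigh a monomial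
by its degree in each `xᵥ` times `|sᵥ|`; the terms with `wᵥ` lower the weight, so the coefficient
of a monomial of maximal weight in `R` gets multiplied by that weight, which must therefore be `0`.
-/

section PolynomialFunctions

open Finset MvPolynomial
open scoped ContDiff

variable {V σ : Type*} [NormedAddCommGroup V] [NormedSpace ℝ V] (ℓ : σ → V →L[ℝ] ℂ)

/-- The function on `V` given by a polynomial in the linear coordinates `ℓ`. -/
def polyFun (P : MvPolynomial σ ℂ) (p : V) : ℂ :=
  eval (fun x => ℓ x p) P

theorem polyFun_C (c : ℂ) : polyFun ℓ (C c) = fun _ => c := by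
  ext p
  simp [polyFun]

theorem polyFun_X (x : σ) : polyFun ℓ (X x) = ℓ x := by
  ext p
  simp [polyFun]

theorem polyFun_add (P Q : MvPolynomial σ ℂ) :
    polyFun ℓ (P + Q) = polyFun ℓ P + polyFun ℓ Q := by
  ext p
  simp [polyFun]

theorem polyFun_mul (P Q : MvPolynomial σ ℂ) :
    polyFun ℓ (P * Q) = polyFun ℓ P * polyFun ℓ Q := by
  ext p
  simp [polyFun]

theorem contDiff_polyFun (P : MvPolynomial σ ℂ) : ContDiff ℝ ∞ (polyFun ℓ P) := by
  induction P using MvPolynomial.induction_on with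
  | C c => rw [polyFun_C]; exact contDiff_const
  | add P Q hP hQ => rw [polyFun_add]; exact hP.add hQ
  | mul_X P x hP => rw [polyFun_mul, polyFun_X]; exact hP.mul (ℓ x).contDiff

theorem polyFun_smul_of_isHomogeneous {P : MvPolynomial σ ℂ} {d : ℕ} (hP : P.IsHomogeneous d)
    (t : ℝ) (p : V) : polyFun ℓ P (t • p) = t ^ d * polyFun ℓ P p := by
  simp only [polyFun, eval_eq, mul_sum]
  refine sum_congr rfl fun m hm => ?_
  have hdeg : ∑ i ∈ m.support, m i = d := by
    simpa [Finsupp.weight_apply, Finsupp.sum] using hP (mem_support_iff.1 hm)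
  simp only [map_smul, real_smul, mul_pow, prod_mul_distrib, prod_pow_eq_pow_sum, hdeg]
  ring

end PolynomialFunctions

section Taylor

open Finset MvPolynomial
open scoped ContDiff

variable {V σ : Type*} [NormedAddCommGroup V] [NormedSpace ℝ V] [Fintype σ]
  (b : Module.Basis σ ℂ (V →L[ℝ] ℂ))

/-- The functional taking the `x`-coordinate in the basis `b`. -/
def coordFunctional (x : σ) : (V →L[ℝ] ℂ) →L[ℂ] ℂ :=
  (ContinuousLinearMap.proj x).comp (b.equivFunL : (V →L[ℝ] ℂ) →L[ℂ] σ → ℂ)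

/-- The Wirtinger-type derivative dual to the complex-valued coordinate `b x` of `V`: the
coefficient of `b x` in the expansion of the differential of `f`. For `V = ℂ` and the coordinates
`z`, `z̄` these are `∂/∂z` and `∂/∂z̄`. -/
def coordDeriv (x : σ) (f : V → ℂ) (p : V) : ℂ :=
  coordFunctional b x (fderiv ℝ f p)

/-- The homogeneous part of degree `k` of the Taylor expansion of `f` at `0`, as a polynomial in
the coordinates `b`. The recursion is Euler's identity. -/
def taylorPart : ℕ → (V → ℂ) → MvPolynomial σ ℂ
  | 0, f => C (f 0)
  | k + 1, f => C ((k + 1 : ℂ)⁻¹) * ∑ x, X x * taylorPart k (coordDeriv b x f)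

theorem taylorPart_succ (k : ℕ) (f : V → ℂ) :
    taylorPart b (k + 1) f = C ((k + 1 : ℂ)⁻¹) * ∑ x, X x * taylorPart b k (coordDeriv b x f) :=
  rfl

theorem sum_X_mul_taylorPart_coordDeriv (k : ℕ) (f : V → ℂ) :
    ∑ x, X x * taylorPart b k (coordDeriv b x f) = C (k + 1 : ℂ) * taylorPart b (k + 1) f := by
  rw [taylorPart_succ, ← mul_assoc, ← C_mul, mul_inv_cancel₀ (Nat.cast_add_one_ne_zero k), C_1,
    one_mul]

variable {f g : V → ℂ}

theorem contDiff_coordDeriv (hf : ContDiff ℝ ∞ f) (x : σ) : ContDiff ℝ ∞ (coordDeriv b x f) :=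
  ((coordFunctional b x).restrictScalars ℝ).contDiff.comp (hf.fderiv_right (m := ∞) (by simp))

theorem coordDeriv_const (x : σ) (c : ℂ) : coordDeriv b x (fun _ => c) = 0 := by
  ext p
  simp [coordDeriv]

theorem coordDeriv_add (hf : ContDiff ℝ ∞ f) (hg : ContDiff ℝ ∞ g) (x : σ) :
    coordDeriv b x (f + g) = coordDeriv b x f + coordDeriv b x g := by
  ext p
  simp [coordDeriv, fderiv_add (hf.differentiable (by simp) p) (hg.differentiable (by simp) p)]

theorem coordDeriv_sub (hf : ContDiff ℝ ∞ f) (hg : ContDiff ℝ ∞ g) (x : σ) :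
    coordDeriv b x (f - g) = coordDeriv b x f - coordDeriv b x g := by
  ext p
  simp [coordDeriv, fderiv_sub (hf.differentiable (by simp) p) (hg.differentiable (by simp) p)]

theorem coordDeriv_mul (hf : ContDiff ℝ ∞ f) (hg : ContDiff ℝ ∞ g) (x : σ) :
    coordDeriv b x (f * g) = coordDeriv b x f * g + f * coordDeriv b x g := by
  ext p
  simp only [coordDeriv, fderiv_mul (hf.differentiable (by simp) p)
    (hg.differentiable (by simp) p), map_add, map_smul, Pi.add_apply, Pi.mul_apply,
    smul_eq_mul]
  ring

theorem coordDeriv_const_smul (hf : ContDiff ℝ ∞ f) (x : σ) (c : ℂ) :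
    coordDeriv b x (c • f) = c • coordDeriv b x f := by
  ext p
  simp [coordDeriv, fderiv_const_smul (hf.differentiable (by simp) p)]

theorem coordDeriv_coord (x y : σ) :
    coordDeriv b x (b y) = fun _ => if y = x then 1 else 0 := by
  ext p
  simp [coordDeriv, coordFunctional, ContinuousLinearMap.fderiv, Finsupp.single_apply]

theorem fderiv_apply_eq_sum_coordDeriv (p v : V) :
    fderiv ℝ f p v = ∑ x, coordDeriv b x f p * b x v := by
  conv_lhs => rw [← b.sum_equivFun (fderiv ℝ f p)]
  simp only [_root_.sum_apply, smul_apply, smul_eq_mul]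
  rfl

theorem eq_of_sum_mul_coord_eq {c d : σ → ℂ} (h : ∀ v, ∑ x, c x * b x v = ∑ x, d x * b x v) :
    c = d := by
  refine b.equivFun.symm.injective ?_
  ext v
  simpa [Module.Basis.equivFun_symm_apply] using h v

theorem fderiv_fderiv_apply_eq_sum_coordDeriv (hf : ContDiff ℝ ∞ f) (p u v : V) :
    fderiv ℝ (fderiv ℝ f) p u v =
      ∑ y, (∑ x, coordDeriv b x (coordDeriv b y f) p * b x u) * b y v := by
  have hdiff : Differentiable ℝ (fderiv ℝ f) :=
    (hf.fderiv_right (m := ∞) (by simp)).differentiable (by simp)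
  have hexp : (fun q => fderiv ℝ f q v) = fun q => ∑ y, coordDeriv b y f q * b y v :=
    funext fun q => fderiv_apply_eq_sum_coordDeriv b q v
  have hd : ∀ y, DifferentiableAt ℝ (coordDeriv b y f) p := fun y =>
    (contDiff_coordDeriv b hf y).differentiable (by simp) p
  calc fderiv ℝ (fderiv ℝ f) p u v = fderiv ℝ (fun q => fderiv ℝ f q v) p u := by
        rw [fderiv_clm_apply (hdiff p) (differentiableAt_const v)]
        simp
    _ = ∑ y, fderiv ℝ (coordDeriv b y f) p u * b y v := by
        rw [hexp, fderiv_fun_sum fun y _ => (hd y).mul_const (b y v)]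
        simp [fderiv_mul_const (hd _), mul_comm]
    _ = _ := by simp only [fderiv_apply_eq_sum_coordDeriv b]

theorem coordDeriv_comm (hf : ContDiff ℝ ∞ f) (x y : σ) :
    coordDeriv b x (coordDeriv b y f) = coordDeriv b y (coordDeriv b x f) := by
  ext p
  have hsymm : IsSymmSndFDerivAt ℝ f p := hf.contDiffAt.isSymmSndFDerivAt
    (by rw [minSmoothness_of_isRCLikeNormedField]; exact WithTop.coe_le_coe.2 le_top)
  have hcoeff : ∀ u, (fun y => ∑ x, coordDeriv b x (coordDeriv b y f) p * b x u) =
      fun y => ∑ x, coordDeriv b y (coordDeriv b x f) p * b x u := fun u =>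
    eq_of_sum_mul_coord_eq b fun v => by
      rw [← fderiv_fderiv_apply_eq_sum_coordDeriv b hf, hsymm u v,
        fderiv_fderiv_apply_eq_sum_coordDeriv b hf]
      simp only [sum_mul]
      rw [sum_comm]
      simp only [mul_right_comm]
  exact congrFun (eq_of_sum_mul_coord_eq b fun u => congrFun (hcoeff u) y) x

theorem iteratedFDeriv_coordDeriv_eq_zero (hf : ContDiff ℝ ∞ f) {p : V}
    (h : ∀ m, iteratedFDeriv ℝ m f p = 0) (x : σ) (m : ℕ) :
    iteratedFDeriv ℝ m (coordDeriv b x f) p = 0 := by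
  have hfderiv : iteratedFDeriv ℝ m (fderiv ℝ f) p = 0 := by
    rw [← norm_eq_zero, norm_iteratedFDeriv_fderiv, h, norm_zero]
  have hsmooth : ContDiff ℝ ∞ (fderiv ℝ f) := hf.fderiv_right (by simp)
  have hcomp := ((coordFunctional b x).restrictScalars ℝ).iteratedFDeriv_comp_left
    (hsmooth.contDiffAt (x := p)) (i := m) (by exact_mod_cast le_top)
  rw [hfderiv] at hcomp
  refine hcomp.trans ?_
  ext
  simp

theorem coordDeriv_polyFun (x : σ) (P : MvPolynomial σ ℂ) :
    coordDeriv b x (polyFun b P) = polyFun b (pderiv x P) := by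
  induction P using MvPolynomial.induction_on with
  | C c => rw [polyFun_C, coordDeriv_const, pderiv_C]; ext p; simp [polyFun]
  | add P Q hP hQ =>
    rw [polyFun_add, coordDeriv_add b (contDiff_polyFun b P) (contDiff_polyFun b Q), hP, hQ,
      map_add, polyFun_add]
  | mul_X P y hP =>
    rw [polyFun_mul, polyFun_X, coordDeriv_mul b (contDiff_polyFun b P) (b y).contDiff, hP,
      coordDeriv_coord, pderiv_mul]
    ext p
    by_cases h : y = x <;> simp [polyFun, pderiv_X, h]

theorem taylorPart_isHomogeneous (k : ℕ) (f : V → ℂ) : (taylorPart b k f).IsHomogeneous k := by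
  induction k generalizing f with
  | zero => exact isHomogeneous_C σ (f 0)
  | succ k ih =>
    have hterm : ∀ x, (X x * taylorPart b k (coordDeriv b x f)).IsHomogeneous (k + 1) := fun x => by
      rw [add_comm]
      exact (isHomogeneous_X ℂ x).mul (ih _)
    simpa [taylorPart_succ] using
      (isHomogeneous_C σ ((k + 1 : ℂ)⁻¹)).mul (IsHomogeneous.sum univ _ _ fun x _ => hterm x)

theorem taylorPart_add (hf : ContDiff ℝ ∞ f) (hg : ContDiff ℝ ∞ g) (k : ℕ) :
    taylorPart b k (f + g) = taylorPart b k f + taylorPart b k g := by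
  induction k generalizing f g with
  | zero => simp [taylorPart]
  | succ k ih =>
    simp only [taylorPart_succ, coordDeriv_add b hf hg,
      ih (contDiff_coordDeriv b hf _) (contDiff_coordDeriv b hg _), mul_add, sum_add_distrib]

theorem taylorPart_const_smul (hf : ContDiff ℝ ∞ f) (c : ℂ) (k : ℕ) :
    taylorPart b k (c • f) = C c * taylorPart b k f := by
  induction k generalizing f with
  | zero => simp [taylorPart]
  | succ k ih =>
    simp only [taylorPart_succ, coordDeriv_const_smul b hf, ih (contDiff_coordDeriv b hf _),
      mul_sum]
    exact sum_congr rfl fun x _ => by ring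

theorem taylorPart_fun_zero (k : ℕ) : taylorPart b k 0 = 0 := by
  simpa using taylorPart_const_smul b (contDiff_const (c := (0 : ℂ))) 0 k

theorem taylorPart_sum {ι : Type*} (s : Finset ι) {f : ι → V → ℂ} (hf : ∀ i, ContDiff ℝ ∞ (f i))
    (k : ℕ) : taylorPart b k (∑ i ∈ s, f i) = ∑ i ∈ s, taylorPart b k (f i) := by
  induction s using Finset.cons_induction with
  | empty => simpa using taylorPart_fun_zero b k
  | cons i s hi ih =>
    have hs : ContDiff ℝ ∞ (∑ i ∈ s, f i) := by
      simpa [Finset.sum_fn] using ContDiff.sum fun i (_ : i ∈ s) => hf i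
    rw [sum_cons, sum_cons, taylorPart_add b (hf i) hs, ih]

theorem pderiv_taylorPart_succ (hf : ContDiff ℝ ∞ f) (y : σ) (k : ℕ) :
    pderiv y (taylorPart b (k + 1) f) = taylorPart b k (coordDeriv b y f) := by
  induction k generalizing f with
  | zero => simp [taylorPart, pderiv_X, Pi.single_apply]
  | succ k ih =>
    have hswap : ∑ x, X x * pderiv y (taylorPart b (k + 1) (coordDeriv b x f)) =
        C (k + 1 : ℂ) * taylorPart b (k + 1) (coordDeriv b y f) := by
      rw [← sum_X_mul_taylorPart_coordDeriv]
      exact sum_congr rfl fun x _ => by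
        rw [ih (contDiff_coordDeriv b hf x), coordDeriv_comm b hf]
    have hsingle : ∑ x, pderiv y (X x) * taylorPart b (k + 1) (coordDeriv b x f) =
        taylorPart b (k + 1) (coordDeriv b y f) := by
      simp [pderiv_X, Pi.single_apply]
    have hne : ((k + 1 : ℕ) + 1 : ℂ) ≠ 0 := Nat.cast_add_one_ne_zero (k + 1)
    rw [taylorPart_succ, pderiv_C_mul, map_sum]
    simp only [pderiv_mul, sum_add_distrib]
    rw [hsingle, hswap, ← one_add_mul, ← C_1, ← C_add, ← mul_assoc, ← C_mul]
    convert one_mul _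
    rw [← C_1]
    congr 1
    push_cast at hne ⊢
    field_simp
    ring

theorem sum_X_mul_sum_taylorPart_coordDeriv_mul (f : V → ℂ) (v : ℕ → MvPolynomial σ ℂ) (k : ℕ) :
    ∑ x, X x * ∑ ij ∈ antidiagonal k, taylorPart b ij.1 (coordDeriv b x f) * v ij.2 =
      ∑ ij ∈ antidiagonal (k + 1), C (ij.1 : ℂ) * (taylorPart b ij.1 f * v ij.2) := by
  rw [Nat.sum_antidiagonal_succ]
  simp only [mul_sum, Nat.cast_zero, C_0, zero_mul, zero_add]
  rw [sum_comm]
  refine sum_congr rfl fun ij _ => ?_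
  simp only [← mul_assoc, ← sum_mul, sum_X_mul_taylorPart_coordDeriv, Nat.cast_add_one]

theorem taylorPart_mul (hf : ContDiff ℝ ∞ f) (hg : ContDiff ℝ ∞ g) (k : ℕ) :
    taylorPart b k (f * g) = ∑ ij ∈ antidiagonal k, taylorPart b ij.1 f * taylorPart b ij.2 g := by
  induction k generalizing f g with
  | zero => simp [taylorPart]
  | succ k ih =>
    have hrec : ∀ x, taylorPart b k (coordDeriv b x (f * g)) =
        ∑ ij ∈ antidiagonal k, taylorPart b ij.1 (coordDeriv b x f) * taylorPart b ij.2 g +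
        ∑ ij ∈ antidiagonal k, taylorPart b ij.1 (coordDeriv b x g) * taylorPart b ij.2 f := by
      intro x
      have hf' := contDiff_coordDeriv b hf x
      have hg' := contDiff_coordDeriv b hg x
      have hf'g : ContDiff ℝ ∞ (coordDeriv b x f * g) := hf'.mul hg
      have hg'f : ContDiff ℝ ∞ (coordDeriv b x g * f) := hg'.mul hf
      rw [coordDeriv_mul b hf hg, mul_comm f, taylorPart_add b hf'g hg'f, ih hf' hg, ih hg' hf]
    have hne : C (k + 1 : ℂ) ≠ (0 : MvPolynomial σ ℂ) := by
      rw [Ne, C_eq_zero]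
      exact Nat.cast_add_one_ne_zero k
    refine mul_left_cancel₀ hne ?_
    simp only [← sum_X_mul_taylorPart_coordDeriv, hrec, mul_add, sum_add_distrib]
    rw [sum_X_mul_sum_taylorPart_coordDeriv_mul b f fun j => taylorPart b j g,
      sum_X_mul_sum_taylorPart_coordDeriv_mul b g fun j => taylorPart b j f,
      ← Nat.sum_antidiagonal_swap (n := k + 1)
        (f := fun ij => C (ij.1 : ℂ) * (taylorPart b ij.1 g * taylorPart b ij.2 f)),
      ← sum_add_distrib, mul_sum]
    refine sum_congr rfl fun ij hij => ?_
    have hij' : (k + 1 : ℂ) = ij.1 + ij.2 := by exact_mod_cast (mem_antidiagonal.1 hij).symm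
    rw [hij', C_add, Prod.fst_swap, Prod.snd_swap]
    ring

theorem taylorPart_polyFun {P : MvPolynomial σ ℂ} {d : ℕ} (hP : P.IsHomogeneous d) (k : ℕ) :
    taylorPart b k (polyFun b P) = if k = d then P else 0 := by
  induction k generalizing P d with
  | zero =>
    split_ifs with hd
    · obtain rfl := hd
      rw [totalDegree_eq_zero_iff_eq_C.1 ((totalDegree_zero_iff_isHomogeneous σ).2 hP), polyFun_C]
      rfl
    · simpa [taylorPart, Ne.symm hd] using polyFun_smul_of_isHomogeneous b hP 0 0
  | succ k ih =>
    have hterm : ∀ x, taylorPart b k (coordDeriv b x (polyFun b P)) =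
        if k + 1 = d then pderiv x P else 0 := fun x => by
      rw [coordDeriv_polyFun, ih hP.pderiv]
      rcases d with _ | d
      · have hC := totalDegree_eq_zero_iff_eq_C.1 ((totalDegree_zero_iff_isHomogeneous σ).2 hP)
        rw [hC, pderiv_C]
        simp
      · simp
    simp only [taylorPart_succ, hterm]
    split_ifs with hd
    · rw [hP.sum_X_mul_pderiv, ← hd, nsmul_eq_mul, ← map_natCast C, ← mul_assoc, ← C_mul,
        Nat.cast_add_one, inv_mul_cancel₀ (Nat.cast_add_one_ne_zero k), C_1, one_mul]
    · simp

omit [Fintype σ] in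
theorem eq_zero_of_polyFun_isBigO [Finite σ] {P : MvPolynomial σ ℂ} {d : ℕ} (hP : P.IsHomogeneous d)
    (h : polyFun b P =O[nhds 0] fun p => ‖p‖ ^ (d + 1)) : P = 0 := by
  cases nonempty_fintype σ
  obtain ⟨K, hK⟩ := h.bound
  have hzero : polyFun b P = 0 := by
    ext p
    have hray : Filter.Tendsto (fun t : ℝ => t • p) (nhdsWithin 0 (Set.Ioi 0)) (nhds 0) := by
      have : ContinuousAt (fun t : ℝ => t • p) 0 := by fun_prop
      simpa using this.tendsto.mono_left nhdsWithin_le_nhds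
    have hlim : Filter.Tendsto (fun t : ℝ => t * (K * ‖p‖ ^ (d + 1)))
        (nhdsWithin 0 (Set.Ioi 0)) (nhds 0) := by
      have : ContinuousAt (fun t : ℝ => t * (K * ‖p‖ ^ (d + 1))) 0 := by fun_prop
      simpa using this.tendsto.mono_left nhdsWithin_le_nhds
    refine norm_le_zero_iff.1 (ge_of_tendsto hlim ?_)
    filter_upwards [hray.eventually hK, self_mem_nhdsWithin] with t ht htpos
    have htpos : 0 < t := htpos
    rw [polyFun_smul_of_isHomogeneous b hP] at ht
    refine le_of_mul_le_mul_left ?_ (pow_pos htpos d)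
    calc t ^ d * ‖polyFun b P p‖ = ‖(t : ℂ) ^ d * polyFun b P p‖ := by
          simp [abs_of_pos htpos]
      _ ≤ K * ‖‖t • p‖ ^ (d + 1)‖ := ht
      _ = t ^ d * (t * (K * ‖p‖ ^ (d + 1))) := by
          rw [norm_pow, norm_norm, norm_smul, Real.norm_of_nonneg htpos.le]
          ring
  have hpart := taylorPart_polyFun b hP d
  rwa [hzero, taylorPart_fun_zero, if_pos rfl, eq_comm] at hpart

theorem fderiv_isBigO_of_coordDeriv {l : Filter V} {u : V → ℝ}
    (h : ∀ x, coordDeriv b x f =O[l] u) : fderiv ℝ f =O[l] u := by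
  have hsum : (fun p => ∑ x, coordDeriv b x f p • b x) =O[l] u :=
    IsBigO.fun_sum fun x _ => by
      simpa using (h x).smul (isBigO_const_const (b x) (one_ne_zero (α := ℝ)) l)
  refine hsum.congr_left fun p => ?_
  ext v
  simp [fderiv_apply_eq_sum_coordDeriv b]

theorem isBigO_norm_pow_succ_of_coordDeriv (hf : ContDiff ℝ ∞ f) (h0 : f 0 = 0) (k : ℕ)
    (h : ∀ x, coordDeriv b x f =O[nhds 0] fun p => ‖p‖ ^ k) :
    f =O[nhds 0] fun p => ‖p‖ ^ (k + 1) := by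
  obtain ⟨K, hK, hbound⟩ := (fderiv_isBigO_of_coordDeriv b h).exists_nonneg
  obtain ⟨r, hr, hball⟩ := Metric.eventually_nhds_iff_ball.1 hbound.bound
  refine IsBigO.of_bound K (Metric.eventually_nhds_iff_ball.2 ⟨r, hr, fun p hp => ?_⟩)
  have hfderiv : ∀ x ∈ Metric.closedBall (0 : V) ‖p‖, ‖fderiv ℝ f x‖ ≤ K * ‖p‖ ^ k := by
    intro x hx
    have hxp : ‖x‖ ≤ ‖p‖ := by simpa using hx
    have hpr : ‖p‖ < r := by simpa using hp
    refine (hball x (by simpa using hxp.trans_lt hpr)).trans ?_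
    rw [Real.norm_of_nonneg (by positivity)]
    gcongr
  have hmvt := (convex_closedBall (0 : V) ‖p‖).norm_image_sub_le_of_norm_fderiv_le (𝕜 := ℝ)
    (fun x _ => hf.differentiable (by simp) x) hfderiv (x := 0) (y := p) (by simp) (by simp)
  rwa [h0, sub_zero, sub_zero, mul_assoc, ← pow_succ,
    ← Real.norm_of_nonneg (by positivity : 0 ≤ ‖p‖ ^ (k + 1))] at hmvt

theorem isBigO_sub_polyFun_sum_taylorPart (hf : ContDiff ℝ ∞ f) (k : ℕ) :
    (f - polyFun b (∑ j ∈ range k, taylorPart b j f)) =O[nhds 0] fun p => ‖p‖ ^ k := by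
  induction k generalizing f with
  | zero =>
    have hcont : Continuous (f - polyFun b (∑ j ∈ range 0, taylorPart b j f)) :=
      hf.continuous.sub (contDiff_polyFun b _).continuous
    simpa using (hcont.tendsto 0).isBigO_one ℝ
  | succ k ih =>
    set P := ∑ j ∈ range (k + 1), taylorPart b j f with hP
    have hvalue : polyFun b P 0 = f 0 := by
      have hpos : ∀ j, eval (fun x => b x 0) (taylorPart b (j + 1) f) = 0 := fun j => by
        simpa [polyFun] using
          polyFun_smul_of_isHomogeneous b (taylorPart_isHomogeneous b (j + 1) f) 0 0
      rw [hP, sum_range_succ', polyFun, map_add, map_sum, sum_eq_zero fun j _ => hpos j]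
      simp [taylorPart]
    have hderiv : ∀ x, pderiv x P = ∑ j ∈ range k, taylorPart b j (coordDeriv b x f) := fun x => by
      rw [hP, sum_range_succ', map_add, map_sum, taylorPart, pderiv_C, add_zero]
      simp only [pderiv_taylorPart_succ b hf]
    have hsmooth : ContDiff ℝ ∞ (f - polyFun b P) := hf.sub (contDiff_polyFun b P)
    refine isBigO_norm_pow_succ_of_coordDeriv b hsmooth (sub_eq_zero.2 hvalue.symm) k
      fun x => ?_
    rw [coordDeriv_sub b hf (contDiff_polyFun b P), coordDeriv_polyFun, hderiv]
    exact ih (contDiff_coordDeriv b hf x)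

theorem taylorPart_eq_zero_of_isBigO (hf : ContDiff ℝ ∞ f) {k : ℕ}
    (h : f =O[nhds 0] fun p => ‖p‖ ^ k) {j : ℕ} (hj : j < k) : taylorPart b j f = 0 := by
  induction j using Nat.strong_induction_on with
  | _ j ih =>
    have hle : (fun p : V => ‖p‖ ^ k) =O[nhds 0] fun p => ‖p‖ ^ (j + 1) := by
      refine IsBigO.of_norm_eventuallyLE ?_
      filter_upwards [Metric.closedBall_mem_nhds (0 : V) one_pos] with p hp
      rw [norm_pow, norm_norm]
      exact pow_le_pow_of_le_one (norm_nonneg p) (by simpa using hp) hj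
    have hsum : ∑ i ∈ range (j + 1), taylorPart b i f = taylorPart b j f := by
      rw [sum_range_succ, sum_eq_zero fun i hi => ih i (mem_range.1 hi) ((mem_range.1 hi).trans hj),
        zero_add]
    refine eq_zero_of_polyFun_isBigO b (taylorPart_isHomogeneous b j f) ?_
    rw [← hsum]
    simpa using (h.trans hle).sub (isBigO_sub_polyFun_sum_taylorPart b hf (j + 1))

theorem taylorPart_eq_of_isBigO_sub_polyFun (hf : ContDiff ℝ ∞ f) {P : MvPolynomial σ ℂ} {d k : ℕ}
    (hP : P.IsHomogeneous d) (h : (f - polyFun b P) =O[nhds 0] fun p => ‖p‖ ^ k) {j : ℕ}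
    (hj : j < k) : taylorPart b j f = if j = d then P else 0 := by
  have hsub : ContDiff ℝ ∞ (f - polyFun b P) := hf.sub (contDiff_polyFun b P)
  rw [← sub_add_cancel f (polyFun b P), taylorPart_add b hsub (contDiff_polyFun b P),
    taylorPart_eq_zero_of_isBigO b hsub h hj, taylorPart_polyFun b hP, zero_add]

theorem taylorPart_eq_zero_of_iteratedFDeriv_eq_zero (hf : ContDiff ℝ ∞ f)
    (h : ∀ m, iteratedFDeriv ℝ m f 0 = 0) (k : ℕ) : taylorPart b k f = 0 := by
  induction k generalizing f with
  | zero =>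
    have h0 : f 0 = 0 := by simpa using congrArg (fun T => T (fun _ => 0)) (h 0)
    simp [taylorPart, h0]
  | succ k ih =>
    simp [taylorPart_succ, ih (contDiff_coordDeriv b hf _)
      (iteratedFDeriv_coordDeriv_eq_zero b hf h _)]

end Taylor

section TransportSolution

open Finset

theorem transport_identity {R : Type*} [CommRing R]
    {α β₁ β₂ β₃ γ₁ γ₂ γ₃ a₁ a₂ a₃ s₁ s₂ s₃ : R}
    (hα : α * (a₁ + a₂ + a₃) = s₁ + s₂ + s₃) (hβ₁ : β₁ * (a₂ + a₃) = α * a₁ - s₁)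
    (hβ₂ : β₂ * (a₁ + a₃) = α * a₂ - s₂) (hβ₃ : β₃ * (a₁ + a₂) = α * a₃ - s₃)
    (hγ₁ : γ₁ * a₁ = a₂ * β₃ + a₃ * β₂) (hγ₂ : γ₂ * a₂ = a₁ * β₃ + a₃ * β₁)
    (hγ₃ : γ₃ * a₃ = a₁ * β₂ + a₂ * β₁) (x₁ x₂ x₃ w₁ w₂ w₃ : R) :
    (α * a₁ - s₁) * (x₁ - w₁) * x₂ * x₃ + (α * a₂ - s₂) * (x₂ - w₂) * x₁ * x₃ +
      (α * a₃ - s₃) * (x₃ - w₃) * x₁ * x₂ +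
      (β₁ * (a₂ * (x₂ - w₂) * x₃ + a₃ * (x₃ - w₃) * x₂) * w₁ +
        β₂ * (a₁ * (x₁ - w₁) * x₃ + a₃ * (x₃ - w₃) * x₁) * w₂ +
        β₃ * (a₁ * (x₁ - w₁) * x₂ + a₂ * (x₂ - w₂) * x₁) * w₃) +
      (γ₁ * a₁ * (x₁ - w₁) * w₂ * w₃ + γ₂ * a₂ * (x₂ - w₂) * w₁ * w₃ +
        γ₃ * a₃ * (x₃ - w₃) * w₁ * w₂) = 0 := by
  linear_combination (x₁ * x₂ * x₃ - w₁ * w₂ * w₃) * hα +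
    (w₁ * x₂ * x₃ - w₁ * w₂ * w₃) * hβ₁ + (x₁ * w₂ * x₃ - w₁ * w₂ * w₃) * hβ₂ +
    (x₁ * x₂ * w₃ - w₁ * w₂ * w₃) * hβ₃ + (x₁ - w₁) * w₂ * w₃ * hγ₁ +
    (x₂ - w₂) * w₁ * w₃ * hγ₂ + (x₃ - w₃) * w₁ * w₂ * hγ₃

variable {R S ι : Type*} [CommRing R] [Algebra ℂ R] [CommRing S] [Algebra ℂ S] [Fintype ι]

/-- The coefficient of the cubic monomial `x₁x₂x₃` in `transportSolution`. -/
def coeffXXX (s₁ s₂ s₃ : ℝ) : ℝ := (s₁ + s₂ + s₃) / (|s₁| + |s₂| + |s₃|)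

/-- The coefficient of the cubic monomial `x₁x₂w₃` in `transportSolution`. -/
def coeffXXW (s₁ s₂ s₃ : ℝ) : ℝ := (coeffXXX s₁ s₂ s₃ * |s₃| - s₃) / (|s₁| + |s₂|)

/-- The coefficient of the cubic monomial `x₁w₂w₃` in `transportSolution`. -/
def coeffXWW (s₁ s₂ s₃ : ℝ) : ℝ :=
  (|s₂| * coeffXXW s₁ s₂ s₃ + |s₃| * coeffXXW s₁ s₃ s₂) / |s₁|

theorem coeffXXX_swap₁₂ (s₁ s₂ s₃ : ℝ) : coeffXXX s₂ s₁ s₃ = coeffXXX s₁ s₂ s₃ := by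
  simp only [coeffXXX, add_comm]

theorem coeffXXX_swap₂₃ (s₁ s₂ s₃ : ℝ) : coeffXXX s₁ s₃ s₂ = coeffXXX s₁ s₂ s₃ := by
  simp only [coeffXXX, add_right_comm]

theorem coeffXXW_swap₁₂ (s₁ s₂ s₃ : ℝ) : coeffXXW s₂ s₁ s₃ = coeffXXW s₁ s₂ s₃ := by
  rw [coeffXXW, coeffXXX_swap₁₂, add_comm |s₂|, coeffXXW]

theorem coeffXWW_swap₂₃ (s₁ s₂ s₃ : ℝ) : coeffXWW s₁ s₃ s₂ = coeffXWW s₁ s₂ s₃ := by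
  rw [coeffXWW, add_comm, coeffXWW]

theorem coeffXXX_mul (s₁ s₂ s₃ : ℝ) :
    coeffXXX s₁ s₂ s₃ * (|s₁| + |s₂| + |s₃|) = s₁ + s₂ + s₃ := by
  refine div_mul_cancel_of_imp fun h => ?_
  have h₁ : s₁ = 0 := abs_eq_zero.1 (by linarith [abs_nonneg s₁, abs_nonneg s₂, abs_nonneg s₃])
  have h₂ : s₂ = 0 := abs_eq_zero.1 (by linarith [abs_nonneg s₁, abs_nonneg s₂, abs_nonneg s₃])
  have h₃ : s₃ = 0 := abs_eq_zero.1 (by linarith [abs_nonneg s₁, abs_nonneg s₂, abs_nonneg s₃])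
  simp [h₁, h₂, h₃]

theorem coeffXXW_mul (s₁ s₂ s₃ : ℝ) :
    coeffXXW s₁ s₂ s₃ * (|s₁| + |s₂|) = coeffXXX s₁ s₂ s₃ * |s₃| - s₃ := by
  refine div_mul_cancel_of_imp fun h => ?_
  have h₁ : s₁ = 0 := abs_eq_zero.1 (by linarith [abs_nonneg s₁, abs_nonneg s₂])
  have h₂ : s₂ = 0 := abs_eq_zero.1 (by linarith [abs_nonneg s₁, abs_nonneg s₂])
  have hmul := coeffXXX_mul 0 0 s₃
  simp only [abs_zero, zero_add] at hmul
  rw [h₁, h₂, hmul, sub_self]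

theorem coeffXWW_mul (s₁ s₂ s₃ : ℝ) :
    coeffXWW s₁ s₂ s₃ * |s₁| = |s₂| * coeffXXW s₁ s₂ s₃ + |s₃| * coeffXXW s₁ s₃ s₂ := by
  refine div_mul_cancel_of_imp fun h => ?_
  have hXXX := coeffXXX_mul s₁ s₂ s₃
  have hXXW₂ := coeffXXW_mul s₁ s₂ s₃
  have hXXW₃ := coeffXXW_mul s₁ s₃ s₂
  rw [coeffXXX_swap₂₃] at hXXW₃
  rw [abs_eq_zero.1 h] at *
  simp only [abs_zero, zero_add] at *
  linear_combination hXXW₂ + hXXW₃ + hXXX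

/-- The explicit cubic solution of the transport equation `D u = D' (cubicForm T x)`, where
`D x = |s| (x - w)`, `D w = 0` and `D' x = s (x - w)`. -/
def transportSolution (s : ι → ℝ) (T : ι → ι → ι → ℂ) (x w : ι → R) : R :=
  ∑ a, ∑ b, ∑ c, T a b c •
    ((↑(coeffXXX (s a) (s b) (s c) / 6) : ℂ) • (x a * x b * x c) +
      (↑(coeffXXW (s a) (s b) (s c) / 2) : ℂ) • (x a * x b * w c) +
      (↑(coeffXWW (s a) (s b) (s c) / 2) : ℂ) • (x a * w b * w c))

/-- The cubic form `(1/6) ∑ T x x x`. -/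
def cubicForm (T : ι → ι → ι → ℂ) (x : ι → R) : R :=
  ∑ a, ∑ b, ∑ c, T a b c • (1 / 6 : ℂ) • (x a * x b * x c)

theorem map_transportSolution (f : R →ₐ[ℂ] S) (s : ι → ℝ) (T : ι → ι → ι → ℂ) (x w : ι → R) :
    f (transportSolution s T x w) = transportSolution s T (f ∘ x) (f ∘ w) := by
  simp [transportSolution]

open MvPolynomial in
theorem transportSolution_isHomogeneous {σ : Type*} (s : ι → ℝ) (T : ι → ι → ι → ℂ)
    (i o : ι → σ) : (transportSolution s T (fun v => X (i v)) fun v => X (o v) :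
      MvPolynomial σ ℂ).IsHomogeneous 3 := by
  have hmul : ∀ (c : ℂ) (x y z : σ), (c • (X x * X y * X z) : MvPolynomial σ ℂ).IsHomogeneous 3 :=
    fun c x y z => by
      rw [smul_eq_C_mul]
      exact .C_mul (((isHomogeneous_X ℂ x).mul (isHomogeneous_X ℂ y)).mul (isHomogeneous_X ℂ z)) c
  refine IsHomogeneous.sum _ _ _ fun a _ => IsHomogeneous.sum _ _ _ fun b _ =>
    IsHomogeneous.sum _ _ _ fun c _ => ?_
  rw [smul_eq_C_mul]
  exact .C_mul (((hmul _ _ _ _).add (hmul _ _ _ _)).add (hmul _ _ _ _)) _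

theorem sum_symmetric_smul_eq_zero {M : Type*} [AddCommGroup M] [Module ℂ M]
    {T : ι → ι → ι → ℂ} (h₁₂ : ∀ a b c, T b a c = T a b c)
    (h₂₃ : ∀ a b c, T a c b = T a b c) {H : ι → ι → ι → M}
    (hH : ∀ a b c, H a b c + H a c b + H b a c + H b c a + H c a b + H c b a = 0) :
    ∑ a, ∑ b, ∑ c, T a b c • H a b c = 0 := by
  have swap₁₂ (F : ι → ι → ι → M) : ∑ a, ∑ b, ∑ c, F b a c = ∑ a, ∑ b, ∑ c, F a b c := sum_comm
  have swap₂₃ (F : ι → ι → ι → M) : ∑ a, ∑ b, ∑ c, F a c b = ∑ a, ∑ b, ∑ c, F a b c :=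
    sum_congr rfl fun a _ => sum_comm
  set F : ι → ι → ι → M := fun a b c => T a b c • H a b c with hF
  have hperm : ∑ a, ∑ b, ∑ c, (F a b c + F a c b + F b a c + F b c a + F c a b + F c b a) = 0 := by
    refine sum_eq_zero fun a _ => sum_eq_zero fun b _ => sum_eq_zero fun c _ => ?_
    simp only [hF, h₂₃ a b c, h₁₂ a b c, h₂₃ b a c, h₁₂ a c b, h₂₃ c a b, ← smul_add, hH,
      smul_zero]
  simp only [sum_add_distrib, swap₂₃ F, swap₁₂ F, swap₁₂ fun a b c => F a c b,
    swap₂₃ fun a b c => F b a c, swap₁₂ fun a b c => F c a b] at hperm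
  have hsix : (6 : ℂ) • ∑ a, ∑ b, ∑ c, F a b c = 0 := by
    rw [← hperm]
    module
  exact (smul_eq_zero_iff_right (by norm_num : (6 : ℂ) ≠ 0)).1 hsix

theorem derivation_transportSolution {s : ι → ℝ} {T : ι → ι → ι → ℂ}
    (h₁₂ : ∀ a b c, T b a c = T a b c) (h₂₃ : ∀ a b c, T a c b = T a b c) {x w : ι → R}
    {D D' : Derivation ℂ R R} (hDx : ∀ v, D (x v) = (↑|s v| : ℂ) • (x v - w v))
    (hDw : ∀ v, D (w v) = 0) (hD'x : ∀ v, D' (x v) = (s v : ℂ) • (x v - w v)) :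
    D (transportSolution s T x w) = D' (cubicForm T x) := by
  rw [← sub_eq_zero]
  simp only [transportSolution, cubicForm, map_sum, map_add, Derivation.map_smul,
    ← sum_sub_distrib, ← smul_sub]
  refine sum_symmetric_smul_eq_zero h₁₂ h₂₃ fun a b c => ?_
  -- Summed over the permutations of `(a, b, c)`, this is `transport_identity`.
  set κ : ℝ →+* R := (algebraMap ℂ R).comp Complex.ofRealHom
  have hκ_apply : ∀ r : ℝ, algebraMap ℂ R r = κ r := fun _ => rfl
  have hκ₂ : 2 * κ 2⁻¹ = 1 := by rw [← map_ofNat κ 2, ← map_mul]; norm_num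
  have hκ₆ : 6 * κ 6⁻¹ = 1 := by rw [← map_ofNat κ 6, ← map_mul]; norm_num
  have hsixth : (1 / 6 : ℂ) = ((6⁻¹ : ℝ) : ℂ) := by norm_num
  have hXXX := congrArg κ (coeffXXX_mul (s a) (s b) (s c))
  have hXXW₁ := congrArg κ (coeffXXW_mul (s b) (s c) (s a))
  have hXXW₂ := congrArg κ (coeffXXW_mul (s a) (s c) (s b))
  have hXXW₃ := congrArg κ (coeffXXW_mul (s a) (s b) (s c))
  have hXWW₁ := congrArg κ (coeffXWW_mul (s a) (s b) (s c))
  have hXWW₂ := congrArg κ (coeffXWW_mul (s b) (s a) (s c))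
  have hXWW₃ := congrArg κ (coeffXWW_mul (s c) (s a) (s b))
  simp only [Derivation.leibniz, hDx, hDw, hD'x, smul_eq_mul]
  simp only [hsixth, Algebra.smul_def, hκ_apply, div_eq_mul_inv, map_mul, map_add, map_sub,
    coeffXXX_swap₂₃ (s a) (s b) (s c), coeffXXX_swap₁₂ (s a) (s b) (s c),
    coeffXXX_swap₂₃ (s b) (s a) (s c), coeffXXX_swap₁₂ (s a) (s c) (s b),
    coeffXXX_swap₁₂ (s b) (s c) (s a), coeffXXW_swap₁₂ (s b) (s c) (s a),
    coeffXXW_swap₁₂ (s a) (s c) (s b), coeffXXW_swap₁₂ (s a) (s b) (s c),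
    coeffXWW_swap₂₃ (s a) (s b) (s c), coeffXWW_swap₂₃ (s b) (s a) (s c),
    coeffXWW_swap₂₃ (s c) (s a) (s b)] at hXXX hXXW₁ hXXW₂ hXXW₃ hXWW₁ hXWW₂ hXWW₃ ⊢
  have hid := transport_identity hXXX hXXW₁ hXXW₂ hXXW₃ hXWW₁ hXWW₂ hXWW₃ (x a) (x b) (x c)
    (w a) (w b) (w c)
  set α := κ (coeffXXX (s a) (s b) (s c))
  linear_combination 2 * κ 2⁻¹ * hid + (hκ₆ - hκ₂) *
    ((α * κ |s a| - κ (s a)) * (x a - w a) * x b * x c +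
      (α * κ |s b| - κ (s b)) * (x b - w b) * x a * x c +
      (α * κ |s c| - κ (s c)) * (x c - w c) * x a * x b)

end TransportSolution

section TransportKernel

open Finset MvPolynomial

variable {σ ι : Type*} [Fintype ι]

theorem coeff_X_mul_pderiv_self {R : Type*} [CommSemiring R] (P : MvPolynomial σ R) (x : σ)
    (m : σ →₀ ℕ) : coeff m (X x * pderiv x P) = m x * coeff m P := by
  rw [coeff_X_mul']
  split_ifs with hx
  · have hpos : m x ≠ 0 := by simpa using hx
    have hcast : (((m - Finsupp.single x 1 : σ →₀ ℕ) x : ℕ) : R) + 1 = m x := by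
      rw [Finsupp.tsub_apply, Finsupp.single_eq_same, ← Nat.cast_add_one,
        Nat.sub_add_cancel (Nat.pos_of_ne_zero hpos)]
    rw [coeff_pderiv, Finsupp.sub_add_single_one_cancel hpos, hcast, mul_comm]
  · have hzero : m x = 0 := by simpa using hx
    simp [hzero]

theorem coeff_X_mul_pderiv_eq_zero {R : Type*} [CommSemiring R] {P : MvPolynomial σ R} {x y : σ}
    {m : σ →₀ ℕ} (h : coeff (m - Finsupp.single y 1 + Finsupp.single x 1) P = 0) :
    coeff m (X y * pderiv x P) = 0 := by
  rw [coeff_X_mul', coeff_pderiv, h, zero_mul, ite_self]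

/-- The transport operator `∑ᵥ cᵥ (xᵥ - wᵥ) ∂/∂xᵥ`, where `xᵥ` and `wᵥ` are the variables with
indices `i v` and `o v`. -/
def transport (c : ι → ℝ) (i o : ι → σ) :
    Derivation ℂ (MvPolynomial σ ℂ) (MvPolynomial σ ℂ) :=
  ∑ v, (C (c v : ℂ) * (X (i v) - X (o v))) • pderiv (i v)

variable {c : ι → ℝ} {i o : ι → σ}

theorem transport_apply (P : MvPolynomial σ ℂ) :
    transport c i o P = ∑ v, C (c v : ℂ) * (X (i v) - X (o v)) * pderiv (i v) P := by
  rw [transport, ← Derivation.coeFnAddMonoidHom_apply, map_sum, Finset.sum_apply]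
  rfl

theorem transport_X_apply_left (hi : Function.Injective i) (v : ι) :
    transport c i o (X (i v)) = (c v : ℂ) • (X (i v) - X (o v)) := by
  simp [transport_apply, pderiv_X, Pi.single_apply, hi.eq_iff, smul_eq_C_mul]

theorem transport_X_apply_right (hio : ∀ v w, i v ≠ o w) (v : ι) :
    transport c i o (X (o v)) = 0 := by
  simp [transport_apply, pderiv_X, fun w => (hio w v).symm]

theorem coeff_transport_of_forall_weight_le (hio : ∀ v w, i v ≠ o w)
    (hc : ∀ v, 0 ≤ c v) {P : MvPolynomial σ ℂ} {m : σ →₀ ℕ}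
    (hmax : ∀ m' ∈ P.support, ∑ v, c v * m' (i v) ≤ ∑ v, c v * m (i v)) :
    coeff m (transport c i o P) = (↑(∑ v, c v * m (i v)) : ℂ) * coeff m P := by
  have hshift : ∀ v, c v ≠ 0 →
      coeff (m - Finsupp.single (o v) 1 + Finsupp.single (i v) 1) P = 0 := by
    intro v hv
    by_contra hne
    refine (hmax _ (mem_support_iff.2 hne)).not_gt (sum_lt_sum (fun w _ => ?_) ⟨v, mem_univ v, ?_⟩)
    · refine mul_le_mul_of_nonneg_left ?_ (hc w)
      rw [Finsupp.add_apply, Finsupp.tsub_apply, Finsupp.single_eq_of_ne (hio w v), tsub_zero]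
      exact_mod_cast Nat.le_add_right _ _
    · refine mul_lt_mul_of_pos_left ?_ ((hc v).lt_of_ne' hv)
      simp [(hio v v).symm]
  rw [transport_apply, coeff_sum, ofReal_sum, sum_mul]
  refine sum_congr rfl fun v _ => ?_
  rw [mul_assoc, coeff_C_mul, sub_mul, coeff_sub, coeff_X_mul_pderiv_self, ofReal_mul,
    ofReal_natCast]
  by_cases hv : c v = 0
  · simp [hv]
  · rw [coeff_X_mul_pderiv_eq_zero (hshift v hv), sub_zero, mul_assoc]

theorem apply_eq_zero_of_transport_eq_zero (hio : ∀ v w, i v ≠ o w)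
    (hc : ∀ v, 0 ≤ c v) {P : MvPolynomial σ ℂ} (hP : transport c i o P = 0) {m : σ →₀ ℕ}
    (hm : m ∈ P.support) {v : ι} (hv : c v ≠ 0) : m (i v) = 0 := by
  obtain ⟨m₀, hm₀, hmax⟩ := P.support.exists_max_image (fun m' => ∑ v, c v * m' (i v)) ⟨m, hm⟩
  have hcoeff := coeff_transport_of_forall_weight_le hio hc hmax
  rw [hP, coeff_zero, zero_eq_mul, or_iff_left (mem_support_iff.1 hm₀), ofReal_eq_zero] at hcoeff
  have hnonneg : ∀ w ∈ univ, 0 ≤ c w * m (i w) := fun w _ =>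
    mul_nonneg (hc w) (Nat.cast_nonneg _)
  have hweight : ∑ w, c w * m (i w) = 0 :=
    le_antisymm ((hmax m hm).trans_eq hcoeff) (sum_nonneg hnonneg)
  have hterm := (sum_eq_zero_iff_of_nonneg hnonneg).1 hweight v (mem_univ v)
  exact_mod_cast (mul_eq_zero.1 hterm).resolve_left hv

end TransportKernel

section WirtingerCoordinates

open Finset
open scoped ContDiff

variable {n : ℕ}

theorem apply_eq_wirtinger (L : ℂ →L[ℝ] ℂ) (c : ℂ) :
    L c = (1 / 2 : ℂ) * (L 1 - I * L I) * c +
      (1 / 2 : ℂ) * (L 1 + I * L I) * (starRingEnd ℂ) c := by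
  have hc : c = c.re • (1 : ℂ) + c.im • I := by simp
  conv_lhs => rw [hc, map_add, map_smul, map_smul]
  rw [real_smul, real_smul, re_eq_add_conj, im_eq_sub_conj]
  have hI : I * I = -1 := I_mul_I
  field_simp
  linear_combination (c - (starRingEnd ℂ) c) * L I * hI

/-- The coordinate of `(z, w)` given by a formal variable. -/
def wirtingerCoord (x : Var n) : Cn n × Cn n →L[ℝ] ℂ :=
  (if x.1 = 0 ∨ x.1 = 2 then .id ℝ ℂ else (conjCLE : ℂ →L[ℝ] ℂ)) ∘L
    .proj x.2 ∘L (if x.1 = 0 ∨ x.1 = 1 then .fst ℝ (Cn n) (Cn n) else .snd ℝ (Cn n) (Cn n))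

/-- The embedding of the complex line along which the coordinate `x` varies. -/
def wirtingerLine (x : Var n) : ℂ →L[ℝ] Cn n × Cn n :=
  (if x.1 = 0 ∨ x.1 = 1 then .inl ℝ (Cn n) (Cn n) else .inr ℝ (Cn n) (Cn n)) ∘L
    .single ℝ (fun _ => ℂ) x.2

/-- The coefficient of `wirtingerCoord x` in a functional: the Wirtinger combination along
`wirtingerLine x`. -/
def wirtingerCoeff (x : Var n) : (Cn n × Cn n →L[ℝ] ℂ) →ₗ[ℂ] ℂ where
  toFun T := (1 / 2 : ℂ) * (T (wirtingerLine x 1) +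
    (if x.1 = 0 ∨ x.1 = 2 then -I else I) * T (wirtingerLine x I))
  map_add' T T' := by
    simp only [add_apply]
    ring
  map_smul' c T := by
    simp only [smul_apply, smul_eq_mul, RingHom.id_apply]
    ring

theorem wirtingerCoord_apply (x : Var n) (p : Cn n × Cn n) :
    wirtingerCoord x p = evalVars p.1 p.2 x := by
  obtain ⟨k, j⟩ := x
  fin_cases k <;> simp [wirtingerCoord, evalVars]

theorem wirtingerCoeff_wirtingerCoord (x y : Var n) :
    wirtingerCoeff x (wirtingerCoord y) = if y = x then 1 else 0 := by
  obtain ⟨k, j⟩ := x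
  obtain ⟨l, i⟩ := y
  by_cases hij : i = j
  · subst hij
    fin_cases k <;> fin_cases l <;>
      simp [wirtingerCoeff, wirtingerLine, wirtingerCoord] <;> norm_num
  · fin_cases k <;> fin_cases l <;>
      simp [wirtingerCoeff, wirtingerLine, wirtingerCoord, hij]

theorem eq_sum_wirtingerLine (p : Cn n × Cn n) :
    p = ∑ j, wirtingerLine (0, j) (p.1 j) + ∑ j, wirtingerLine (2, j) (p.2 j) := by
  ext i <;> simp [wirtingerLine, Prod.fst_sum, Prod.snd_sum, Pi.single_apply]

theorem sum_wirtingerCoeff_smul_wirtingerCoord (T : Cn n × Cn n →L[ℝ] ℂ) :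
    ∑ x, wirtingerCoeff x T • wirtingerCoord x = T := by
  refine ContinuousLinearMap.ext fun p => ?_
  have hz : ∀ j, T (wirtingerLine (0, j) (p.1 j)) =
      wirtingerCoeff (0, j) T * p.1 j + wirtingerCoeff (1, j) T * (starRingEnd ℂ) (p.1 j) :=
    fun j => by
      simpa [wirtingerCoeff, wirtingerLine, sub_eq_add_neg] using
        apply_eq_wirtinger (T ∘L wirtingerLine (0, j)) (p.1 j)
  have hw : ∀ j, T (wirtingerLine (2, j) (p.2 j)) =
      wirtingerCoeff (2, j) T * p.2 j + wirtingerCoeff (3, j) T * (starRingEnd ℂ) (p.2 j) :=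
    fun j => by
      simpa [wirtingerCoeff, wirtingerLine, sub_eq_add_neg] using
        apply_eq_wirtinger (T ∘L wirtingerLine (2, j)) (p.2 j)
  conv_rhs => rw [eq_sum_wirtingerLine p, map_add, map_sum, map_sum]
  simp only [hz, hw, sum_add_distrib, Fintype.sum_prod_type, Fin.sum_univ_four]
  simp [wirtingerCoord_apply, evalVars, add_assoc]

/-- The basis of the real-linear functionals on `ℂⁿ × ℂⁿ` given by `z`, `z̄`, `w`, `w̄`. -/
def wirtingerBasis (n : ℕ) : Module.Basis (Var n) ℂ (Cn n × Cn n →L[ℝ] ℂ) :=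
  .ofEquivFun
    { LinearMap.pi (fun x => wirtingerCoeff (n := n) x) with
      invFun := fun c => ∑ x, c x • wirtingerCoord x
      left_inv := sum_wirtingerCoeff_smul_wirtingerCoord
      right_inv := fun c => by
        ext x
        simp [wirtingerCoeff_wirtingerCoord] }

theorem wirtingerBasis_apply (x : Var n) : wirtingerBasis n x = wirtingerCoord x := by
  simp only [wirtingerBasis, Module.Basis.coe_ofEquivFun]
  rw [LinearEquiv.symm_apply_eq]
  ext y
  rw [Pi.single_apply]
  simp only [eq_comm (a := y)]
  exact (wirtingerCoeff_wirtingerCoord y x).symm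

theorem polyFun_wirtingerBasis (P : MvPolynomial (Var n) ℂ) (p : Cn n × Cn n) :
    polyFun (wirtingerBasis n) P p = MvPolynomial.eval (evalVars p.1 p.2) P := by
  simp only [polyFun, wirtingerBasis_apply, wirtingerCoord_apply]

theorem coordDeriv_wirtingerBasis (x : Var n) (f : Cn n × Cn n → ℂ) (p : Cn n × Cn n) :
    coordDeriv (wirtingerBasis n) x f p = wirtingerCoeff x (fderiv ℝ f p) := rfl

/-- The variables `z̄_j` and `z_j` of the first factor, indexed as in `Dv` and `Mv`. -/
def zVar : Fin n ⊕ Fin n → Var n := Sum.elim zbV zV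

/-- The variables `w̄_j` and `w_j` of the second factor, indexed as in `Dv` and `Mv`. -/
def wVar : Fin n ⊕ Fin n → Var n := Sum.elim (fun j => (3, j)) fun j => (2, j)

theorem zVar_injective : Function.Injective (zVar (n := n)) := by
  rintro (i | i) (j | j) h <;> simp_all [zVar, zbV, zV]

theorem zVar_ne_wVar (v w : Fin n ⊕ Fin n) : zVar v ≠ wVar w := by
  rcases v with i | i <;> rcases w with j | j <;> simp [zVar, wVar, zbV, zV]

theorem sum_var {M : Type*} [AddCommMonoid M] (f : Var n → M) :
    ∑ x, f x = ∑ v, f (zVar v) + ∑ v, f (wVar v) := by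
  simp only [Fintype.sum_prod_type, Fin.sum_univ_four, Fintype.sum_sum_type, zVar, wVar,
    Sum.elim_inl, Sum.elim_inr, zbV, zV]
  abel

theorem Dv_slice {f : Cn n × Cn n → ℂ} (hf : Differentiable ℝ f) (v : Fin n ⊕ Fin n)
    (p : Cn n × Cn n) :
    Dv v (fun z => f (z, p.2)) p.1 = coordDeriv (wirtingerBasis n) (zVar v) f p := by
  have hslice : HasFDerivAt (fun z : Cn n => (z, p.2)) (.inl ℝ (Cn n) (Cn n)) p.1 :=
    hasFDerivAt_prodMk_left p.1 p.2
  have hcomp : fderiv ℝ (fun z => f (z, p.2)) p.1 = fderiv ℝ f p ∘L .inl ℝ (Cn n) (Cn n) :=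
    ((hf p).hasFDerivAt.comp p.1 hslice).fderiv
  rcases v with j | j <;>
    simp [Dv, wdb, wd, hcomp, coordDeriv_wirtingerBasis, wirtingerCoeff, wirtingerLine, zVar, zbV,
      zV, sub_eq_add_neg]

variable {g : Cn n → ℂ}

theorem coordDeriv_zVar_comp_fst (hg : Differentiable ℝ g) (v : Fin n ⊕ Fin n) :
    coordDeriv (wirtingerBasis n) (zVar v) (g ∘ Prod.fst) = Dv v g ∘ Prod.fst :=
  funext fun p => (Dv_slice (hg.comp differentiable_fst) v p).symm

theorem coordDeriv_wVar_comp_fst (hg : Differentiable ℝ g) (v : Fin n ⊕ Fin n) :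
    coordDeriv (wirtingerBasis n) (wVar v) (g ∘ Prod.fst) = 0 := by
  ext p
  have hcomp : fderiv ℝ (g ∘ Prod.fst) p = fderiv ℝ g p.1 ∘L .fst ℝ (Cn n) (Cn n) :=
    ((hg p.1).hasFDerivAt.comp p hasFDerivAt_fst).fderiv
  rcases v with j | j <;>
    simp [hcomp, coordDeriv_wirtingerBasis, wirtingerCoeff, wirtingerLine, wVar]

theorem contDiff_Dv (hg : ContDiff ℝ ∞ g) (v : Fin n ⊕ Fin n) : ContDiff ℝ ∞ (Dv v g) := by
  have hcoord := contDiff_coordDeriv (wirtingerBasis n) (hg.comp contDiff_fst) (zVar v)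
  rw [coordDeriv_zVar_comp_fst (hg.differentiable (by simp))] at hcoord
  exact hcoord.comp (contDiff_prodMk_left (0 : Cn n))

theorem Dv_comm (hg : ContDiff ℝ ∞ g) (a b : Fin n ⊕ Fin n) : Dv a (Dv b g) = Dv b (Dv a g) := by
  have hcomm := coordDeriv_comm (wirtingerBasis n) (hg.comp contDiff_fst) (zVar a) (zVar b)
  have hdiff : ∀ v, Differentiable ℝ (Dv v g) := fun v =>
    (contDiff_Dv hg v).differentiable (by simp)
  simp only [coordDeriv_zVar_comp_fst (hg.differentiable (by simp)),
    coordDeriv_zVar_comp_fst (hdiff _)] at hcomm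
  exact funext fun z => congrFun hcomm (z, 0)

open MvPolynomial in
theorem taylorPart_succ_comp_fst (hg : ContDiff ℝ ∞ g) (k : ℕ) :
    taylorPart (wirtingerBasis n) (k + 1) (g ∘ Prod.fst) =
      C ((k + 1 : ℂ)⁻¹) *
        ∑ v, X (zVar v) * taylorPart (wirtingerBasis n) k (Dv v g ∘ Prod.fst) := by
  have hdiff := hg.differentiable (by simp)
  simp only [taylorPart_succ, sum_var, coordDeriv_zVar_comp_fst hdiff,
    coordDeriv_wVar_comp_fst hdiff, taylorPart_fun_zero, mul_zero,
    sum_const_zero, add_zero]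

open MvPolynomial in
theorem taylorPart_three_comp_fst (hg : ContDiff ℝ ∞ g) :
    taylorPart (wirtingerBasis n) 3 (g ∘ Prod.fst) =
      cubicForm (fun a b c => Dv a (Dv b (Dv c g)) 0) fun v => X (zVar v) := by
  have hsymm : ∀ a b c, Dv a (Dv b (Dv c g)) 0 = Dv c (Dv b (Dv a g)) 0 := fun a b c => by
    rw [Dv_comm (contDiff_Dv hg c), Dv_comm hg, Dv_comm (contDiff_Dv hg a)]
  have h₁ := contDiff_Dv hg
  have h₂ := fun v => contDiff_Dv (h₁ v)
  have hlinear : ∀ v w, taylorPart (wirtingerBasis n) 1 (Dv w (Dv v g) ∘ Prod.fst) =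
      ∑ u, X (zVar u) * C (Dv u (Dv w (Dv v g)) 0) := fun v w => by
    simpa [taylorPart] using taylorPart_succ_comp_fst (h₂ v w) 0
  have hquadratic : ∀ v, taylorPart (wirtingerBasis n) 2 (Dv v g ∘ Prod.fst) =
      C 2⁻¹ * ∑ w, X (zVar w) * ∑ u, X (zVar u) * C (Dv u (Dv w (Dv v g)) 0) := fun v => by
    rw [taylorPart_succ_comp_fst (h₁ v) 1]
    norm_num [hlinear]
  rw [taylorPart_succ_comp_fst hg 2]
  simp only [hquadratic, cubicForm, mul_sum, smul_eq_C_mul]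
  refine sum_congr rfl fun a _ => sum_congr rfl fun b _ => sum_congr rfl fun c _ => ?_
  have hsixth : (C (1 / 6 : ℂ) : MvPolynomial (Var n) ℂ) = C 3⁻¹ * C 2⁻¹ := by
    rw [← C_mul]; norm_num
  have hthird : ((2 : ℕ) + 1 : ℂ)⁻¹ = 3⁻¹ := by norm_num
  rw [hsymm a b c, hsixth, hthird]
  ring

end WirtingerCoordinates

section TransportCoefficients

variable {s₁ s₂ s₃ : ℝ}

theorem coeffXXW_eq (s₁ s₂ s₃ : ℝ) : coeffXXW s₁ s₂ s₃ =
    2 * (s₃⁻ * (s₁⁺ + s₂⁺) - s₃⁺ * (s₁⁻ + s₂⁻)) / ((|s₁| + |s₂|) * (|s₁| + |s₂| + |s₃|)) := by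
  have hnumerator : (s₁ + s₂ + s₃) * |s₃| - s₃ * (|s₁| + |s₂| + |s₃|) =
      2 * (s₃⁻ * (s₁⁺ + s₂⁺) - s₃⁺ * (s₁⁻ + s₂⁻)) := by
    rw [← posPart_add_negPart s₁, ← posPart_add_negPart s₂, ← posPart_add_negPart s₃]
    linear_combination -(s₃⁺ + s₃⁻) * (posPart_sub_negPart s₁ + posPart_sub_negPart s₂) +
      (s₁⁺ + s₁⁻ + s₂⁺ + s₂⁻) * posPart_sub_negPart s₃
  rw [← hnumerator, mul_comm (|s₁| + |s₂|), ← div_div, coeffXXW, coeffXXX]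
  by_cases h : |s₁| + |s₂| + |s₃| = 0
  · have h₃ : s₃ = 0 := abs_eq_zero.1 (by linarith [abs_nonneg s₁, abs_nonneg s₂, abs_nonneg s₃])
    simp [h₃]
  · congr 1
    field_simp

theorem coeffXXW_neg (s₁ s₂ s₃ : ℝ) : coeffXXW (-s₁) (-s₂) (-s₃) = -coeffXXW s₁ s₂ s₃ := by
  simp only [coeffXXW_eq, negPart_neg, posPart_neg, abs_neg]
  ring

theorem coeffXWW_neg (s₁ s₂ s₃ : ℝ) : coeffXWW (-s₁) (-s₂) (-s₃) = -coeffXWW s₁ s₂ s₃ := by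
  simp only [coeffXWW, coeffXXW_neg, abs_neg]
  ring

theorem coeffXWW_zero_left (s₂ s₃ : ℝ) : coeffXWW 0 s₂ s₃ = 0 := by
  simp [coeffXWW]

theorem coeffXWW_of_nonneg (h₁ : 0 ≤ s₁) (h₂ : 0 ≤ s₂) (h₃ : 0 ≤ s₃) :
    coeffXWW s₁ s₂ s₃ = 0 := by
  simp [coeffXWW, coeffXXW_eq, h₁, h₂, h₃]

theorem coeffXWW_of_nonpos (h₁ : s₁ ≤ 0) (h₂ : s₂ ≤ 0) (h₃ : s₃ ≤ 0) :
    coeffXWW s₁ s₂ s₃ = 0 := by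
  simp [coeffXWW, coeffXXW_eq, h₁, h₂, h₃]

theorem coeffXWW_of_pos_of_neg_of_neg (h₁ : 0 < s₁) (h₂ : 0 ≤ s₂) (h₃ : 0 ≤ s₃) :
    coeffXWW s₁ (-s₂) (-s₃) = 2 * (s₂ * s₃ / (s₁ + s₂ + s₃) * (1 / (s₂ + s₁) + 1 / (s₁ + s₃))) := by
  simp only [coeffXWW, coeffXXW_eq, abs_neg, posPart_neg, negPart_neg, posPart_eq_self.2,
    negPart_eq_zero.2, abs_of_nonneg, h₁.le, h₂, h₃]
  rw [add_right_comm s₁ s₃ s₂, add_comm s₂ s₁]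
  field_simp
  ring

theorem coeffXWW_of_pos_of_neg_of_pos (h₁ : 0 < s₁) (h₂ : 0 ≤ s₂) (h₃ : 0 ≤ s₃) :
    coeffXWW s₁ (-s₂) s₃ = 2 * s₂ * s₃ / ((s₁ + s₂) * (s₁ + s₂ + s₃)) := by
  simp only [coeffXWW, coeffXXW_eq, abs_neg, posPart_neg, negPart_neg, posPart_eq_self.2,
    negPart_eq_zero.2, abs_of_nonneg, h₁.le, h₂, h₃]
  rw [add_right_comm s₁ s₃ s₂]
  field_simp
  ring

end TransportCoefficients

section Weights

open Finset

variable {n : ℕ}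

/-- The weight of the variable `z̄_j` (index `inl j`) or `z_j` (index `inr j`): `λ_j` if the
variable is counted by `(α'', β')`, and `0` otherwise. -/
def varWeight (q : ℕ) (lam : Fin n → ℝ) : Fin n ⊕ Fin n → ℝ :=
  Sum.elim (fun j => if (j : ℕ) < q then 0 else lam j) fun j => if (j : ℕ) < q then lam j else 0

theorem sum_mul_ite_eq_inl (f : Fin n → ℝ) (v : Fin n ⊕ Fin n) :
    ∑ j, f j * (if v = .inl j then 1 else 0) = Sum.elim f (fun _ => 0) v := by
  rcases v with j | j <;> simp

theorem sum_mul_ite_eq_inr (f : Fin n → ℝ) (v : Fin n ⊕ Fin n) :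
    ∑ j, f j * (if v = .inr j then 1 else 0) = Sum.elim (fun _ => 0) f v := by
  rcases v with j | j <;> simp

variable {q : ℕ} {lam : Fin n → ℝ}

theorem swgt_eq (a b c : Fin n ⊕ Fin n) : swgt q lam (aOf3 a b c) (bOf3 a b c) =
    varWeight q lam a + varWeight q lam b + varWeight q lam c := by
  have hterm : ∀ v : Fin n ⊕ Fin n, varWeight q lam v =
      ∑ j : Fin n, (if (j : ℕ) < q then 0 else lam j) * (if v = .inl j then 1 else 0) +
        ∑ j : Fin n, (if (j : ℕ) < q then lam j else 0) * (if v = .inr j then 1 else 0) := by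
    intro v
    rw [sum_mul_ite_eq_inl, sum_mul_ite_eq_inr]
    rcases v with j | j <;> simp [varWeight]
  simp only [hterm, swgt, aOf3, bOf3, ← sum_add_distrib]
  refine sum_congr rfl fun j _ => ?_
  by_cases h : (j : ℕ) < q <;> simp only [h, if_true, if_false] <;> push_cast <;> ring

variable (hneg : ∀ j : Fin n, (j : ℕ) < q → lam j < 0)
  (hpos : ∀ j : Fin n, q ≤ (j : ℕ) → 0 < lam j)

include hpos in
theorem varWeight_inl (j : Fin n) :
    varWeight q lam (.inl j) = if q ≤ (j : ℕ) then |lam j| else 0 := by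
  by_cases h : q ≤ (j : ℕ)
  · simp [varWeight, h, abs_of_pos (hpos j h)]
  · simp [varWeight, h, not_le.1 h]

include hneg in
theorem varWeight_inr (j : Fin n) :
    varWeight q lam (.inr j) = -if (j : ℕ) < q then |lam j| else 0 := by
  by_cases h : (j : ℕ) < q
  · simp [varWeight, h, abs_of_neg (hneg j h)]
  · simp [varWeight, h]

include hpos in
theorem varWeight_inl_nonneg (j : Fin n) : 0 ≤ varWeight q lam (.inl j) := by
  rw [varWeight_inl hpos]
  positivity

include hneg in
theorem varWeight_inr_nonpos (j : Fin n) : varWeight q lam (.inr j) ≤ 0 := by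
  rw [varWeight_inr hneg, neg_nonpos]
  positivity

include hneg hpos in
theorem posPart_varWeight (v : Fin n ⊕ Fin n) :
    (varWeight q lam v)⁺ = ∑ j : Fin n, (if q ≤ (j : ℕ) then |lam j| else 0) *
      (if v = .inl j then 1 else 0) := by
  rw [sum_mul_ite_eq_inl]
  rcases v with j | j
  · rw [posPart_eq_self.2 (varWeight_inl_nonneg hpos j), varWeight_inl hpos, Sum.elim_inl]
  · simpa using varWeight_inr_nonpos hneg j

include hneg hpos in
theorem negPart_varWeight (v : Fin n ⊕ Fin n) :
    (varWeight q lam v)⁻ = ∑ j : Fin n, (if (j : ℕ) < q then |lam j| else 0) *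
      (if v = .inr j then 1 else 0) := by
  rw [sum_mul_ite_eq_inr]
  rcases v with j | j
  · simpa using varWeight_inl_nonneg hpos j
  · rw [negPart_eq_neg.2 (varWeight_inr_nonpos hneg j), varWeight_inr hneg, neg_neg, Sum.elim_inr]

include hneg hpos in
theorem wA_aOf2 (a b : Fin n ⊕ Fin n) :
    wA q lam (aOf2 a b) = (varWeight q lam a)⁺ + (varWeight q lam b)⁺ := by
  simp only [posPart_varWeight hneg hpos, wA, aOf2, ← sum_add_distrib, ← mul_add, ← ite_zero_mul,
    Nat.cast_add, Nat.cast_ite, Nat.cast_one, Nat.cast_zero]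

include hneg hpos in
theorem wB_bOf2 (a b : Fin n ⊕ Fin n) :
    wB q lam (bOf2 a b) = (varWeight q lam a)⁻ + (varWeight q lam b)⁻ := by
  simp only [negPart_varWeight hneg hpos, wB, bOf2, ← sum_add_distrib, ← mul_add, ← ite_zero_mul,
    Nat.cast_add, Nat.cast_ite, Nat.cast_one, Nat.cast_zero]

include hneg hpos in
theorem wA_aOf3 (a b c : Fin n ⊕ Fin n) : wA q lam (aOf3 a b c) =
    (varWeight q lam a)⁺ + (varWeight q lam b)⁺ + (varWeight q lam c)⁺ := by
  simp only [posPart_varWeight hneg hpos, wA, aOf3, ← sum_add_distrib, ← mul_add, ← ite_zero_mul,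
    Nat.cast_add, Nat.cast_ite, Nat.cast_one, Nat.cast_zero]

include hneg hpos in
theorem wB_bOf3 (a b c : Fin n ⊕ Fin n) : wB q lam (bOf3 a b c) =
    (varWeight q lam a)⁻ + (varWeight q lam b)⁻ + (varWeight q lam c)⁻ := by
  simp only [negPart_varWeight hneg hpos, wB, bOf3, ← sum_add_distrib, ← mul_add, ← ite_zero_mul,
    Nat.cast_add, Nat.cast_ite, Nat.cast_one, Nat.cast_zero]

theorem wA_eq_zero {α : Fin n → ℕ} (h : ∀ j : Fin n, q ≤ (j : ℕ) → α j = 0) :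
    wA q lam α = 0 :=
  sum_eq_zero fun j _ => by split_ifs with hj <;> simp [h j, *]

theorem wB_eq_zero {β : Fin n → ℕ} (h : ∀ j : Fin n, (j : ℕ) < q → β j = 0) :
    wB q lam β = 0 :=
  sum_eq_zero fun j _ => by split_ifs with hj <;> simp [h j, *]

include hneg hpos in
theorem wA_add_wB_aOf2_bOf2 (a b : Fin n ⊕ Fin n) :
    wA q lam (aOf2 a b) + wB q lam (bOf2 a b) = |varWeight q lam a| + |varWeight q lam b| := by
  simp only [wA_aOf2 hneg hpos, wB_bOf2 hneg hpos, ← posPart_add_negPart]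
  ring

include hneg hpos in
theorem ite_cond0_eq_coeffXXX (a b c : Fin n ⊕ Fin n) :
    (if ¬ cond0 q (aOf3 a b c) (bOf3 a b c) then ((swgt q lam (aOf3 a b c) (bOf3 a b c) /
      (wA q lam (aOf3 a b c) + wB q lam (bOf3 a b c)) : ℝ) : ℂ) else 0) =
      coeffXXX (varWeight q lam a) (varWeight q lam b) (varWeight q lam c) := by
  have hdenom : wA q lam (aOf3 a b c) + wB q lam (bOf3 a b c) =
      |varWeight q lam a| + |varWeight q lam b| + |varWeight q lam c| := by
    simp only [wA_aOf3 hneg hpos, wB_bOf3 hneg hpos, ← posPart_add_negPart]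
    ring
  rw [coeffXXX, ← swgt_eq, ← hdenom]
  refine ite_eq_left_iff.2 fun h => ?_
  have hcond := not_not.1 h
  rw [wA_eq_zero fun j => (hcond j).1, wB_eq_zero fun j => (hcond j).2, add_zero, div_zero,
    ofReal_zero]

include hneg hpos in
theorem ite_aOf2_eq_coeffXXW (a b : Fin n ⊕ Fin n) (j : Fin n) :
    (if (j : ℕ) < q ∧ ¬ (∀ t : Fin n, q ≤ (t : ℕ) → aOf2 a b t = 0) then
      ((2 * |lam j| * wA q lam (aOf2 a b) / ((wA q lam (aOf2 a b) + wB q lam (bOf2 a b)) *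
        (wA q lam (aOf2 a b) + wB q lam (bOf2 a b) + |lam j|)) : ℝ) : ℂ) else 0) =
      coeffXXW (varWeight q lam a) (varWeight q lam b) (varWeight q lam (.inr j)) := by
  simp only [coeffXXW_eq, ← wA_add_wB_aOf2_bOf2 hneg hpos, ← wA_aOf2 hneg hpos,
    varWeight_inr hneg, abs_neg, posPart_neg, negPart_neg]
  split_ifs with h hj hj
  · rw [posPart_eq_self.2 (abs_nonneg _), negPart_eq_zero.2 (abs_nonneg _), abs_abs, mul_assoc,
      zero_mul, sub_zero]
  · exact absurd h.1 hj
  · simp [wA_eq_zero (not_not.1 fun hα => h ⟨hj, hα⟩)]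
  · simp

include hneg hpos in
theorem ite_bOf2_eq_neg_coeffXXW (a b : Fin n ⊕ Fin n) (j : Fin n) :
    (if q ≤ (j : ℕ) ∧ ¬ (∀ t : Fin n, (t : ℕ) < q → bOf2 a b t = 0) then
      ((2 * |lam j| * wB q lam (bOf2 a b) / ((wA q lam (aOf2 a b) + wB q lam (bOf2 a b)) *
        (wA q lam (aOf2 a b) + wB q lam (bOf2 a b) + |lam j|)) : ℝ) : ℂ) else 0) =
      -coeffXXW (varWeight q lam a) (varWeight q lam b) (varWeight q lam (.inl j)) := by
  simp only [coeffXXW_eq, ← wA_add_wB_aOf2_bOf2 hneg hpos, ← wB_bOf2 hneg hpos,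
    varWeight_inl hpos]
  split_ifs with h hj hj
  · rw [posPart_eq_self.2 (abs_nonneg _), negPart_eq_zero.2 (abs_nonneg _), abs_abs, mul_assoc,
      zero_mul, zero_sub, mul_neg, neg_div, ofReal_neg, neg_neg]
  · exact absurd h.1 hj
  · simp [wB_eq_zero (not_not.1 fun hβ => h ⟨hj, hβ⟩)]
  · simp

include hneg hpos in
theorem coeffXWW_varWeight_inl_inr_inr (k j s : Fin n) :
    coeffXWW (varWeight q lam (.inl k)) (varWeight q lam (.inr j)) (varWeight q lam (.inr s)) =
      2 * if q ≤ (k : ℕ) ∧ (j : ℕ) < q ∧ (s : ℕ) < q then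
        |lam j| * |lam s| / (|lam k| + |lam j| + |lam s|) *
          (1 / (|lam j| + |lam k|) + 1 / (|lam k| + |lam s|)) else 0 := by
  rw [varWeight_inl hpos, varWeight_inr hneg, varWeight_inr hneg]
  by_cases hk : q ≤ (k : ℕ)
  · rw [if_pos hk, coeffXWW_of_pos_of_neg_of_neg (abs_pos.2 (hpos k hk).ne') (by positivity)
      (by positivity)]
    by_cases hj : (j : ℕ) < q <;> by_cases hs : (s : ℕ) < q <;> simp [hk, hj, hs]
  · simp only [hk, if_false, false_and, coeffXWW_zero_left, mul_zero]

include hneg hpos in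
theorem coeffXWW_varWeight_inl_inr_inl (s j k : Fin n) :
    coeffXWW (varWeight q lam (.inl s)) (varWeight q lam (.inr j)) (varWeight q lam (.inl k)) =
      if q ≤ (s : ℕ) ∧ q ≤ (k : ℕ) ∧ (j : ℕ) < q then
        2 * |lam j| * |lam k| / ((|lam s| + |lam j|) * (|lam s| + |lam j| + |lam k|)) else 0 := by
  rw [varWeight_inl hpos, varWeight_inl hpos, varWeight_inr hneg]
  by_cases hs : q ≤ (s : ℕ)
  · rw [if_pos hs, coeffXWW_of_pos_of_neg_of_pos (abs_pos.2 (hpos s hs).ne') (by positivity)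
      (by positivity)]
    by_cases hj : (j : ℕ) < q <;> by_cases hk : q ≤ (k : ℕ) <;> simp [hs, hj, hk]
  · simp only [hs, if_false, false_and, coeffXWW_zero_left]

include hneg hpos in
theorem coeffXWW_varWeight_inr_inl_inl (k j s : Fin n) :
    coeffXWW (varWeight q lam (.inr k)) (varWeight q lam (.inl j)) (varWeight q lam (.inl s)) =
      -(2 * if (k : ℕ) < q ∧ q ≤ (j : ℕ) ∧ q ≤ (s : ℕ) then
        |lam j| * |lam s| / (|lam k| + |lam j| + |lam s|) *
          (1 / (|lam j| + |lam k|) + 1 / (|lam k| + |lam s|)) else 0) := by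
  rw [← neg_neg (varWeight q lam (.inl j)), ← neg_neg (varWeight q lam (.inl s)),
    varWeight_inl hpos, varWeight_inl hpos, varWeight_inr hneg, coeffXWW_neg]
  by_cases hk : (k : ℕ) < q
  · rw [if_pos hk, coeffXWW_of_pos_of_neg_of_neg (abs_pos.2 (hneg k hk).ne) (by positivity)
      (by positivity)]
    by_cases hj : q ≤ (j : ℕ) <;> by_cases hs : q ≤ (s : ℕ) <;> simp [hk, hj, hs]
  · simp only [hk, if_false, false_and, coeffXWW_zero_left, mul_zero]

include hneg hpos in
theorem coeffXWW_varWeight_inr_inl_inr (s k j : Fin n) :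
    coeffXWW (varWeight q lam (.inr s)) (varWeight q lam (.inl k)) (varWeight q lam (.inr j)) =
      -if q ≤ (k : ℕ) ∧ (j : ℕ) < q ∧ (s : ℕ) < q then
        2 * |lam j| * |lam k| / ((|lam s| + |lam k|) * (|lam s| + |lam j| + |lam k|)) else 0 := by
  rw [← neg_neg (varWeight q lam (.inl k)), varWeight_inl hpos, varWeight_inr hneg,
    varWeight_inr hneg, coeffXWW_neg]
  by_cases hs : (s : ℕ) < q
  · rw [if_pos hs, coeffXWW_of_pos_of_neg_of_pos (abs_pos.2 (hneg s hs).ne) (by positivity)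
      (by positivity)]
    by_cases hj : (j : ℕ) < q <;> by_cases hk : q ≤ (k : ℕ) <;>
      simp [hs, hj, hk, mul_right_comm, add_right_comm]
  · simp only [hs, if_false, and_false, coeffXWW_zero_left]

end Weights

section Expansion

open Finset

variable {n : ℕ}

theorem transportSolution_eq_sum {ι : Type*} [Fintype ι] (s : ι → ℝ) (T : ι → ι → ι → ℂ)
    (x w : ι → ℂ) : transportSolution s T x w =
      1 / 6 * ∑ a, ∑ b, ∑ c, (coeffXXX (s a) (s b) (s c) : ℂ) * T a b c * x a * x b * x c +
      1 / 2 * ∑ c, ∑ a, ∑ b, (coeffXXW (s a) (s b) (s c) : ℂ) * T a b c * x a * x b * w c +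
      1 / 2 * ∑ a, ∑ b, ∑ c, (coeffXWW (s a) (s b) (s c) : ℂ) * T a b c * x a * w b * w c := by
  have hrotate : ∑ c, ∑ a, ∑ b, (coeffXXW (s a) (s b) (s c) : ℂ) * T a b c * x a * x b * w c =
      ∑ a, ∑ b, ∑ c, (coeffXXW (s a) (s b) (s c) : ℂ) * T a b c * x a * x b * w c :=
    sum_comm.trans (sum_congr rfl fun a _ => sum_comm)
  rw [hrotate]
  simp only [transportSolution, mul_sum, ← sum_add_distrib]
  refine sum_congr rfl fun a _ => sum_congr rfl fun b _ => sum_congr rfl fun c _ => ?_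
  push_cast
  simp only [smul_eq_mul]
  ring

theorem sum_sum_sum_eq_mixed_blocks {α β R : Type*} [Fintype α] [Fintype β] [CommSemiring R]
    {F : α ⊕ β → α ⊕ β → α ⊕ β → R} (hsymm : ∀ a b c, F a c b = F a b c)
    (hinl : ∀ i j k, F (.inl i) (.inl j) (.inl k) = 0)
    (hinr : ∀ i j k, F (.inr i) (.inr j) (.inr k) = 0) :
    ∑ a, ∑ b, ∑ c, F a b c =
      ∑ k, ∑ j, ∑ s, F (.inl k) (.inr j) (.inr s) + ∑ k, ∑ j, ∑ s, F (.inr k) (.inl j) (.inl s) +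
      2 * ∑ s, ∑ k, ∑ j, F (.inl s) (.inl k) (.inr j) +
      2 * ∑ k, ∑ j, ∑ s, F (.inr s) (.inl k) (.inr j) := by
  have hinl_swap : ∑ s, ∑ j, ∑ k, F (.inl s) (.inr j) (.inl k) =
      ∑ s, ∑ k, ∑ j, F (.inl s) (.inl k) (.inr j) :=
    sum_congr rfl fun s _ => sum_comm.trans <| by simp only [hsymm (.inl s) (.inl _) (.inr _)]
  have hinr_swap : ∑ s, ∑ j, ∑ k, F (.inr s) (.inr j) (.inl k) =
      ∑ s, ∑ k, ∑ j, F (.inr s) (.inl k) (.inr j) :=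
    sum_congr rfl fun s _ => sum_comm.trans <| by simp only [hsymm (.inr s) (.inl _) (.inr _)]
  have hinr_rotate : ∑ k, ∑ j, ∑ s, F (.inr s) (.inl k) (.inr j) =
      ∑ s, ∑ k, ∑ j, F (.inr s) (.inl k) (.inr j) :=
    (sum_congr rfl fun k _ => sum_comm).trans sum_comm
  simp only [Fintype.sum_sum_type, sum_add_distrib, hinl, hinr, sum_const_zero, hinl_swap,
    hinr_swap, hinr_rotate]
  ring

variable {q : ℕ} {lam : Fin n → ℝ} (hneg : ∀ j : Fin n, (j : ℕ) < q → lam j < 0)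
  (hpos : ∀ j : Fin n, q ≤ (j : ℕ) → 0 < lam j)

include hneg hpos in
theorem sum_coeffXWW_varWeight {T : Fin n ⊕ Fin n → Fin n ⊕ Fin n → Fin n ⊕ Fin n → ℂ}
    (h₂₃ : ∀ a b c, T a c b = T a b c) (x w : Fin n ⊕ Fin n → ℂ) :
    1 / 2 * ∑ a, ∑ b, ∑ c,
      (coeffXWW (varWeight q lam a) (varWeight q lam b) (varWeight q lam c) : ℂ) *
        T a b c * x a * w b * w c =
    (∑ k : Fin n, ∑ j : Fin n, ∑ s : Fin n, if q ≤ (k : ℕ) ∧ (j : ℕ) < q ∧ (s : ℕ) < q then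
      ((|lam j| * |lam s| / (|lam k| + |lam j| + |lam s|) *
        (1 / (|lam j| + |lam k|) + 1 / (|lam k| + |lam s|)) : ℝ) : ℂ) *
        T (.inl k) (.inr j) (.inr s) * x (.inl k) * w (.inr j) * w (.inr s) else 0) -
    (∑ k : Fin n, ∑ j : Fin n, ∑ s : Fin n, if (k : ℕ) < q ∧ q ≤ (j : ℕ) ∧ q ≤ (s : ℕ) then
      ((|lam j| * |lam s| / (|lam k| + |lam j| + |lam s|) *
        (1 / (|lam j| + |lam k|) + 1 / (|lam k| + |lam s|)) : ℝ) : ℂ) *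
        T (.inr k) (.inl j) (.inl s) * x (.inr k) * w (.inl j) * w (.inl s) else 0) +
    (∑ s : Fin n, ∑ k : Fin n, ∑ j : Fin n, if q ≤ (s : ℕ) ∧ q ≤ (k : ℕ) ∧ (j : ℕ) < q then
      ((2 * |lam j| * |lam k| / ((|lam s| + |lam j|) * (|lam s| + |lam j| + |lam k|)) : ℝ) : ℂ) *
        T (.inl s) (.inr j) (.inl k) * x (.inl s) * w (.inl k) * w (.inr j) else 0) -
    ∑ k : Fin n, ∑ j : Fin n, ∑ s : Fin n, if q ≤ (k : ℕ) ∧ (j : ℕ) < q ∧ (s : ℕ) < q then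
      ((2 * |lam j| * |lam k| / ((|lam s| + |lam k|) * (|lam s| + |lam j| + |lam k|)) : ℝ) : ℂ) *
        T (.inr s) (.inr j) (.inl k) * x (.inr s) * w (.inl k) * w (.inr j) else 0 := by
  rw [sum_sum_sum_eq_mixed_blocks]
  · simp only [coeffXWW_varWeight_inl_inr_inr hneg hpos, coeffXWW_varWeight_inr_inl_inl hneg hpos,
      coeffXWW_swap₂₃ (varWeight q lam (.inl _)) (varWeight q lam (.inr _)),
      coeffXWW_varWeight_inl_inr_inl hneg hpos, coeffXWW_varWeight_inr_inl_inr hneg hpos,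
      h₂₃ _ (.inr _) (.inl _), ofReal_mul 2, apply_ite ofReal, ofReal_neg, ofReal_zero,
      ofReal_ofNat, ite_mul, zero_mul, mul_assoc, neg_mul, sum_neg_distrib, ← mul_sum]
    ring
  · intro a b c
    rw [h₂₃, coeffXWW_swap₂₃]
    ring
  · intro i j k
    simp [coeffXWW_of_nonneg, varWeight_inl_nonneg hpos]
  · intro i j k
    simp [coeffXWW_of_nonpos, varWeight_inr_nonpos hneg]

open MvPolynomial in
/-- The quadratic part of the phase `ψ`, that is, `i ∑ |λ_j| |z_j - w_j|² + i ∑ λ_j (z̄_j w_j -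
w̄_j z_j)` as a polynomial in `z`, `z̄`, `w`, `w̄`. -/
def quadraticPhase (lam : Fin n → ℝ) : MvPolynomial (Var n) ℂ :=
  ∑ j, (C (I * |lam j|) * ((X (zVar (.inr j)) - X (wVar (.inr j))) *
      (X (zVar (.inl j)) - X (wVar (.inl j)))) +
    C (I * lam j) * (X (zVar (.inl j)) * X (wVar (.inr j)) -
      X (wVar (.inl j)) * X (zVar (.inr j))))

open MvPolynomial in
theorem quadraticPhase_isHomogeneous (lam : Fin n → ℝ) : (quadraticPhase lam).IsHomogeneous 2 := by
  have hX := fun x : Var n => isHomogeneous_X ℂ x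
  refine IsHomogeneous.sum _ _ _ fun j _ => .add (.C_mul ?_ _) (.C_mul ?_ _)
  · exact ((hX _).sub (hX _)).mul ((hX _).sub (hX _))
  · exact ((hX _).mul (hX _)).sub ((hX _).mul (hX _))

theorem evalVars_zVar (z w : Cn n) (v : Fin n ⊕ Fin n) : evalVars z w (zVar v) = Mv v z := by
  rcases v with j | j <;> simp [evalVars, zVar, zbV, zV, Mv]

theorem evalVars_wVar (z w : Cn n) (v : Fin n ⊕ Fin n) : evalVars z w (wVar v) = Mv v w := by
  rcases v with j | j <;> simp [evalVars, wVar, Mv]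

theorem polyFun_quadraticPhase (lam : Fin n → ℝ) (p : Cn n × Cn n) :
    polyFun (wirtingerBasis n) (quadraticPhase lam) p =
      I * ∑ j, ((|lam j| * normSq (p.1 j - p.2 j) : ℝ) : ℂ) +
        I * ∑ j, (lam j : ℂ) *
          ((starRingEnd ℂ) (p.1 j) * p.2 j - (starRingEnd ℂ) (p.2 j) * p.1 j) := by
  simp only [polyFun_wirtingerBasis, quadraticPhase, map_sum, map_add, map_mul, map_sub,
    MvPolynomial.eval_C, MvPolynomial.eval_X, evalVars_zVar, evalVars_wVar, Mv, ofReal_mul,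
    ← mul_conj, mul_sum, sum_add_distrib, mul_assoc]

open MvPolynomial in
theorem polyFun_transportSolution (s : Fin n ⊕ Fin n → ℝ)
    (T : Fin n ⊕ Fin n → Fin n ⊕ Fin n → Fin n ⊕ Fin n → ℂ) (p : Cn n × Cn n) :
    polyFun (wirtingerBasis n)
      (transportSolution s T (fun v => X (zVar v)) fun v => X (wVar v)) p =
      transportSolution s T (Mv · p.1) (Mv · p.2) := by
  rw [polyFun_wirtingerBasis, ← coe_aeval_eq_eval, RingHom.coe_coe, map_transportSolution]
  congr 1 <;> ext v <;> simp [evalVars_zVar, evalVars_wVar]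

variable {φ : Cn n → ℝ}

open MvPolynomial in
/-- The cubic part of the expansion `E`, as a polynomial in `z`, `z̄`, `w`, `w̄`. -/
def cubicPhase (q : ℕ) (lam : Fin n → ℝ) (φ : Cn n → ℝ) : MvPolynomial (Var n) ℂ :=
  C I * transportSolution (varWeight q lam) (fun a b c => Dv a (Dv b (Dv c (cplx φ))) 0)
    (fun v => X (zVar v)) fun v => X (wVar v)

theorem cubicPhase_isHomogeneous (q : ℕ) (lam : Fin n → ℝ) (φ : Cn n → ℝ) :
    (cubicPhase q lam φ).IsHomogeneous 3 :=
  (transportSolution_isHomogeneous _ _ _ _).C_mul _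

open scoped ContDiff in
include hneg hpos in
theorem E5_eq_polyFun (hφ : ContDiff ℝ ∞ (cplx φ)) (p : Cn n × Cn n) :
    E5 q lam φ p.1 p.2 =
      polyFun (wirtingerBasis n) (quadraticPhase lam + cubicPhase q lam φ) p := by
  rw [cubicPhase, polyFun_add, polyFun_mul, polyFun_C, Pi.add_apply, Pi.mul_apply,
    polyFun_transportSolution, polyFun_quadraticPhase, transportSolution_eq_sum,
    sum_coeffXWW_varWeight hneg hpos fun a b c => by rw [Dv_comm hφ]]
  simp only [E5, ite_cond0_eq_coeffXXX hneg hpos, ite_aOf2_eq_coeffXXW hneg hpos,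
    ite_bOf2_eq_neg_coeffXXW hneg hpos, Fintype.sum_sum_type (f := fun _ => ∑ _, ∑ _, _),
    neg_mul, sum_neg_distrib]
  simp only [Dv, Mv]
  ring

end Expansion

section EikonalEquation

open Finset MvPolynomial
open scoped ContDiff

variable {n : ℕ}

/-- The polynomial `∑ λ_j |z_j|²`, the quadratic part of the weight `φ`. -/
def quadraticWeight (lam : Fin n → ℝ) : MvPolynomial (Var n) ℂ :=
  ∑ j, C (lam j : ℂ) * (X (zVar (.inr j)) * X (zVar (.inl j)))

theorem quadraticWeight_isHomogeneous (lam : Fin n → ℝ) :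
    (quadraticWeight lam).IsHomogeneous 2 :=
  IsHomogeneous.sum _ _ _ fun _ _ => .C_mul ((isHomogeneous_X ℂ _).mul (isHomogeneous_X ℂ _)) _

theorem polyFun_quadraticWeight (lam : Fin n → ℝ) (p : Cn n × Cn n) :
    polyFun (wirtingerBasis n) (quadraticWeight lam) p = ∑ j, lam j * normSq (p.1 j) := by
  simp [polyFun_wirtingerBasis, quadraticWeight, evalVars_zVar, Mv, mul_conj]

theorem cplx_comp_fst_sub_quadraticWeight_isBigO {lam : Fin n → ℝ} {φ : Cn n → ℝ}
    (hφ : PhiOK lam φ) :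
    (cplx φ ∘ Prod.fst - polyFun (wirtingerBasis n) (quadraticWeight lam)) =O[nhds 0]
      fun p => ‖p‖ ^ 3 := by
  have hfst : (fun p : Cn n × Cn n => ‖p.1‖ ^ 3) =O[nhds 0] fun p => ‖p‖ ^ 3 :=
    (IsBigO.of_bound' (.of_forall fun p => by simpa using norm_fst_le p)).pow 3
  have hφ_fst := (hφ.2.comp_tendsto (continuous_fst.tendsto 0)).trans hfst
  refine (isBigO_ofReal_left.2 hφ_fst).congr_left fun p => ?_
  simp [polyFun_quadraticWeight, cplx]

/-- The two factors of the eikonal expression: `i ∂F/∂z̄_j + ∂g/∂z̄_j` at the index `inl j` and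
`-i ∂F/∂z_j + ∂g/∂z_j` at the index `inr j`. -/
def eikonalFactor (F : Cn n × Cn n → ℂ) (g : Cn n → ℂ) (v : Fin n ⊕ Fin n) : Cn n × Cn n → ℂ :=
  Sum.elim (fun _ => I) (fun _ => -I) v • coordDeriv (wirtingerBasis n) (zVar v) F +
    coordDeriv (wirtingerBasis n) (zVar v) (g ∘ Prod.fst)

variable {F : Cn n × Cn n → ℂ} {g : Cn n → ℂ}

/-- The eikonal expression `∑ (i ∂F/∂z̄_j + ∂g/∂z̄_j) (-i ∂F/∂z_j + ∂g/∂z_j)`. -/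
def eikonal (F : Cn n × Cn n → ℂ) (g : Cn n → ℂ) : Cn n × Cn n → ℂ :=
  ∑ j, eikonalFactor F g (.inl j) * eikonalFactor F g (.inr j)

theorem eikonal_apply (hF : Differentiable ℝ F) (hg : Differentiable ℝ g)
    (p : Cn n × Cn n) :
    eikonal F g p =
      ∑ j, (I * wdb j (fun z => F (z, p.2)) p.1 + wdb j g p.1) *
        (-I * wd j (fun z => F (z, p.2)) p.1 + wd j g p.1) := by
  rw [eikonal, Finset.sum_apply]
  refine sum_congr rfl fun j _ => ?_
  have hz := Dv_slice hF (.inr j) p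
  have hzb := Dv_slice hF (.inl j) p
  simp only [Dv] at hz hzb
  simp [eikonalFactor, coordDeriv_zVar_comp_fst hg, Dv, hz, hzb]

theorem contDiff_eikonalFactor (hF : ContDiff ℝ ∞ F) (hg : ContDiff ℝ ∞ g) (v : Fin n ⊕ Fin n) :
    ContDiff ℝ ∞ (eikonalFactor F g v) :=
  (contDiff_const.smul (contDiff_coordDeriv _ hF _)).add
    (contDiff_coordDeriv _ (hg.comp contDiff_fst) _)

theorem contDiff_eikonal (hF : ContDiff ℝ ∞ F) (hg : ContDiff ℝ ∞ g) :
    ContDiff ℝ ∞ (eikonal F g) := by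
  simpa only [eikonal, Finset.sum_fn] using! ContDiff.sum fun (j : Fin n) _ =>
    (contDiff_eikonalFactor hF hg (.inl j)).mul (contDiff_eikonalFactor hF hg (.inr j))

theorem taylorPart_eikonalFactor (hF : ContDiff ℝ ∞ F) (hg : ContDiff ℝ ∞ g) (v : Fin n ⊕ Fin n)
    (k : ℕ) : taylorPart (wirtingerBasis n) k (eikonalFactor F g v) =
      C (Sum.elim (fun _ => I) (fun _ => -I) v) *
          pderiv (zVar v) (taylorPart (wirtingerBasis n) (k + 1) F) +
        pderiv (zVar v) (taylorPart (wirtingerBasis n) (k + 1) (g ∘ Prod.fst)) := by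
  have hF' := contDiff_coordDeriv (wirtingerBasis n) hF (zVar v)
  have hG : ContDiff ℝ ∞ (g ∘ Prod.fst : Cn n × Cn n → ℂ) := hg.comp contDiff_fst
  have hsmul : ContDiff ℝ ∞ (Sum.elim (fun _ => I) (fun _ => -I) v •
      coordDeriv (wirtingerBasis n) (zVar v) F) :=
    contDiff_const.smul hF'
  rw [eikonalFactor, taylorPart_add _ hsmul (contDiff_coordDeriv _ hG _),
    taylorPart_const_smul _ hF', pderiv_taylorPart_succ _ hF, pderiv_taylorPart_succ _ hG]

theorem two_mul_varWeight_inl {q : ℕ} {lam : Fin n → ℝ}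
    (hneg : ∀ j : Fin n, (j : ℕ) < q → lam j < 0) (hpos : ∀ j : Fin n, q ≤ (j : ℕ) → 0 < lam j)
    (j : Fin n) : 2 * varWeight q lam (.inl j) = lam j + |lam j| := by
  rw [varWeight_inl hpos]
  split_ifs with h
  · rw [abs_of_pos (hpos j h), two_mul]
  · rw [abs_of_neg (hneg j (not_le.1 h)), mul_zero, add_neg_cancel]

theorem two_mul_varWeight_inr {q : ℕ} {lam : Fin n → ℝ}
    (hneg : ∀ j : Fin n, (j : ℕ) < q → lam j < 0) (hpos : ∀ j : Fin n, q ≤ (j : ℕ) → 0 < lam j)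
    (j : Fin n) : 2 * varWeight q lam (.inr j) = lam j - |lam j| := by
  rw [varWeight_inr hneg]
  split_ifs with h
  · rw [abs_of_neg (hneg j h)]
    ring
  · rw [abs_of_pos (hpos j (not_lt.1 h)), neg_zero, mul_zero, sub_self]

theorem pderiv_inl_quadraticPhase (lam : Fin n → ℝ) (j : Fin n) :
    pderiv (zVar (.inl j)) (quadraticPhase lam) =
      C (I * |lam j|) * (X (zVar (.inr j)) - X (wVar (.inr j))) +
        C (I * lam j) * X (wVar (.inr j)) := by
  simp [quadraticPhase, sum_add_distrib, Pi.single_apply,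
    zVar_injective.eq_iff, (zVar_ne_wVar _ _).symm]

theorem pderiv_inr_quadraticPhase (lam : Fin n → ℝ) (j : Fin n) :
    pderiv (zVar (.inr j)) (quadraticPhase lam) =
      C (I * |lam j|) * (X (zVar (.inl j)) - X (wVar (.inl j))) -
        C (I * lam j) * X (wVar (.inl j)) := by
  simp [quadraticPhase, sum_add_distrib, Pi.single_apply,
    zVar_injective.eq_iff, (zVar_ne_wVar _ _).symm, sub_eq_add_neg]

theorem pderiv_inl_quadraticWeight (lam : Fin n → ℝ) (j : Fin n) :
    pderiv (zVar (.inl j)) (quadraticWeight lam) = C (lam j : ℂ) * X (zVar (.inr j)) := by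
  simp [quadraticWeight, Pi.single_apply, zVar_injective.eq_iff]

theorem pderiv_inr_quadraticWeight (lam : Fin n → ℝ) (j : Fin n) :
    pderiv (zVar (.inr j)) (quadraticWeight lam) = C (lam j : ℂ) * X (zVar (.inl j)) := by
  simp [quadraticWeight, Pi.single_apply, zVar_injective.eq_iff]

theorem C_I_mul_C_I {σ : Type*} : (C I * C I : MvPolynomial σ ℂ) = -1 := by
  rw [← C_mul, I_mul_I, C_neg, C_1]

theorem pderiv_zVar_quadraticPhase_add_quadraticWeight {q : ℕ} {lam : Fin n → ℝ}
    (hneg : ∀ j : Fin n, (j : ℕ) < q → lam j < 0) (hpos : ∀ j : Fin n, q ≤ (j : ℕ) → 0 < lam j)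
    (v : Fin n ⊕ Fin n) :
    C (Sum.elim (fun _ => I) (fun _ => -I) v) * pderiv (zVar v) (quadraticPhase lam) +
        pderiv (zVar v) (quadraticWeight lam) =
      C (2 * varWeight q lam v.swap : ℂ) * (X (zVar v.swap) - X (wVar v.swap)) := by
  have hII := C_I_mul_C_I (σ := Var n)
  rcases v with j | j
  · have hs : (C (2 * varWeight q lam (.inr j) : ℂ) : MvPolynomial (Var n) ℂ) =
        C (lam j : ℂ) - C (↑|lam j| : ℂ) := by
      rw [← C_sub]
      exact_mod_cast congrArg (fun r : ℝ => C (r : ℂ)) (two_mul_varWeight_inr hneg hpos j)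
    rw [pderiv_inl_quadraticPhase, pderiv_inl_quadraticWeight, Sum.elim_inl, Sum.swap_inl, hs,
      C_mul, C_mul]
    linear_combination (C (↑|lam j| : ℂ) * (X (zVar (.inr j)) - X (wVar (.inr j))) +
      C (lam j : ℂ) * X (wVar (.inr j))) * hII
  · have hs : (C (2 * varWeight q lam (.inl j) : ℂ) : MvPolynomial (Var n) ℂ) =
        C (lam j : ℂ) + C (↑|lam j| : ℂ) := by
      rw [← C_add]
      exact_mod_cast congrArg (fun r : ℝ => C (r : ℂ)) (two_mul_varWeight_inl hneg hpos j)
    rw [pderiv_inr_quadraticPhase, pderiv_inr_quadraticWeight, Sum.elim_inr, Sum.swap_inr, hs,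
      C_mul, C_mul, C_neg]
    linear_combination (-C (↑|lam j| : ℂ) * (X (zVar (.inl j)) - X (wVar (.inl j))) +
      C (lam j : ℂ) * X (wVar (.inl j))) * hII

theorem taylorPart_three_eikonal (hF : ContDiff ℝ ∞ F) (hg : ContDiff ℝ ∞ g)
    (hzero : ∀ v, taylorPart (wirtingerBasis n) 0 (eikonalFactor F g v) = 0) :
    taylorPart (wirtingerBasis n) 3 (eikonal F g) =
      ∑ v, taylorPart (wirtingerBasis n) 1 (eikonalFactor F g v.swap) *
        taylorPart (wirtingerBasis n) 2 (eikonalFactor F g v) := by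
  have hfac := contDiff_eikonalFactor hF hg
  have hmul : ∀ j : Fin n,
      ContDiff ℝ ∞ (eikonalFactor F g (.inl j) * eikonalFactor F g (.inr j)) := fun j =>
    (hfac _).mul (hfac _)
  rw [eikonal, taylorPart_sum _ _ hmul, Fintype.sum_sum_type, ← sum_add_distrib]
  refine sum_congr rfl fun j _ => ?_
  rw [taylorPart_mul _ (hfac _) (hfac _)]
  simp only [Finset.Nat.sum_antidiagonal_succ, Finset.Nat.antidiagonal_zero, sum_singleton, hzero,
    zero_mul, mul_zero, add_zero, zero_add, Nat.reduceAdd, Sum.swap_inl, Sum.swap_inr]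
  ring

theorem varWeight_mul_sign {q : ℕ} {lam : Fin n → ℝ}
    (hneg : ∀ j : Fin n, (j : ℕ) < q → lam j < 0) (hpos : ∀ j : Fin n, q ≤ (j : ℕ) → 0 < lam j)
    (v : Fin n ⊕ Fin n) : (varWeight q lam v : ℂ) * Sum.elim (fun _ => I) (fun _ => -I) v =
      I * |varWeight q lam v| := by
  rcases v with j | j
  · rw [abs_of_nonneg (varWeight_inl_nonneg hpos j), Sum.elim_inl, mul_comm]
  · rw [abs_of_nonpos (varWeight_inr_nonpos hneg j), Sum.elim_inr, ofReal_neg]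
    ring

theorem taylorPart_eikonalFactor_of_lt_two {q : ℕ} {lam : Fin n → ℝ}
    (hneg : ∀ j : Fin n, (j : ℕ) < q → lam j < 0) (hpos : ∀ j : Fin n, q ≤ (j : ℕ) → 0 < lam j)
    (hF : ContDiff ℝ ∞ F) (hg : ContDiff ℝ ∞ g)
    (hF₂ : (F - polyFun (wirtingerBasis n) (quadraticPhase lam)) =O[nhds 0] fun p => ‖p‖ ^ 3)
    (hg₂ : (g ∘ Prod.fst - polyFun (wirtingerBasis n) (quadraticWeight lam)) =O[nhds 0]
      fun p => ‖p‖ ^ 3)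
    (v : Fin n ⊕ Fin n) {k : ℕ} (hk : k < 2) :
    taylorPart (wirtingerBasis n) k (eikonalFactor F g v) =
      if k = 1 then C (2 * varWeight q lam v.swap : ℂ) * (X (zVar v.swap) - X (wVar v.swap))
      else 0 := by
  have hG : ContDiff ℝ ∞ (g ∘ Prod.fst : Cn n × Cn n → ℂ) := hg.comp contDiff_fst
  rw [taylorPart_eikonalFactor hF hg, ← pderiv_zVar_quadraticPhase_add_quadraticWeight hneg hpos,
    taylorPart_eq_of_isBigO_sub_polyFun _ hF (quadraticPhase_isHomogeneous lam) hF₂ (by omega),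
    taylorPart_eq_of_isBigO_sub_polyFun _ hG (quadraticWeight_isHomogeneous lam) hg₂ (by omega)]
  by_cases h : k = 1 <;> simp [h]

theorem transport_taylorPart_three_of_eikonal {q : ℕ} {lam : Fin n → ℝ}
    (hneg : ∀ j : Fin n, (j : ℕ) < q → lam j < 0) (hpos : ∀ j : Fin n, q ≤ (j : ℕ) → 0 < lam j)
    (hF : ContDiff ℝ ∞ F) (hg : ContDiff ℝ ∞ g)
    (hF₂ : (F - polyFun (wirtingerBasis n) (quadraticPhase lam)) =O[nhds 0] fun p => ‖p‖ ^ 3)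
    (hg₂ : (g ∘ Prod.fst - polyFun (wirtingerBasis n) (quadraticWeight lam)) =O[nhds 0]
      fun p => ‖p‖ ^ 3)
    (heikonal : ∀ m, iteratedFDeriv ℝ m (eikonal F g) 0 = 0) :
    transport (|varWeight q lam ·|) zVar wVar (taylorPart (wirtingerBasis n) 3 F) =
      C I * transport (varWeight q lam) zVar wVar
        (taylorPart (wirtingerBasis n) 3 (g ∘ Prod.fst)) := by
  have hfac := taylorPart_eikonalFactor_of_lt_two hneg hpos hF hg hF₂ hg₂
  have heikonal₃ : 2 * C I * (transport (|varWeight q lam ·|) zVar wVar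
        (taylorPart (wirtingerBasis n) 3 F) -
      C I * transport (varWeight q lam) zVar wVar
        (taylorPart (wirtingerBasis n) 3 (g ∘ Prod.fst))) = 0 := by
    rw [← taylorPart_eq_zero_of_iteratedFDeriv_eq_zero (wirtingerBasis n) (contDiff_eikonal hF hg)
      heikonal 3, taylorPart_three_eikonal hF hg (hfac · two_pos), transport_apply,
      transport_apply, mul_sum, ← sum_sub_distrib, mul_sum]
    refine sum_congr rfl fun v _ => ?_
    rw [hfac _ one_lt_two, if_pos rfl, taylorPart_eikonalFactor hF hg, Sum.swap_swap]
    have hsign := congrArg (C (σ := Var n)) (varWeight_mul_sign hneg hpos v)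
    simp only [C_mul, map_ofNat] at hsign ⊢
    set A := pderiv (zVar v) (taylorPart (wirtingerBasis n) (2 + 1) F)
    set B := pderiv (zVar v) (taylorPart (wirtingerBasis n) (2 + 1) (g ∘ Prod.fst))
    set d : MvPolynomial (Var n) ℂ := X (zVar v) - X (wVar v)
    linear_combination -2 * d * A * hsign - 2 * C (varWeight q lam v : ℂ) * d * B * C_I_mul_C_I
  refine sub_eq_zero.1 ((mul_eq_zero.1 heikonal₃).resolve_left ?_)
  simp

end EikonalEquation

section Remainder

open Finset MvPolynomial
open scoped ContDiff

variable {n q : ℕ} {lam : Fin n → ℝ} {φ : Cn n → ℝ} (hφ : ContDiff ℝ ∞ (cplx φ))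

include hφ

theorem transport_cubicPhase :
    transport (|varWeight q lam ·|) zVar wVar (cubicPhase q lam φ) =
      C I * transport (varWeight q lam) zVar wVar
        (taylorPart (wirtingerBasis n) 3 (cplx φ ∘ Prod.fst)) := by
  rw [cubicPhase, C_mul', C_mul', Derivation.map_smul, taylorPart_three_comp_fst hφ]
  exact congrArg (I • ·) <| derivation_transportSolution
    (fun a b c => by rw [Dv_comm (contDiff_Dv hφ c)]) (fun a b c => by rw [Dv_comm hφ])
    (transport_X_apply_left zVar_injective) (transport_X_apply_right zVar_ne_wVar)
    (transport_X_apply_left zVar_injective)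

theorem isBigO_sub_E5_sub_polyFun (hneg : ∀ j : Fin n, (j : ℕ) < q → lam j < 0)
    (hpos : ∀ j : Fin n, q ≤ (j : ℕ) → 0 < lam j) {F : Cn n × Cn n → ℂ} (hF : ContDiff ℝ ∞ F)
    (hF₂ : (F - polyFun (wirtingerBasis n) (quadraticPhase lam)) =O[nhds 0] fun p => ‖p‖ ^ 3) :
    (fun p => F p - E5 q lam φ p.1 p.2 - polyFun (wirtingerBasis n)
      (taylorPart (wirtingerBasis n) 3 F - cubicPhase q lam φ) p) =O[nhds 0]
      fun p => ‖p‖ ^ 4 := by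
  have hF_lt {j} := taylorPart_eq_of_isBigO_sub_polyFun (wirtingerBasis n) hF
    (quadraticPhase_isHomogeneous lam) (j := j) hF₂
  have htaylor : ∑ j ∈ range 4, taylorPart (wirtingerBasis n) j F =
      quadraticPhase lam + taylorPart (wirtingerBasis n) 3 F := by
    simp [sum_range_succ, hF_lt]
  refine (isBigO_sub_polyFun_sum_taylorPart (wirtingerBasis n) hF 4).congr_left fun p => ?_
  rw [htaylor, E5_eq_polyFun hneg hpos hφ, Pi.sub_apply, sub_sub, ← Pi.add_apply, ← polyFun_add]
  congr 2
  ring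

end Remainder

open scoped ContDiff in
theorem statement5_general (n q : ℕ) (lam : Fin n → ℝ)
    (hneg : ∀ j : Fin n, (j : ℕ) < q → lam j < 0)
    (hpos : ∀ j : Fin n, q ≤ (j : ℕ) → 0 < lam j)
    (φ : Cn n → ℝ) (hφ : PhiOK lam φ)
    (ψ : Cn n → Cn n → ℂ) (hψ : ContDiff ℝ ∞ fun p : Cn n × Cn n => ψ p.1 p.2)
    (heikonal : ∀ m : ℕ, iteratedFDeriv ℝ m
      (fun p : Cn n × Cn n => ∑ j, (I * wdb j (fun x => ψ x p.2) p.1 + wdb j (cplx φ) p.1) *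
        (-I * wd j (fun x => ψ x p.2) p.1 + wd j (cplx φ) p.1)) 0 = 0)
    (hquadratic : (fun p : Cn n × Cn n => ψ p.1 p.2 -
        (I * ∑ j, ((|lam j| * normSq (p.1 j - p.2 j) : ℝ) : ℂ) +
          I * ∑ j, (lam j : ℂ) *
            ((starRingEnd ℂ) (p.1 j) * p.2 j - (starRingEnd ℂ) (p.2 j) * p.1 j)))
      =O[nhds 0] fun p => ‖p‖ ^ 3) :
    ∃ R : MvPolynomial (Var n) ℂ,
      R.IsHomogeneous 3 ∧
      (∀ m ∈ R.support, ∀ j : Fin n,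
        (q ≤ (j : ℕ) → m (zbV j) = 0) ∧ ((j : ℕ) < q → m (zV j) = 0)) ∧
      ((fun p : Cn n × Cn n =>
          ψ p.1 p.2 - E5 q lam φ p.1 p.2 - MvPolynomial.eval (evalVars p.1 p.2) R)
        =O[nhds 0] fun p => ‖p‖ ^ 4) := by
  have hcplx : ContDiff ℝ ∞ (cplx φ) := ofRealCLM.contDiff.comp hφ.1
  have hpoly : ((fun p : Cn n × Cn n => ψ p.1 p.2) -
      polyFun (wirtingerBasis n) (quadraticPhase lam)) =O[nhds 0] fun p => ‖p‖ ^ 3 :=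
    hquadratic.congr_left fun p => by rw [Pi.sub_apply, polyFun_quadraticPhase]
  have heik : ∀ m, iteratedFDeriv ℝ m (eikonal (fun p => ψ p.1 p.2) (cplx φ)) 0 = 0 := by
    rw [funext (eikonal_apply (hψ.differentiable (by simp)) (hcplx.differentiable (by simp)))]
    exact heikonal
  refine ⟨taylorPart (wirtingerBasis n) 3 (fun p => ψ p.1 p.2) - cubicPhase q lam φ,
    (taylorPart_isHomogeneous _ _ _).sub (cubicPhase_isHomogeneous _ _ _), fun m hm j => ?_, ?_⟩
  · have htransport : transport (|varWeight q lam ·|) zVar wVar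
        (taylorPart (wirtingerBasis n) 3 (fun p => ψ p.1 p.2) - cubicPhase q lam φ) = 0 := by
      rw [map_sub, transport_cubicPhase hcplx, sub_eq_zero]
      exact transport_taylorPart_three_of_eikonal hneg hpos hψ hcplx hpoly
        (cplx_comp_fst_sub_quadraticWeight_isBigO hφ) heik
    have hvar : ∀ v, varWeight q lam v ≠ 0 → m (zVar v) = 0 := fun v hv =>
      apply_eq_zero_of_transport_eq_zero zVar_ne_wVar (fun _ => abs_nonneg _) htransport hm
        (abs_ne_zero.2 hv)
    exact ⟨fun hj => hvar (.inl j) (by simp [varWeight_inl hpos, hj, (hpos j hj).ne']),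
      fun hj => hvar (.inr j) (by simp [varWeight_inr hneg, hj, (hneg j hj).ne])⟩
  · simpa only [polyFun_wirtingerBasis] using isBigO_sub_E5_sub_polyFun hcplx hneg hpos hψ hpoly

/-- there is a homogeneous polynomial `R` of degree 3 in
`z, z̄, w, w̄`, each of whose monomials satisfies `(α'',β') = (0,0)`, with
`ψ(z,w) − E(z,w) − R(z,w) = O(|(z,w)|⁴)` at `(0,0)`. -/
theorem statement5 (n q : ℕ) (hn : 1 ≤ n) (hq : q ≤ n) (lam : Fin n → ℝ)
    (hneg : ∀ j : Fin n, (j : ℕ) < q → lam j < 0)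
    (hpos : ∀ j : Fin n, q ≤ (j : ℕ) → 0 < lam j)
    (φ : Cn n → ℝ) (hφ : PhiOK lam φ)
    (ψ : Cn n → Cn n → ℂ) (hψ : Admissible lam φ ψ) :
    ∃ R : MvPolynomial (Var n) ℂ,
      R.IsHomogeneous 3 ∧
      (∀ m ∈ R.support, ∀ j : Fin n,
        (q ≤ (j : ℕ) → m (zbV j) = 0) ∧ ((j : ℕ) < q → m (zV j) = 0)) ∧
      ((fun p : Cn n × Cn n =>
          ψ p.1 p.2 - E5 q lam φ p.1 p.2 - MvPolynomial.eval (evalVars p.1 p.2) R)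
        =O[nhds 0] fun p => ‖p‖ ^ 4) := by
  obtain ⟨hsmooth, -, -, -, -, -, -, -, heikonal, hquadratic⟩ := hψ
  exact statement5_general n q lam hneg hpos φ hφ ψ hsmooth (heikonal · 0) hquadratic
end
end

section
/- For all q+1 ≤ j ≤ n and 1 ≤ k ≤ q, the fourth Wirtinger derivative of ψ in the z-variables satisfies ∂^4ψ/∂z̄_j∂z_j∂z̄_k∂z_k(0,0) = Σ_{t=1}^q [ 2i|λ_j|/((|λ_j|+|λ_k|)(|λ_t|+|λ_j|)) |∂^3φ/∂z̄_t∂z_j∂z_k(0)|^2 + 2i|λ_t||λ_k||λ_j|/((|λ_j|+|λ_k|)(|λ_t|+|λ_k|+|λ_j|)^2) · (1/(|λ_j|+|λ_t|) + 1/(|λ_j|+|λ_k|)) |∂^3φ/∂z̄_t∂z_j∂z̄_k(0)|^2 + 2i|λ_j|/((|λ_j|+|λ_t|)(|λ_j|+|λ_k|)) (∂^3φ/∂z_t∂z̄_j∂z_j(0))(∂^3φ/∂z̄_t∂z̄_k∂z_k(0)) ] + Σ_{t=q+1}^n [ 2i|λ_k|/((|λ_j|+|λ_k|)(|λ_t|+|λ_k|))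 |∂^3φ/∂z̄_t∂z_j∂z_k(0)|^2 + 2i|λ_t||λ_k||λ_j|/((|λ_j|+|λ_k|)(|λ_t|+|λ_k|+|λ_j|)^2) · (1/(|λ_j|+|λ_k|) + 1/(|λ_t|+|λ_k|)) |∂^3φ/∂z̄_t∂z̄_j∂z_k(0)|^2 + 2i|λ_k|/((|λ_k|+|λ_t|)(|λ_j|+|λ_k|)) (∂^3φ/∂z_t∂z̄_j∂z_j(0))(∂^3φ/∂z̄_t∂z̄_k∂z_k(0)) ] + i (λ_j+λ_k)/(|λ_j|+|λ_k|) ∂^4φ/∂z̄_j∂z_j∂z̄_k∂z_k(0), where all derivatives of ψ are taken in the z-variables (w held fixed) and evaluated at (z,w) = (0,0). -/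
open Complex Asymptotics

attribute [local instance] Classical.propDecidable

noncomputable section

/-!
Condition (d) says that `∑ₜ p_t̄ p_t` is flat on the diagonal, where `p_x = ∂_xψ ∓ i ∂_xφ`. Each
`p_x` vanishes on the diagonal, and at the origin its derivative in `z` along `x̄` is `2i|λ|` if `x`
is `z_t` with `λ_t > 0` or `z̄_t` with `λ_t < 0`, while all other first derivatives vanish, those
along the diagonal included. By the Leibniz rule, differentiating the equation three times at the
origin, in arbitrary directions, therefore multiplies a third derivative of `ψ` by the sum of the
coefficients of its three directions. This determines every third derivative for which that sum is
nonzero; the only third derivatives in `z` it misses are recovered from `ψ(z,w) = -conj ψ(w,z)`,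
which turns them into derivatives in `w`, that is, differences of derivatives along the diagonal
and in `z`. The fourth derivative of the equation along `z̄_j, z_j, z̄_k, z_k` then has the
coefficient `2(|λ_j| + |λ_k|)` at the required fourth derivative of `ψ`, and the products of second
derivatives of the `p_x` give the sum over `t`.
-/

open scoped ContDiff Topology

section SecondDerivative

variable {E F : Type*} [NormedAddCommGroup E] [NormedSpace ℝ E] [NormedAddCommGroup F]

lemma isLittleO_comp_add_smul {f : E → F} {x : E} {m : ℕ}
    (h : f =o[𝓝 x] fun y => ‖y - x‖ ^ m) (v : E) :
    (fun t : ℝ => f (x + t • v)) =o[𝓝[>] 0] fun t => t ^ m := by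
  have ht : Filter.Tendsto (fun t : ℝ => x + t • v) (𝓝[>] 0) (𝓝 x) := by
    have : Continuous fun t : ℝ => x + t • v := by fun_prop
    simpa using (this.tendsto 0).mono_left nhdsWithin_le_nhds
  refine (h.comp_tendsto ht).trans_isBigO (.of_bound (‖v‖ ^ m) (.of_forall fun t => ?_))
  simp [norm_smul, mul_pow, mul_comm]

lemma fderiv_fderiv_eq_zero_of_isLittleO [NormedSpace ℝ F] {f : E → F} {x : E} (hf : ContDiff ℝ 2 f)
    (h : f =o[𝓝 x] fun y => ‖y - x‖ ^ 2) : fderiv ℝ (fderiv ℝ f) x = 0 := by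
  ext v w
  have hf' : Differentiable ℝ (fderiv ℝ f) :=
    (hf.fderiv_right (m := 1) (by norm_num)).differentiable one_ne_zero
  -- The second difference of `f` along `v` and `w` is `t² f''(v, w) + o(t²)`.
  have hdiff := convex_univ.isLittleO_alternate_sum_square
    (fun y _ => (hf.differentiable two_ne_zero y).hasFDerivAt) (Set.mem_univ x)
    (hf' x).hasFDerivAt.hasFDerivWithinAt (v := v) (w := w) (by simp) (by simp)
  have hquad : (fun t : ℝ => t ^ 2 • fderiv ℝ (fderiv ℝ f) x v w) =o[𝓝[>] 0] fun t => t ^ 2 := by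
    have hsum := ((((isLittleO_comp_add_smul h (2 • v + 2 • w)).add
      (isLittleO_comp_add_smul h (v + w))).sub (isLittleO_comp_add_smul h (2 • v + w))).sub
      (isLittleO_comp_add_smul h (v + 2 • w))).sub hdiff
    exact hsum.congr_left fun t => sub_sub_cancel _ _
  have hconst : (fun _ : ℝ => fderiv ℝ (fderiv ℝ f) x v w) =o[𝓝[>] 0] fun _ => (1 : ℝ) := by
    have := (isBigO_refl (fun t : ℝ => (t ^ 2)⁻¹) (𝓝[>] 0)).smul_isLittleO hquad
    refine this.congr' ?_ ?_ <;> filter_upwards [self_mem_nhdsWithin] with t (ht : 0 < t)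
    · rw [smul_smul, inv_mul_cancel₀ (by positivity), one_smul]
    · rw [smul_eq_mul, inv_mul_cancel₀ (by positivity)]
  simpa [isLittleO_const_const_iff] using hconst

end SecondDerivative

section SmoothFunctions

/-- The algebra of smooth complex-valued functions on a real normed space, closed under
complex conjugation, on which the Wirtinger operators act as derivations. -/
def smoothFunctions (E : Type*) [NormedAddCommGroup E] [NormedSpace ℝ E] :
    StarSubalgebra ℂ (E → ℂ) where
  carrier := {f | ContDiff ℝ ∞ f}
  mul_mem' {f g} (hf : ContDiff ℝ ∞ f) (hg : ContDiff ℝ ∞ g) := hf.mul hg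
  add_mem' {f g} (hf : ContDiff ℝ ∞ f) (hg : ContDiff ℝ ∞ g) := hf.add hg
  algebraMap_mem' c := (contDiff_const : ContDiff ℝ ∞ fun _ : E => c)
  star_mem' {f} (hf : ContDiff ℝ ∞ f) := conjCLE.contDiff.comp hf

variable {E E' : Type*} [NormedAddCommGroup E] [NormedSpace ℝ E]
  [NormedAddCommGroup E'] [NormedSpace ℝ E']

lemma contDiff_smoothFunctions (f : smoothFunctions E) : ContDiff ℝ ∞ (f : E → ℂ) := f.2

lemma differentiable_smoothFunctions (f : smoothFunctions E) : Differentiable ℝ (f : E → ℂ) :=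
  (contDiff_smoothFunctions f).differentiable (by simp)

/-- Evaluation at a point, as a homomorphism of algebras. -/
def evalAt (p : E) : smoothFunctions E →ₐ[ℂ] ℂ :=
  (Pi.evalAlgHom ℂ (fun _ : E => ℂ) p).comp (smoothFunctions E).toSubalgebra.val

lemma evalAt_apply (p : E) (f : smoothFunctions E) : evalAt p f = (f : E → ℂ) p := rfl

lemma evalAt_star (p : E) (f : smoothFunctions E) : evalAt p (star f) = star (evalAt p f) := rfl

lemma smoothFunctions_ext {f g : smoothFunctions E} (h : ∀ p, evalAt p f = evalAt p g) : f = g :=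
  Subtype.ext (funext h)

/-- Composition with a linear map, as a homomorphism of algebras. -/
def pullback (L : E →L[ℝ] E') : smoothFunctions E' →ₐ[ℂ] smoothFunctions E where
  toFun f := ⟨fun p => (f : E' → ℂ) (L p), (contDiff_smoothFunctions f).comp L.contDiff⟩
  map_one' := rfl
  map_mul' _ _ := rfl
  map_zero' := rfl
  map_add' _ _ := rfl
  commutes' _ := rfl

lemma evalAt_pullback (L : E →L[ℝ] E') (p : E) (f : smoothFunctions E') :
    evalAt p (pullback L f) = evalAt (L p) f := rfl

/-- The derivative along a constant vector field, as a derivation. -/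
def derivAlong (v : E) : Derivation ℂ (smoothFunctions E) (smoothFunctions E) :=
  Derivation.mk'
    { toFun f := ⟨fun p => fderiv ℝ (f : E → ℂ) p v,
        ((contDiff_smoothFunctions f).fderiv_right (m := ∞) (by simp)).clm_apply contDiff_const⟩
      map_add' f g := smoothFunctions_ext fun p => congrArg (· v)
        (fderiv_add (differentiable_smoothFunctions f p) (differentiable_smoothFunctions g p))
      map_smul' c f := smoothFunctions_ext fun p => congrArg (· v)
        (fderiv_const_smul (differentiable_smoothFunctions f p) c) }
    fun f g => smoothFunctions_ext fun p => congrArg (· v)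
      (fderiv_mul (differentiable_smoothFunctions f p) (differentiable_smoothFunctions g p))

lemma evalAt_derivAlong (v p : E) (f : smoothFunctions E) :
    evalAt p (derivAlong v f) = fderiv ℝ (f : E → ℂ) p v := rfl

lemma derivAlong_add (v w : E) : derivAlong (v + w) = derivAlong v + derivAlong w := by
  ext1 f
  exact smoothFunctions_ext fun p => map_add (fderiv ℝ (f : E → ℂ) p) v w

lemma evalAt_derivAlong_derivAlong (v w p : E) (f : smoothFunctions E) :
    evalAt p (derivAlong v (derivAlong w f)) = fderiv ℝ (fderiv ℝ (f : E → ℂ)) p v w := by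
  have hd : DifferentiableAt ℝ (fderiv ℝ (f : E → ℂ)) p :=
    ((contDiff_smoothFunctions f).fderiv_right (m := ∞) (by simp)).differentiable (by simp) p
  change fderiv ℝ (fun p => fderiv ℝ (f : E → ℂ) p w) p v = _
  simp [fderiv_clm_apply hd (differentiableAt_const w)]

lemma derivAlong_comm (v w : E) (f : smoothFunctions E) :
    derivAlong v (derivAlong w f) = derivAlong w (derivAlong v f) := by
  refine smoothFunctions_ext fun p => ?_
  have hsymm : IsSymmSndFDerivAt ℝ (f : E → ℂ) p :=
    (contDiff_smoothFunctions f).contDiffAt.isSymmSndFDerivAt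
      (by simp [minSmoothness_of_isRCLikeNormedField, ENat.LEInfty.out])
  rw [evalAt_derivAlong_derivAlong, evalAt_derivAlong_derivAlong, hsymm.eq]

lemma derivAlong_star (v : E) (f : smoothFunctions E) :
    derivAlong v (star f) = star (derivAlong v f) := by
  refine smoothFunctions_ext fun p => ?_
  have := ((conjCLE : ℂ →L[ℝ] ℂ).hasFDerivAt.comp p
    (differentiable_smoothFunctions f p).hasFDerivAt).fderiv
  exact congrArg (· v) this

lemma derivAlong_pullback (L : E →L[ℝ] E') (v : E) (f : smoothFunctions E') :
    derivAlong v (pullback L f) = pullback L (derivAlong (L v) f) := by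
  refine smoothFunctions_ext fun p => ?_
  have := ((differentiable_smoothFunctions f (L p)).hasFDerivAt.comp p L.hasFDerivAt).fderiv
  exact congrArg (· v) this

/-- The smooth functions all of whose derivatives vanish at `p`. -/
def flatFunctions (p : E) : Submodule ℂ (smoothFunctions E) where
  carrier := {f | ∀ m, iteratedFDeriv ℝ m (f : E → ℂ) p = 0}
  zero_mem' m := congrFun (iteratedFDeriv_fun_zero (𝕜 := ℝ) (E := E) (F := ℂ) (n := m)) p
  add_mem' {f g} hf hg m := by
    have := iteratedFDeriv_add_apply (x := p) (i := m)
      ((contDiff_smoothFunctions f).of_le (mod_cast le_top)).contDiffAt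
      ((contDiff_smoothFunctions g).of_le (mod_cast le_top)).contDiffAt
    exact this.trans (by rw [hf m, hg m, add_zero])
  smul_mem' c f hf m := by
    have := iteratedFDeriv_const_smul_apply (x := p) (i := m) (a := c)
      ((contDiff_smoothFunctions f).of_le (mod_cast le_top)).contDiffAt
    exact this.trans (by rw [hf m, smul_zero])

lemma evalAt_eq_zero_of_mem_flatFunctions {p : E} {f : smoothFunctions E}
    (hf : f ∈ flatFunctions p) : evalAt p f = 0 := by
  rw [evalAt_apply, ← iteratedFDeriv_zero_apply (𝕜 := ℝ) (f := (f : E → ℂ)) (0 : Fin 0 → E), hf 0]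
  rfl

lemma derivAlong_mem_flatFunctions {p : E} {f : smoothFunctions E} (hf : f ∈ flatFunctions p)
    (v : E) : derivAlong v f ∈ flatFunctions p := by
  intro m
  have hfderiv : iteratedFDeriv ℝ m (fderiv ℝ (f : E → ℂ)) p = 0 := by
    have := hf (m + 1)
    rwa [iteratedFDeriv_succ_eq_comp_right, Function.comp_apply,
      LinearIsometryEquiv.map_eq_zero_iff] at this
  have := (ContinuousLinearMap.apply ℝ ℂ v).iteratedFDeriv_comp_left (x := p) (i := m)
    ((contDiff_smoothFunctions f).fderiv_right (m := m) (mod_cast le_top)).contDiffAt le_rfl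
  rw [hfderiv] at this
  exact this.trans (by ext; simp)

end SmoothFunctions

section Wirtinger

variable {n : ℕ} {E E' : Type*} [NormedAddCommGroup E] [NormedSpace ℝ E]
  [NormedAddCommGroup E'] [NormedSpace ℝ E']

/-- The index of a Wirtinger operator: `(j, false)` stands for `z_j` and `(j, true)` for `z̄_j`. -/
abbrev WirtingerIndex (n : ℕ) := Fin n × Bool

/-- Conjugation of Wirtinger indices, exchanging `z_j` and `z̄_j`. -/
def bar (x : WirtingerIndex n) : WirtingerIndex n := (x.1, !x.2)

/-- The sign of `i` in a Wirtinger operator: `1` for `∂/∂z̄_j` and `-1` for `∂/∂z_j`. -/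
def barSign (x : WirtingerIndex n) : ℝ := if x.2 then 1 else -1

lemma bar_bar (x : WirtingerIndex n) : bar (bar x) = x := by simp [bar]

lemma barSign_bar (x : WirtingerIndex n) : barSign (bar x) = -barSign x := by
  rcases x with ⟨_, _ | _⟩ <;> simp [bar, barSign]

lemma barSign_mul_self (x : WirtingerIndex n) : barSign x * barSign x = 1 := by
  rcases x with ⟨_, _ | _⟩ <;> simp [barSign]

/-- The Wirtinger operator of index `x`, in the directions of a copy of `ℂⁿ` mapped into `E` by
`L`. For `E = ℂⁿ × ℂⁿ` the inclusion of the first factor differentiates in `z` with `w` fixed,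
and the diagonal map moves `z` and `w` together. -/
def wirtinger (L : Cn n →L[ℝ] E) (x : WirtingerIndex n) :
    Derivation ℂ (smoothFunctions E) (smoothFunctions E) :=
  (1 / 2 : ℂ) • (derivAlong (L (Pi.single x.1 1)) +
    (barSign x * I) • derivAlong (L (Pi.single x.1 I)))

lemma wirtinger_apply (L : Cn n →L[ℝ] E) (x : WirtingerIndex n) (f : smoothFunctions E) :
    wirtinger L x f = (1 / 2 : ℂ) • (derivAlong (L (Pi.single x.1 1)) f +
      (barSign x * I) • derivAlong (L (Pi.single x.1 I)) f) := rfl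

lemma wirtinger_add (L M : Cn n →L[ℝ] E) (x : WirtingerIndex n) :
    wirtinger (L + M) x = wirtinger L x + wirtinger M x := by
  simp only [wirtinger, _root_.add_apply, derivAlong_add]
  module

lemma wirtinger_comm (L M : Cn n →L[ℝ] E) (x y : WirtingerIndex n) (f : smoothFunctions E) :
    wirtinger L x (wirtinger M y f) = wirtinger M y (wirtinger L x f) := by
  simp only [wirtinger_apply, Derivation.map_smul, map_add, derivAlong_comm (L _) (M _)]
  module

lemma wirtinger_star (L : Cn n →L[ℝ] E) (x : WirtingerIndex n) (f : smoothFunctions E) :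
    wirtinger L x (star f) = star (wirtinger L (bar x) f) := by
  simp only [wirtinger_apply, derivAlong_star, star_smul, star_add, barSign_bar]
  simp [bar]

lemma wirtinger_pullback (L : Cn n →L[ℝ] E) (M : E →L[ℝ] E') (x : WirtingerIndex n)
    (f : smoothFunctions E') :
    wirtinger L x (pullback M f) = pullback M (wirtinger (M ∘L L) x f) := by
  simp only [wirtinger_apply, derivAlong_pullback, map_smul, map_add,
    ContinuousLinearMap.comp_apply]

lemma wirtinger_mem_flatFunctions {p : E} {f : smoothFunctions E} (hf : f ∈ flatFunctions p)
    (L : Cn n →L[ℝ] E) (x : WirtingerIndex n) : wirtinger L x f ∈ flatFunctions p :=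
  Submodule.smul_mem _ _ <| Submodule.add_mem _ (derivAlong_mem_flatFunctions hf _) <|
    Submodule.smul_mem _ _ (derivAlong_mem_flatFunctions hf _)

lemma evalAt_wirtinger_wirtinger_eq_zero {p : E} {f : smoothFunctions E}
    (hf : fderiv ℝ (fderiv ℝ (f : E → ℂ)) p = 0) (L M : Cn n →L[ℝ] E)
    (x y : WirtingerIndex n) : evalAt p (wirtinger L x (wirtinger M y f)) = 0 := by
  simp [wirtinger_apply, evalAt_derivAlong_derivAlong, hf]

end Wirtinger

section Hessian

variable {n : ℕ}

/-- The Wirtinger operator of index `x` on `ℂⁿ` itself. -/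
abbrev wirtingerCn (x : WirtingerIndex n) :=
  wirtinger (ContinuousLinearMap.id ℝ (Cn n)) x

/-- The coordinate function `z_t` on `ℂⁿ`. -/
def coordinate (t : Fin n) : smoothFunctions (Cn n) :=
  ⟨fun z => z t, (contDiff_apply ℝ ℂ t : ContDiff ℝ ∞ fun z : Cn n => z t)⟩

lemma wirtingerCn_coordinate (x : WirtingerIndex n) (t : Fin n) :
    wirtingerCn x (coordinate t) = algebraMap ℂ _ (if x = (t, false) then 1 else 0) := by
  have hderiv (v : Cn n) : derivAlong v (coordinate t) = algebraMap ℂ _ (v t) :=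
    smoothFunctions_ext fun p => congrArg (· v)
      (ContinuousLinearMap.proj (R := ℝ) (φ := fun _ : Fin n => ℂ) t).fderiv
  refine smoothFunctions_ext fun p => ?_
  simp only [wirtinger_apply, hderiv, map_smul, map_add, AlgHom.commutes, Algebra.algebraMap_self,
    RingHom.id_apply, smul_eq_mul]
  obtain ⟨s, b⟩ := x
  obtain rfl | hst := eq_or_ne s t
  · cases b <;> norm_num [barSign, mul_assoc]
  · simp [hst, Ne.symm hst]

lemma evalAt_wirtingerCn_wirtingerCn_coordinate_mul_star (x y : WirtingerIndex n) (t : Fin n)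
    (p : Cn n) :
    evalAt p (wirtingerCn y (wirtingerCn x (coordinate t * star (coordinate t)))) =
      if y = bar x ∧ x.1 = t then 1 else 0 := by
  simp only [Derivation.leibniz, wirtinger_star, wirtingerCn_coordinate, map_add, smul_eq_mul,
    map_mul, AlgHom.commutes, Derivation.map_algebraMap, evalAt_star]
  rcases x with ⟨s, _ | _⟩ <;> rcases y with ⟨r, _ | _⟩ <;> obtain rfl | hst := eq_or_ne s t <;>
    simp [bar, Prod.ext_iff, *]

lemma evalAt_wirtingerCn_wirtingerCn_of_isBigO {f : smoothFunctions (Cn n)} {c : Fin n → ℂ}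
    (hf : (fun z : Cn n => (f : Cn n → ℂ) z - ∑ t, c t * normSq (z t)) =O[𝓝 0] fun z => ‖z‖ ^ 3)
    (x y : WirtingerIndex n) :
    evalAt 0 (wirtingerCn y (wirtingerCn x f)) = if y = bar x then c x.1 else 0 := by
  let model : smoothFunctions (Cn n) := ∑ t, c t • (coordinate t * star (coordinate t))
  have hlittle :
      ((f - model : smoothFunctions (Cn n)) : Cn n → ℂ) =o[𝓝 0] fun z => ‖z - 0‖ ^ 2 := by
    have hval (z : Cn n) : evalAt z (f - model) = evalAt z f - ∑ t, c t * normSq (z t) := by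
      simp [model, evalAt_apply, coordinate, mul_conj]
    refine (hf.congr_left fun z => (hval z).symm).trans_isLittleO ?_
    simpa using isLittleO_norm_pow_norm_pow (E' := Cn n) (show 2 < 3 by norm_num)
  have hzero := evalAt_wirtinger_wirtinger_eq_zero
    (fderiv_fderiv_eq_zero_of_isLittleO
      ((contDiff_smoothFunctions _).of_le (by simp [ENat.LEInfty.out])) hlittle)
    (.id ℝ _) (.id ℝ _) y x
  rw [map_sub, map_sub, map_sub, sub_eq_zero] at hzero
  rw [hzero]
  simp only [model, map_sum, Derivation.map_smul, map_smul, smul_eq_mul,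
    evalAt_wirtingerCn_wirtingerCn_coordinate_mul_star]
  split_ifs with hyx <;> simp [hyx]

end Hessian

section Leibniz

variable {A : Type*} [CommRing A] [Algebra ℂ A]

lemma leibniz_three_of_eq_zero (e : A →ₐ[ℂ] ℂ) (D₁ D₂ D₃ : Derivation ℂ A A) {p q : A}
    (hp : e p = 0) (hq : e q = 0) :
    e (D₁ (D₂ (D₃ (p * q)))) =
      (e (D₁ p) * e (D₂ (D₃ q)) + e (D₁ q) * e (D₂ (D₃ p))) +
      (e (D₂ p) * e (D₁ (D₃ q)) + e (D₂ q) * e (D₁ (D₃ p))) +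
      (e (D₃ p) * e (D₁ (D₂ q)) + e (D₃ q) * e (D₁ (D₂ p))) := by
  simp only [Derivation.leibniz, map_add, smul_eq_mul, map_mul, hp, hq]
  ring

lemma leibniz_four_of_eq_zero (e : A →ₐ[ℂ] ℂ) (D₁ D₂ D₃ D₄ : Derivation ℂ A A) {p q : A}
    (hp : e p = 0) (hq : e q = 0) :
    e (D₁ (D₂ (D₃ (D₄ (p * q))))) =
      (e (D₁ p) * e (D₂ (D₃ (D₄ q))) + e (D₁ q) * e (D₂ (D₃ (D₄ p)))) +
      (e (D₂ p) * e (D₁ (D₃ (D₄ q))) + e (D₂ q) * e (D₁ (D₃ (D₄ p)))) +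
      (e (D₃ p) * e (D₁ (D₂ (D₄ q))) + e (D₃ q) * e (D₁ (D₂ (D₄ p)))) +
      (e (D₄ p) * e (D₁ (D₂ (D₃ q))) + e (D₄ q) * e (D₁ (D₂ (D₃ p)))) +
      ((e (D₁ (D₂ p)) * e (D₃ (D₄ q)) + e (D₁ (D₂ q)) * e (D₃ (D₄ p))) +
      (e (D₁ (D₃ p)) * e (D₂ (D₄ q)) + e (D₁ (D₃ q)) * e (D₂ (D₄ p))) +
      (e (D₁ (D₄ p)) * e (D₂ (D₃ q)) + e (D₁ (D₄ q)) * e (D₂ (D₃ p)))) := by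
  simp only [Derivation.leibniz, map_add, smul_eq_mul, map_mul, hp, hq]
  ring

end Leibniz

section PhaseJet

variable {n : ℕ}

/-- The directions in `ℂⁿ × ℂⁿ` in which phase functions are differentiated: only `z` moves
(`true`), or `z` and `w` move together (`false`). -/
def direction : Bool → (Cn n →L[ℝ] Cn n × Cn n)
  | true => .inl ℝ _ _
  | false => .prod (.id ℝ _) (.id ℝ _)

/-- The Wirtinger operator of index `x` on `ℂⁿ × ℂⁿ` in one of the two directions. -/
abbrev wirtingerAlong (l : Bool) (x : WirtingerIndex n) := wirtinger (direction l) x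

/-- The defect `∂_xψ ∓ i ∂_xφ` of a phase function; up to the constants `±i` these are the factors
of the eikonal equation (d). -/
def defect (Φ : smoothFunctions (Cn n)) (Ψ : smoothFunctions (Cn n × Cn n))
    (x : WirtingerIndex n) : smoothFunctions (Cn n × Cn n) :=
  wirtingerAlong true x Ψ - (I * barSign x) • pullback (.fst ℝ _ _) (wirtingerCn x Φ)

/-- The properties of the phase function `Ψ` and the weight `Φ` that determine the mixed fourth
derivatives of `Ψ` at the origin: the vanishing conditions on the diagonal, the hermitian symmetry,
the eikonal equation to infinite order at the origin, and the Hessians there. -/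
structure IsPhaseJet (lam : Fin n → ℝ) (Φ : smoothFunctions (Cn n))
    (Ψ : smoothFunctions (Cn n × Cn n)) : Prop where
  star_weight : star Φ = Φ
  diagonal : pullback (direction false) Ψ = 0
  hermitian : Ψ = -star (pullback (.prod (.snd ℝ _ _) (.fst ℝ _ _)) Ψ)
  defect_diagonal : ∀ x, pullback (direction false) (defect Φ Ψ x) = 0
  eikonal : ∑ t, defect Φ Ψ (t, true) * defect Φ Ψ (t, false) ∈ flatFunctions 0
  hessian_weight : ∀ x y, evalAt 0 (wirtingerCn y (wirtingerCn x Φ)) =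
    if y = bar x then (lam x.1 : ℂ) else 0
  hessian_phase : ∀ x y, evalAt 0 (wirtingerAlong true y (wirtingerAlong true x Ψ)) =
    if y = bar x then I * |lam x.1| else 0

/-- The coefficient with which the eikonal equation differentiates in the direction `l` at the
origin: `2|λ_j|` or `0` in the `z` directions, and `0` along the diagonal. -/
def eikonalCoeff (lam : Fin n → ℝ) (l : Bool) (x : WirtingerIndex n) : ℝ :=
  if l then |lam x.1| + barSign x * lam x.1 else 0

/-- The third Wirtinger derivatives at the origin. -/
def thirdDeriv (Φ : smoothFunctions (Cn n)) (x y z : WirtingerIndex n) : ℂ :=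
  evalAt 0 (wirtingerCn x (wirtingerCn y (wirtingerCn z Φ)))

lemma wirtingerCn_comm (x y : WirtingerIndex n) (f : smoothFunctions (Cn n)) :
    wirtingerCn x (wirtingerCn y f) = wirtingerCn y (wirtingerCn x f) :=
  wirtinger_comm _ _ x y f

lemma wirtingerAlong_comm (l m : Bool) (x y : WirtingerIndex n)
    (f : smoothFunctions (Cn n × Cn n)) :
    wirtingerAlong l x (wirtingerAlong m y f) = wirtingerAlong m y (wirtingerAlong l x f) :=
  wirtinger_comm _ _ x y f

lemma wirtinger_inr (x : WirtingerIndex n) (f : smoothFunctions (Cn n × Cn n)) :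
    wirtinger (.inr ℝ (Cn n) (Cn n)) x f = wirtingerAlong false x f - wirtingerAlong true x f := by
  have hdirection : direction false = direction true + .inr ℝ (Cn n) (Cn n) := by
    ext1
    simp [direction]
  rw [wirtingerAlong, hdirection, wirtinger_add, Derivation.add_apply, add_sub_cancel_left]

lemma thirdDeriv_swap_left (Φ : smoothFunctions (Cn n)) (x y z : WirtingerIndex n) :
    thirdDeriv Φ x y z = thirdDeriv Φ y x z := by
  rw [thirdDeriv, wirtingerCn_comm, thirdDeriv]

lemma thirdDeriv_swap_right (Φ : smoothFunctions (Cn n)) (x y z : WirtingerIndex n) :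
    thirdDeriv Φ x y z = thirdDeriv Φ x z y := by
  rw [thirdDeriv, wirtingerCn_comm y z, thirdDeriv]

/-- The fourth Wirtinger derivatives at the origin, in the directions given by `L`. -/
def fourthDeriv {E : Type*} [NormedAddCommGroup E] [NormedSpace ℝ E] (L : Cn n →L[ℝ] E)
    (f : smoothFunctions E) (x₁ x₂ x₃ x₄ : WirtingerIndex n) : ℂ :=
  evalAt 0 (wirtinger L x₁ (wirtinger L x₂ (wirtinger L x₃ (wirtinger L x₄ f))))

/-- The third Wirtinger derivatives at the origin, each in its own direction. -/
def directedThirdDeriv (Ψ : smoothFunctions (Cn n × Cn n)) (l₁ l₂ l₃ : Bool)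
    (x₁ x₂ x₃ : WirtingerIndex n) : ℂ :=
  evalAt 0 (wirtingerAlong l₁ x₁ (wirtingerAlong l₂ x₂ (wirtingerAlong l₃ x₃ Ψ)))

section FourthDeriv

variable {E : Type*} [NormedAddCommGroup E] [NormedSpace ℝ E] (L : Cn n →L[ℝ] E)
  (f : smoothFunctions E) (x₁ x₂ x₃ x₄ : WirtingerIndex n)

lemma fourthDeriv_swap :
    fourthDeriv L f x₂ x₁ x₃ x₄ = fourthDeriv L f x₁ x₂ x₃ x₄ := by
  rw [fourthDeriv, wirtinger_comm, fourthDeriv]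

lemma fourthDeriv_rotate_three :
    fourthDeriv L f x₃ x₁ x₂ x₄ = fourthDeriv L f x₁ x₂ x₃ x₄ := by
  rw [fourthDeriv, wirtinger_comm L L x₃ x₁, wirtinger_comm L L x₃ x₂, fourthDeriv]

lemma fourthDeriv_rotate_four :
    fourthDeriv L f x₄ x₁ x₂ x₃ = fourthDeriv L f x₁ x₂ x₃ x₄ := by
  rw [fourthDeriv, wirtinger_comm L L x₄ x₁, wirtinger_comm L L x₄ x₂, wirtinger_comm L L x₄ x₃,
    fourthDeriv]

end FourthDeriv

lemma wirtingerAlong_pullback_fst (l : Bool) (x : WirtingerIndex n) (f : smoothFunctions (Cn n)) :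
    wirtingerAlong l x (pullback (.fst ℝ _ _) f) = pullback (.fst ℝ _ _) (wirtingerCn x f) := by
  rw [wirtingerAlong, wirtinger_pullback]
  cases l <;> rfl

lemma wirtingerAlong_false_eq_zero {f : smoothFunctions (Cn n × Cn n)}
    (hf : pullback (direction false) f = 0) (x : WirtingerIndex n) :
    pullback (direction false) (wirtingerAlong false x f) = 0 :=
  (wirtinger_pullback (.id ℝ _) (direction false) x f).symm.trans (by rw [hf, map_zero])

/-- The Wirtinger derivatives of order two of the defects at the origin, in the `z` directions. -/
def defectJet (Φ : smoothFunctions (Cn n)) (Ψ : smoothFunctions (Cn n × Cn n))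
    (x y z : WirtingerIndex n) : ℂ :=
  evalAt 0 (wirtingerAlong true y (wirtingerAlong true z (defect Φ Ψ x)))

/-- The sum over the splittings of four derivatives into two pairs distributed over the two
factors `defect (bar T)` and `defect T` of the eikonal equation. -/
def pairingSum (Φ : smoothFunctions (Cn n)) (Ψ : smoothFunctions (Cn n × Cn n))
    (T x₁ x₂ x₃ x₄ : WirtingerIndex n) : ℂ :=
  (defectJet Φ Ψ (bar T) x₁ x₂ * defectJet Φ Ψ T x₃ x₄ +
    defectJet Φ Ψ T x₁ x₂ * defectJet Φ Ψ (bar T) x₃ x₄) +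
  (defectJet Φ Ψ (bar T) x₁ x₃ * defectJet Φ Ψ T x₂ x₄ +
    defectJet Φ Ψ T x₁ x₃ * defectJet Φ Ψ (bar T) x₂ x₄) +
  (defectJet Φ Ψ (bar T) x₁ x₄ * defectJet Φ Ψ T x₂ x₃ +
    defectJet Φ Ψ T x₁ x₄ * defectJet Φ Ψ (bar T) x₂ x₃)

namespace IsPhaseJet

variable {lam : Fin n → ℝ} {Φ : smoothFunctions (Cn n)} {Ψ : smoothFunctions (Cn n × Cn n)}

lemma thirdDeriv_bar (h : IsPhaseJet lam Φ Ψ) (x y z : WirtingerIndex n) :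
    thirdDeriv Φ (bar x) (bar y) (bar z) = star (thirdDeriv Φ x y z) := by
  conv_lhs => rw [← h.star_weight]
  simp only [thirdDeriv, wirtinger_star, bar_bar, evalAt_star]

lemma evalAt_defect (h : IsPhaseJet lam Φ Ψ) (x : WirtingerIndex n) :
    evalAt 0 (defect Φ Ψ x) = 0 := by
  have := congrArg (evalAt 0) (h.defect_diagonal x)
  rwa [evalAt_pullback, map_zero, map_zero] at this

lemma evalAt_wirtingerAlong_defect (h : IsPhaseJet lam Φ Ψ) (l : Bool) (x y : WirtingerIndex n) :
    evalAt 0 (wirtingerAlong l y (defect Φ Ψ x)) =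
      if y = bar x then I * eikonalCoeff lam l y else 0 := by
  cases l with
  | false =>
    have := congrArg (evalAt 0) (wirtingerAlong_false_eq_zero (h.defect_diagonal x) y)
    rw [evalAt_pullback, map_zero, map_zero] at this
    simpa [eikonalCoeff] using this
  | true =>
    rw [defect, map_sub, map_sub, h.hessian_phase, Derivation.map_smul, map_smul,
      wirtingerAlong_pullback_fst, evalAt_pullback, map_zero, h.hessian_weight]
    split_ifs with hyx
    · have hfst : (bar x).1 = x.1 := rfl
      simp only [hyx, eikonalCoeff, barSign_bar, hfst, smul_eq_mul, if_true]
      push_cast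
      ring
    · simp

lemma sum_evalAt_wirtingerAlong_defect_mul (h : IsPhaseJet lam Φ Ψ) (l : Bool)
    (x : WirtingerIndex n) (G : WirtingerIndex n → ℂ) :
    ∑ t, (evalAt 0 (wirtingerAlong l x (defect Φ Ψ (t, true))) * G (t, false) +
      evalAt 0 (wirtingerAlong l x (defect Φ Ψ (t, false))) * G (t, true)) =
      I * eikonalCoeff lam l x * G x := by
  simp only [h.evalAt_wirtingerAlong_defect]
  rcases x with ⟨s, _ | _⟩ <;> simp [bar]

lemma evalAt_wirtingerAlong_two_defect (m₁ m₂ : Bool) (x y₁ y₂ : WirtingerIndex n) :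
    evalAt 0 (wirtingerAlong m₁ y₁ (wirtingerAlong m₂ y₂ (defect Φ Ψ x))) =
      directedThirdDeriv Ψ true m₁ m₂ x y₁ y₂ - I * barSign x * thirdDeriv Φ x y₁ y₂ := by
  rw [defect, map_sub, map_sub, map_sub, Derivation.map_smul, Derivation.map_smul, map_smul,
    wirtingerAlong_pullback_fst, wirtingerAlong_pullback_fst, evalAt_pullback, map_zero,
    smul_eq_mul, thirdDeriv_swap_left, thirdDeriv_swap_right, thirdDeriv, directedThirdDeriv,
    wirtingerAlong_comm true, wirtingerAlong_comm true]

lemma eikonalCoeff_mul_evalAt_defect (l m₁ m₂ : Bool) (x y₁ y₂ : WirtingerIndex n) :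
    eikonalCoeff lam l x *
        evalAt 0 (wirtingerAlong m₁ y₁ (wirtingerAlong m₂ y₂ (defect Φ Ψ x))) =
      eikonalCoeff lam l x *
        (directedThirdDeriv Ψ l m₁ m₂ x y₁ y₂ - I * barSign x * thirdDeriv Φ x y₁ y₂) := by
  cases l
  · simp [eikonalCoeff]
  · rw [evalAt_wirtingerAlong_two_defect]

lemma eikonalCoeff_mul_thirdDeriv_phase (h : IsPhaseJet lam Φ Ψ) (l₁ l₂ l₃ : Bool)
    (x₁ x₂ x₃ : WirtingerIndex n) :
    (eikonalCoeff lam l₁ x₁ + eikonalCoeff lam l₂ x₂ + eikonalCoeff lam l₃ x₃) *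
        directedThirdDeriv Ψ l₁ l₂ l₃ x₁ x₂ x₃ =
      I * (eikonalCoeff lam l₁ x₁ * barSign x₁ + eikonalCoeff lam l₂ x₂ * barSign x₂ +
        eikonalCoeff lam l₃ x₃ * barSign x₃) * thirdDeriv Φ x₁ x₂ x₃ := by
  have heikonal : evalAt 0 (wirtingerAlong l₁ x₁ (wirtingerAlong l₂ x₂ (wirtingerAlong l₃ x₃
      (∑ t, defect Φ Ψ (t, true) * defect Φ Ψ (t, false))))) = 0 :=
    evalAt_eq_zero_of_mem_flatFunctions <| wirtinger_mem_flatFunctions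
      (wirtinger_mem_flatFunctions (wirtinger_mem_flatFunctions h.eikonal _ _) _ _) _ _
  simp only [map_sum,
    leibniz_three_of_eq_zero _ _ _ _ (h.evalAt_defect _) (h.evalAt_defect _)] at heikonal
  rw [Finset.sum_add_distrib, Finset.sum_add_distrib,
    h.sum_evalAt_wirtingerAlong_defect_mul l₁ x₁ fun y =>
      evalAt 0 (wirtingerAlong l₂ x₂ (wirtingerAlong l₃ x₃ (defect Φ Ψ y))),
    h.sum_evalAt_wirtingerAlong_defect_mul l₂ x₂ fun y =>
      evalAt 0 (wirtingerAlong l₁ x₁ (wirtingerAlong l₃ x₃ (defect Φ Ψ y))),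
    h.sum_evalAt_wirtingerAlong_defect_mul l₃ x₃ fun y =>
      evalAt 0 (wirtingerAlong l₁ x₁ (wirtingerAlong l₂ x₂ (defect Φ Ψ y))),
    mul_assoc, mul_assoc, mul_assoc, ← mul_add, ← mul_add, mul_eq_zero, or_iff_right I_ne_zero,
    eikonalCoeff_mul_evalAt_defect, eikonalCoeff_mul_evalAt_defect, eikonalCoeff_mul_evalAt_defect,
    directedThirdDeriv, directedThirdDeriv, directedThirdDeriv, wirtingerAlong_comm l₂ l₁,
    wirtingerAlong_comm l₃ l₁, wirtingerAlong_comm l₃ l₂,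
    thirdDeriv_swap_left Φ x₂ x₁, thirdDeriv_swap_left Φ x₃ x₁,
    thirdDeriv_swap_right Φ x₁ x₃] at heikonal
  rw [directedThirdDeriv]
  linear_combination heikonal

lemma evalAt_wirtingerAlong_three_defect (y x₁ x₂ x₃ : WirtingerIndex n) :
    evalAt 0 (wirtingerAlong true x₁ (wirtingerAlong true x₂ (wirtingerAlong true x₃
      (defect Φ Ψ y)))) =
    fourthDeriv (direction true) Ψ y x₁ x₂ x₃ -
      I * barSign y * fourthDeriv (.id ℝ _) Φ y x₁ x₂ x₃ := by
  rw [fourthDeriv_rotate_four _ _ x₁ x₂ x₃ y, fourthDeriv_rotate_four _ _ x₁ x₂ x₃ y,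
    defect, map_sub, map_sub, map_sub, map_sub, Derivation.map_smul, Derivation.map_smul,
    Derivation.map_smul, map_smul, wirtingerAlong_pullback_fst, wirtingerAlong_pullback_fst,
    wirtingerAlong_pullback_fst, evalAt_pullback, map_zero, smul_eq_mul, fourthDeriv, fourthDeriv]

lemma eikonalCoeff_mul_fourthDeriv_phase (h : IsPhaseJet lam Φ Ψ)
    (x₁ x₂ x₃ x₄ : WirtingerIndex n) :
    I * (eikonalCoeff lam true x₁ + eikonalCoeff lam true x₂ + eikonalCoeff lam true x₃ +
        eikonalCoeff lam true x₄) * fourthDeriv (direction true) Ψ x₁ x₂ x₃ x₄ =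
    -(eikonalCoeff lam true x₁ * barSign x₁ + eikonalCoeff lam true x₂ * barSign x₂ +
        eikonalCoeff lam true x₃ * barSign x₃ + eikonalCoeff lam true x₄ * barSign x₄) *
      fourthDeriv (.id ℝ _) Φ x₁ x₂ x₃ x₄ - ∑ t, pairingSum Φ Ψ (t, false) x₁ x₂ x₃ x₄ := by
  let G (y₁ y₂ y₃ y : WirtingerIndex n) : ℂ := fourthDeriv (direction true) Ψ y y₁ y₂ y₃ -
    I * barSign y * fourthDeriv (.id ℝ _) Φ y y₁ y₂ y₃
  have heikonal : evalAt 0 (wirtingerAlong true x₁ (wirtingerAlong true x₂ (wirtingerAlong true x₃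
      (wirtingerAlong true x₄ (∑ t, defect Φ Ψ (t, true) * defect Φ Ψ (t, false)))))) = 0 :=
    evalAt_eq_zero_of_mem_flatFunctions <| wirtinger_mem_flatFunctions
      (wirtinger_mem_flatFunctions (wirtinger_mem_flatFunctions
        (wirtinger_mem_flatFunctions h.eikonal _ _) _ _) _ _) _ _
  simp only [map_sum, leibniz_four_of_eq_zero _ _ _ _ _ (h.evalAt_defect _) (h.evalAt_defect _),
    evalAt_wirtingerAlong_three_defect] at heikonal
  rw [Finset.sum_add_distrib, Finset.sum_add_distrib, Finset.sum_add_distrib,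
    Finset.sum_add_distrib, h.sum_evalAt_wirtingerAlong_defect_mul true x₁ (G x₂ x₃ x₄),
    h.sum_evalAt_wirtingerAlong_defect_mul true x₂ (G x₁ x₃ x₄),
    h.sum_evalAt_wirtingerAlong_defect_mul true x₃ (G x₁ x₂ x₄),
    h.sum_evalAt_wirtingerAlong_defect_mul true x₄ (G x₁ x₂ x₃)] at heikonal
  simp only [G, fourthDeriv_swap _ _ x₁ x₂, fourthDeriv_rotate_three _ _ x₁ x₂ x₃,
    fourthDeriv_rotate_four _ _ x₁ x₂ x₃ x₄] at heikonal
  change _ + ∑ t, pairingSum Φ Ψ (t, false) x₁ x₂ x₃ x₄ = 0 at heikonal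
  linear_combination heikonal + (eikonalCoeff lam true x₁ * barSign x₁ +
    eikonalCoeff lam true x₂ * barSign x₂ + eikonalCoeff lam true x₃ * barSign x₃ +
    eikonalCoeff lam true x₄ * barSign x₄) * fourthDeriv (.id ℝ _) Φ x₁ x₂ x₃ x₄ * I_sq

lemma directedThirdDeriv_bar (h : IsPhaseJet lam Φ Ψ) (x y z : WirtingerIndex n) :
    directedThirdDeriv Ψ true true true (bar x) (bar y) (bar z) =
      star (directedThirdDeriv Ψ true true true x y z +
        (directedThirdDeriv Ψ true false false x y z +
          directedThirdDeriv Ψ false true false x y z +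
          directedThirdDeriv Ψ false false true x y z) -
        (directedThirdDeriv Ψ true true false x y z + directedThirdDeriv Ψ true false true x y z +
          directedThirdDeriv Ψ false true true x y z)) := by
  have hdiagonal : directedThirdDeriv Ψ false false false x y z = 0 := by
    have := congrArg (evalAt 0) (wirtingerAlong_false_eq_zero (wirtingerAlong_false_eq_zero
      (wirtingerAlong_false_eq_zero h.diagonal z) y) x)
    rwa [evalAt_pullback, map_zero, map_zero] at this
  have hswap : directedThirdDeriv Ψ true true true (bar x) (bar y) (bar z) =
      -star (evalAt 0 (wirtinger (.inr ℝ _ _) x (wirtinger (.inr ℝ _ _) y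
        (wirtinger (.inr ℝ _ _) z Ψ)))) := by
    conv_lhs => rw [h.hermitian]
    simp only [directedThirdDeriv, map_neg, wirtinger_star, bar_bar, wirtinger_pullback,
      evalAt_star, evalAt_pullback, map_zero]
    rfl
  rw [hswap, ← star_neg]
  simp only [wirtinger_inr, map_sub]
  congr 1
  simp only [directedThirdDeriv] at hdiagonal ⊢
  linear_combination -hdiagonal

lemma directedThirdDeriv_eq (h : IsPhaseJet lam Φ Ψ) (l₁ l₂ l₃ : Bool)
    (x₁ x₂ x₃ : WirtingerIndex n)
    (hsum : eikonalCoeff lam l₁ x₁ + eikonalCoeff lam l₂ x₂ + eikonalCoeff lam l₃ x₃ ≠ 0) :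
    directedThirdDeriv Ψ l₁ l₂ l₃ x₁ x₂ x₃ =
      I * ((eikonalCoeff lam l₁ x₁ * barSign x₁ + eikonalCoeff lam l₂ x₂ * barSign x₂ +
        eikonalCoeff lam l₃ x₃ * barSign x₃) / (eikonalCoeff lam l₁ x₁ + eikonalCoeff lam l₂ x₂ +
        eikonalCoeff lam l₃ x₃) : ℝ) * thirdDeriv Φ x₁ x₂ x₃ := by
  have hsum' : (eikonalCoeff lam l₁ x₁ + eikonalCoeff lam l₂ x₂ + eikonalCoeff lam l₃ x₃ : ℂ) ≠ 0 :=
    mod_cast hsum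
  refine mul_left_cancel₀ hsum' ((h.eikonalCoeff_mul_thirdDeriv_phase ..).trans ?_)
  push_cast
  field_simp

lemma defectJet_eq (h : IsPhaseJet lam Φ Ψ) {x y z : WirtingerIndex n}
    (hsum : eikonalCoeff lam true x + eikonalCoeff lam true y + eikonalCoeff lam true z ≠ 0) :
    defectJet Φ Ψ x y z =
      I * ((eikonalCoeff lam true y * (barSign y - barSign x) +
        eikonalCoeff lam true z * (barSign z - barSign x)) / (eikonalCoeff lam true x +
        eikonalCoeff lam true y + eikonalCoeff lam true z) : ℝ) * thirdDeriv Φ x y z := by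
  rw [defectJet, evalAt_wirtingerAlong_two_defect, h.directedThirdDeriv_eq _ _ _ _ _ _ hsum,
    ← sub_mul, ← mul_sub, ← ofReal_sub]
  congr 3
  field_simp
  ring

end IsPhaseJet

lemma defectJet_comm (Φ : smoothFunctions (Cn n)) (Ψ : smoothFunctions (Cn n × Cn n))
    (x y z : WirtingerIndex n) : defectJet Φ Ψ x y z = defectJet Φ Ψ x z y := by
  rw [defectJet, wirtingerAlong_comm, defectJet]

lemma pairingSum_bar (Φ : smoothFunctions (Cn n)) (Ψ : smoothFunctions (Cn n × Cn n))
    (T x₁ x₂ x₃ x₄ : WirtingerIndex n) :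
    pairingSum Φ Ψ (bar T) x₁ x₂ x₃ x₄ = pairingSum Φ Ψ T x₁ x₂ x₃ x₄ := by
  simp only [pairingSum, bar_bar]
  ring

lemma pairingSum_reverse (Φ : smoothFunctions (Cn n)) (Ψ : smoothFunctions (Cn n × Cn n))
    (T x₁ x₂ x₃ x₄ : WirtingerIndex n) :
    pairingSum Φ Ψ T x₄ x₃ x₂ x₁ = pairingSum Φ Ψ T x₁ x₂ x₃ x₄ := by
  simp only [pairingSum, defectJet_comm Φ Ψ _ x₄, defectJet_comm Φ Ψ _ x₃ x₂,
    defectJet_comm Φ Ψ _ x₃ x₁, defectJet_comm Φ Ψ _ x₂ x₁]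
  ring

/-- The indices in which the eikonal equation is nondegenerate at the origin: `z̄_j` when
`λ_j > 0` and `z_j` when `λ_j < 0`. -/
def IsActive (lam : Fin n → ℝ) (x : WirtingerIndex n) : Prop := 0 < barSign x * lam x.1

lemma IsActive.barSign_mul_eq_abs {lam : Fin n → ℝ} {x : WirtingerIndex n} (hx : IsActive lam x) :
    barSign x * lam x.1 = |lam x.1| := by
  rw [← abs_of_pos hx, abs_mul, barSign]
  split_ifs <;> simp

lemma IsActive.abs_pos {lam : Fin n → ℝ} {x : WirtingerIndex n} (hx : IsActive lam x) :
    0 < |lam x.1| := hx.barSign_mul_eq_abs ▸ hx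

lemma IsActive.eikonalCoeff_eq {lam : Fin n → ℝ} {x : WirtingerIndex n} (hx : IsActive lam x) :
    eikonalCoeff lam true x = 2 * |lam x.1| := by
  simp only [eikonalCoeff, hx.barSign_mul_eq_abs, if_true, two_mul]

lemma IsActive.eikonalCoeff_bar_eq_zero {lam : Fin n → ℝ} {x : WirtingerIndex n}
    (hx : IsActive lam x) : eikonalCoeff lam true (bar x) = 0 := by
  have hfst : (bar x).1 = x.1 := rfl
  simp only [eikonalCoeff, if_true, barSign_bar, hfst, neg_mul, hx.barSign_mul_eq_abs,
    add_neg_cancel]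

namespace IsPhaseJet

variable {lam : Fin n → ℝ} {Φ : smoothFunctions (Cn n)} {Ψ : smoothFunctions (Cn n × Cn n)}

lemma defectJet_bar (h : IsPhaseJet lam Φ Ψ) {T X Y : WirtingerIndex n} (hT : IsActive lam T)
    (hX : IsActive lam X) (hY : IsActive lam Y) (hXT : barSign X = -barSign T)
    (hYT : barSign Y = barSign T) :
    defectJet Φ Ψ (bar T) (bar X) (bar Y) =
      I * (2 * barSign T * (|lam T.1| * |lam Y.1| / (|lam T.1| + |lam X.1| + |lam Y.1|) *
        (1 / (|lam T.1| + |lam X.1|) + 1 / (|lam X.1| + |lam Y.1|))) : ℝ) *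
        star (thirdDeriv Φ T X Y) := by
  have ha := hT.abs_pos
  have hb := hX.abs_pos
  have hc := hY.abs_pos
  have hfalse (x : WirtingerIndex n) : eikonalCoeff lam false x = 0 := rfl
  rw [defectJet, evalAt_wirtingerAlong_two_defect, h.directedThirdDeriv_bar, h.thirdDeriv_bar]
  iterate 7 rw [h.directedThirdDeriv_eq]
  all_goals simp only [hT.eikonalCoeff_eq, hX.eikonalCoeff_eq, hY.eikonalCoeff_eq, hfalse, hXT, hYT,
    barSign_bar]
  any_goals positivity
  generalize |lam T.1| = a, |lam X.1| = b, |lam Y.1| = c, barSign T = s at *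
  have hsingle {t : ℝ} (ht : 0 < t) (r : ℝ) : 2 * t * r / (2 * t) = r :=
    mul_div_cancel_left₀ r (mul_pos two_pos ht).ne'
  have hpair : (2 * a * s + 2 * c * s) / (2 * a + 2 * c) = s := by
    rw [← add_mul, mul_div_cancel_left₀ s (by positivity)]
  have hreal : -((2 * a * s + 2 * b * -s + 2 * c * s) / (2 * a + 2 * b + 2 * c)) +
      (2 * a * s + 2 * b * -s) / (2 * a + 2 * b) + s + (2 * b * -s + 2 * c * s) / (2 * b + 2 * c) =
        2 * s * (a * c / (a + b + c) * (1 / (a + b) + 1 / (b + c))) := by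
    field_simp
    ring
  simp only [zero_mul, add_zero, zero_add, hsingle ha, hsingle hb, hsingle hc, hpair, ← hreal,
    star_add, star_sub, star_mul', star_def, conj_I, conj_ofReal]
  push_cast
  ring

lemma defectJet_of_isActive_bar (h : IsPhaseJet lam Φ Ψ) {x y z : WirtingerIndex n}
    (hx : IsActive lam x) (hy : IsActive lam y) (hz : IsActive lam z)
    (hyx : barSign y = -barSign x) :
    defectJet Φ Ψ x y (bar z) =
      I * (-2 * barSign x * |lam y.1| / (|lam x.1| + |lam y.1|) : ℝ) *
        thirdDeriv Φ x y (bar z) := by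
  have ha := hx.abs_pos
  have hb := hy.abs_pos
  rw [h.defectJet_eq] <;> rw [hx.eikonalCoeff_eq, hy.eikonalCoeff_eq, hz.eikonalCoeff_bar_eq_zero]
  · congr 3
    rw [hyx]
    field_simp
    ring
  · positivity

lemma defectJet_bar_of_isActive (h : IsPhaseJet lam Φ Ψ) {x y z : WirtingerIndex n}
    (hx : IsActive lam x) (hy : IsActive lam y) (hz : IsActive lam z) :
    defectJet Φ Ψ (bar x) y (bar z) =
      I * (barSign y + barSign x : ℝ) * thirdDeriv Φ (bar x) y (bar z) := by
  have hb := hy.abs_pos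
  rw [h.defectJet_eq] <;>
    rw [hx.eikonalCoeff_bar_eq_zero, hy.eikonalCoeff_eq, hz.eikonalCoeff_bar_eq_zero]
  · congr 3
    rw [barSign_bar]
    field_simp
    ring
  · positivity

lemma defectJet_bar_bar_eq_zero (h : IsPhaseJet lam Φ Ψ) {x y z : WirtingerIndex n}
    (hx : IsActive lam x) (hy : IsActive lam y) (hz : IsActive lam z) :
    defectJet Φ Ψ x (bar y) (bar z) = 0 := by
  have ha := hx.abs_pos
  rw [h.defectJet_eq] <;>
    rw [hx.eikonalCoeff_eq, hy.eikonalCoeff_bar_eq_zero, hz.eikonalCoeff_bar_eq_zero]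
  · simp
  · positivity

lemma defectJet_of_isActive (h : IsPhaseJet lam Φ Ψ) {x y z : WirtingerIndex n}
    (hx : IsActive lam x) (hy : IsActive lam y) (hz : IsActive lam z)
    (hyx : barSign y = -barSign x) (hzx : barSign z = barSign x) :
    defectJet Φ Ψ x y z =
      I * (-2 * barSign x * |lam y.1| / (|lam x.1| + |lam y.1| + |lam z.1|) : ℝ) *
        thirdDeriv Φ x y z := by
  have ha := hx.abs_pos
  have hb := hy.abs_pos
  have hc := hz.abs_pos
  rw [h.defectJet_eq] <;> rw [hx.eikonalCoeff_eq, hy.eikonalCoeff_eq, hz.eikonalCoeff_eq]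
  · congr 3
    rw [hyx, hzx]
    field_simp
    ring
  · positivity

lemma pairingSum_eq (h : IsPhaseJet lam Φ Ψ) {T X Y : WirtingerIndex n} (hT : IsActive lam T)
    (hX : IsActive lam X) (hY : IsActive lam Y) (hXT : barSign X = -barSign T)
    (hYT : barSign Y = barSign T) :
    pairingSum Φ Ψ T X (bar X) (bar Y) Y =
      (4 * |lam X.1| / (|lam T.1| + |lam X.1|) : ℝ) *
        (thirdDeriv Φ T X (bar X) * thirdDeriv Φ (bar T) Y (bar Y) +
          normSq (thirdDeriv Φ T X (bar Y))) +
      (4 * |lam T.1| * |lam X.1| * |lam Y.1| / (|lam T.1| + |lam X.1| + |lam Y.1|) ^ 2 *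
        (1 / (|lam T.1| + |lam X.1|) + 1 / (|lam X.1| + |lam Y.1|)) : ℝ) *
        normSq (thirdDeriv Φ T X Y) := by
  have hconj : thirdDeriv Φ (bar T) Y (bar X) = star (thirdDeriv Φ T X (bar Y)) := by
    rw [← h.thirdDeriv_bar, bar_bar, thirdDeriv_swap_right]
  have hsq : (barSign T : ℂ) ^ 2 = 1 := by
    rw [sq]
    exact mod_cast barSign_mul_self T
  rw [pairingSum, defectJet_comm _ _ (bar T) (bar Y) Y, defectJet_comm _ _ (bar T) (bar X) Y,
    h.defectJet_bar_of_isActive hT hX hX, h.defectJet_bar_of_isActive hT hX hY,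
    h.defectJet_bar_of_isActive hT hY hX, h.defectJet_bar_of_isActive hT hY hY,
    h.defectJet_of_isActive_bar hT hX hX hXT, h.defectJet_of_isActive_bar hT hX hY hXT,
    h.defectJet_of_isActive hT hX hY hXT hYT, h.defectJet_bar hT hX hY hXT hYT,
    h.defectJet_bar_bar_eq_zero hT hX hY, hconj, hXT, hYT, ← mul_conj, ← mul_conj, star_def,
    sq (|lam T.1| + |lam X.1| + |lam Y.1|), ← div_div]
  push_cast
  ring_nf
  simp only [I_sq, hsq]
  ring

lemma fourthDeriv_phase (h : IsPhaseJet lam Φ Ψ) {j k : Fin n} (hj : 0 < lam j)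
    (hk : lam k < 0) :
    fourthDeriv (direction true) Ψ (j, true) (j, false) (k, true) (k, false) =
      ∑ t, (1 / (2 * (|lam j| + |lam k|)) : ℝ) * I *
        pairingSum Φ Ψ (t, false) (j, true) (j, false) (k, true) (k, false) +
      I * ((lam j + lam k) / (|lam j| + |lam k|) : ℝ) *
        fourthDeriv (.id ℝ _) Φ (j, true) (j, false) (k, true) (k, false) := by
  have hsum : ((|lam j| + |lam k| : ℝ) : ℂ) ≠ 0 :=
    ofReal_ne_zero.mpr (add_pos (abs_pos.mpr hj.ne') (abs_pos.mpr hk.ne)).ne'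
  have hfourth := h.eikonalCoeff_mul_fourthDeriv_phase (j, true) (j, false) (k, true) (k, false)
  simp only [eikonalCoeff, barSign, if_true, Bool.false_eq_true, if_false, abs_of_pos hj,
    abs_of_neg hk] at hfourth
  rw [← Finset.mul_sum]
  rw [abs_of_pos hj, abs_of_neg hk] at hsum ⊢
  push_cast at hfourth hsum ⊢
  field_simp
  linear_combination -I * hfourth +
    2 * (lam j - lam k) * fourthDeriv (direction true) Ψ (j, true) (j, false) (k, true) (k, false) *
      I_sq

lemma one_div_mul_pairingSum (h : IsPhaseJet lam Φ Ψ) {T X Y : WirtingerIndex n}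
    (hT : IsActive lam T) (hX : IsActive lam X) (hY : IsActive lam Y)
    (hXT : barSign X = -barSign T) (hYT : barSign Y = barSign T) :
    (1 / (2 * (|lam X.1| + |lam Y.1|)) : ℝ) * I * pairingSum Φ Ψ T X (bar X) (bar Y) Y =
      (2 * |lam X.1| / ((|lam X.1| + |lam Y.1|) * (|lam T.1| + |lam X.1|)) : ℝ) * I *
        normSq (thirdDeriv Φ T X (bar Y)) +
      (2 * |lam T.1| * |lam X.1| * |lam Y.1| /
          ((|lam X.1| + |lam Y.1|) * (|lam T.1| + |lam X.1| + |lam Y.1|) ^ 2) *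
          (1 / (|lam T.1| + |lam X.1|) + 1 / (|lam X.1| + |lam Y.1|)) : ℝ) * I *
        normSq (thirdDeriv Φ T X Y) +
      (2 * |lam X.1| / ((|lam X.1| + |lam Y.1|) * (|lam T.1| + |lam X.1|)) : ℝ) * I *
        (thirdDeriv Φ T X (bar X) * thirdDeriv Φ (bar T) Y (bar Y)) := by
  rw [h.pairingSum_eq hT hX hY hXT hYT]
  generalize |lam T.1| = a, |lam X.1| = b, |lam Y.1| = c
  have hpair : 2 * b / ((b + c) * (a + b)) = 1 / (2 * (b + c)) * (4 * b / (a + b)) := by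
    field_simp
    ring
  have htriple : 2 * a * b * c / ((b + c) * (a + b + c) ^ 2) * (1 / (a + b) + 1 / (b + c)) =
      1 / (2 * (b + c)) * (4 * a * b * c / (a + b + c) ^ 2 * (1 / (a + b) + 1 / (b + c))) := by
    field_simp
    ring
  rw [hpair, htriple]
  push_cast
  ring

lemma one_div_mul_pairingSum_of_neg (h : IsPhaseJet lam Φ Ψ) {t j k : Fin n} (ht : lam t < 0)
    (hj : 0 < lam j) (hk : lam k < 0) :
    (1 / (2 * (|lam j| + |lam k|)) : ℝ) * I *
        pairingSum Φ Ψ (t, false) (j, true) (j, false) (k, true) (k, false) =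
      (2 * |lam j| / ((|lam j| + |lam k|) * (|lam t| + |lam j|)) : ℝ) * I *
        normSq (thirdDeriv Φ (t, true) (j, false) (k, false)) +
      (2 * |lam t| * |lam k| * |lam j| /
          ((|lam j| + |lam k|) * (|lam t| + |lam k| + |lam j|) ^ 2) *
          (1 / (|lam j| + |lam t|) + 1 / (|lam j| + |lam k|)) : ℝ) * I *
        normSq (thirdDeriv Φ (t, true) (j, false) (k, true)) +
      (2 * |lam j| / ((|lam j| + |lam t|) * (|lam j| + |lam k|)) : ℝ) * I *
        (thirdDeriv Φ (t, false) (j, true) (j, false) *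
          thirdDeriv Φ (t, true) (k, true) (k, false)) := by
  have hT : IsActive lam (t, false) := by simpa [IsActive, barSign] using ht
  have hX : IsActive lam (j, true) := by simpa [IsActive, barSign] using hj
  have hY : IsActive lam (k, false) := by simpa [IsActive, barSign] using hk
  have hconj (x : WirtingerIndex n) : normSq (thirdDeriv Φ (t, true) (j, false) x) =
      normSq (thirdDeriv Φ (t, false) (j, true) (bar x)) := by
    rw [← normSq_conj, ← star_def, ← h.thirdDeriv_bar]
    rfl
  rw [hconj, hconj, thirdDeriv_swap_right Φ (t, true) (k, true), add_comm |lam j| |lam t|,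
    mul_comm (|lam t| + |lam j|), add_right_comm |lam t| |lam k|, mul_right_comm _ |lam k|]
  simpa only [bar, Bool.not_true, Bool.not_false] using
    h.one_div_mul_pairingSum hT hX hY (by simp [barSign]) rfl

lemma one_div_mul_pairingSum_of_pos (h : IsPhaseJet lam Φ Ψ) {t j k : Fin n} (ht : 0 < lam t)
    (hj : 0 < lam j) (hk : lam k < 0) :
    (1 / (2 * (|lam j| + |lam k|)) : ℝ) * I *
        pairingSum Φ Ψ (t, false) (j, true) (j, false) (k, true) (k, false) =
      (2 * |lam k| / ((|lam j| + |lam k|) * (|lam t| + |lam k|)) : ℝ) * I *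
        normSq (thirdDeriv Φ (t, true) (j, false) (k, false)) +
      (2 * |lam t| * |lam k| * |lam j| /
          ((|lam j| + |lam k|) * (|lam t| + |lam k| + |lam j|) ^ 2) *
          (1 / (|lam j| + |lam k|) + 1 / (|lam t| + |lam k|)) : ℝ) * I *
        normSq (thirdDeriv Φ (t, true) (j, true) (k, false)) +
      (2 * |lam k| / ((|lam k| + |lam t|) * (|lam j| + |lam k|)) : ℝ) * I *
        (thirdDeriv Φ (t, false) (j, true) (j, false) *
          thirdDeriv Φ (t, true) (k, true) (k, false)) := by
  have hT : IsActive lam (t, true) := by simpa [IsActive, barSign] using ht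
  have hX : IsActive lam (k, false) := by simpa [IsActive, barSign] using hk
  have hY : IsActive lam (j, true) := by simpa [IsActive, barSign] using hj
  rw [← pairingSum_bar, ← pairingSum_reverse, thirdDeriv_swap_right Φ (t, true) (j, false),
    thirdDeriv_swap_right Φ (t, true) (j, true), thirdDeriv_swap_right Φ (t, true) (k, true),
    mul_comm (thirdDeriv Φ (t, false) _ _), add_comm |lam j| |lam k|, add_comm |lam k| |lam t|,
    mul_comm (|lam t| + |lam k|) (|lam k| + |lam j|), add_comm (1 / (|lam k| + |lam j|))]
  simpa only [bar, Bool.not_true, Bool.not_false] using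
    h.one_div_mul_pairingSum hT hX hY (by simp [barSign]) rfl

end IsPhaseJet

end PhaseJet

section WirtingerDerivatives

variable {n : ℕ}

lemma evalAt_wirtingerCn_false (j : Fin n) (f : smoothFunctions (Cn n)) (z : Cn n) :
    evalAt z (wirtingerCn (j, false) f) = wd j f z := by
  simp only [wirtinger_apply, map_add, map_smul, evalAt_derivAlong, wd]
  simp [barSign, sub_eq_add_neg]

lemma evalAt_wirtingerCn_true (j : Fin n) (f : smoothFunctions (Cn n)) (z : Cn n) :
    evalAt z (wirtingerCn (j, true) f) = wdb j f z := by
  simp only [wirtinger_apply, map_add, map_smul, evalAt_derivAlong, wdb]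
  simp [barSign]

lemma wd_smoothFunctions (j : Fin n) (f : smoothFunctions (Cn n)) :
    wd j f = (wirtingerCn (j, false) f : Cn n → ℂ) :=
  funext fun z => (evalAt_wirtingerCn_false j f z).symm

lemma wdb_smoothFunctions (j : Fin n) (f : smoothFunctions (Cn n)) :
    wdb j f = (wirtingerCn (j, true) f : Cn n → ℂ) :=
  funext fun z => (evalAt_wirtingerCn_true j f z).symm

lemma fderiv_comp_prodMk_left (f : smoothFunctions (Cn n × Cn n)) (z w v : Cn n) :
    fderiv ℝ (fun x => (f : Cn n × Cn n → ℂ) (x, w)) z v = evalAt (z, w) (derivAlong (v, 0) f) := by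
  have := ((differentiable_smoothFunctions f (z, w)).hasFDerivAt.comp
    (f := fun x => (x, w)) z
    (hasFDerivAt_prodMk_left z w)).fderiv
  exact congrArg (· v) this

lemma evalAt_wirtingerAlong_false (j : Fin n) (f : smoothFunctions (Cn n × Cn n))
    (p : Cn n × Cn n) :
    evalAt p (wirtingerAlong true (j, false) f) =
      wd j (fun x => (f : Cn n × Cn n → ℂ) (x, p.2)) p.1 := by
  simp only [wirtinger_apply, map_add, map_smul, wd, fderiv_comp_prodMk_left]
  simp [barSign, direction, sub_eq_add_neg]

lemma evalAt_wirtingerAlong_true (j : Fin n) (f : smoothFunctions (Cn n × Cn n))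
    (p : Cn n × Cn n) :
    evalAt p (wirtingerAlong true (j, true) f) =
      wdb j (fun x => (f : Cn n × Cn n → ℂ) (x, p.2)) p.1 := by
  simp only [wirtinger_apply, map_add, map_smul, wdb, fderiv_comp_prodMk_left]
  simp [barSign, direction]

end WirtingerDerivatives

section Admissible

variable {n : ℕ} {lam : Fin n → ℝ} {φ : Cn n → ℝ} {ψ : Cn n → Cn n → ℂ}

/-- A smooth real function as an element of the algebra of smooth complex-valued functions. -/
def smoothOfReal (φ : Cn n → ℝ) (hφ : ContDiff ℝ ∞ φ) : smoothFunctions (Cn n) :=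
  ⟨cplx φ, ofRealCLM.contDiff.comp hφ⟩

/-- A smooth function of `(z, w)` as an element of the algebra of smooth functions. -/
def smoothOfCurried (ψ : Cn n → Cn n → ℂ) (hψ : ContDiff ℝ ∞ fun p : Cn n × Cn n => ψ p.1 p.2) :
    smoothFunctions (Cn n × Cn n) :=
  ⟨fun p => ψ p.1 p.2, hψ⟩

lemma star_smoothOfReal (hφ : ContDiff ℝ ∞ φ) : star (smoothOfReal φ hφ) = smoothOfReal φ hφ :=
  smoothFunctions_ext fun z => conj_ofReal (φ z)

lemma evalAt_wirtingerCn_wirtingerCn_smoothOfReal (hφ : PhiOK lam φ) (x y : WirtingerIndex n) :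
    evalAt 0 (wirtingerCn y (wirtingerCn x (smoothOfReal φ hφ.1))) =
      if y = bar x then (lam x.1 : ℂ) else 0 := by
  refine evalAt_wirtingerCn_wirtingerCn_of_isBigO (c := fun t => lam t) ?_ x y
  refine (isBigO_ofReal_left.mpr hφ.2).congr_left fun z => ?_
  simp [smoothOfReal, cplx]

lemma evalAt_wirtingerAlong_wirtingerAlong_phase (hψ : Admissible lam φ ψ)
    (x y : WirtingerIndex n) :
    evalAt 0 (wirtingerAlong true y (wirtingerAlong true x (smoothOfCurried ψ hψ.1))) =
      if y = bar x then I * |lam x.1| else 0 := by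
  obtain ⟨hsmooth, -, -, -, -, -, -, -, -, hquadratic⟩ := hψ
  have hslice : Filter.Tendsto (fun z : Cn n => (z, (0 : Cn n))) (𝓝 0) (𝓝 0) :=
    (by fun_prop : Continuous fun z : Cn n => (z, (0 : Cn n))).tendsto' 0 0 rfl
  have hbigO := hquadratic.comp_tendsto hslice
  have := evalAt_wirtingerCn_wirtingerCn_of_isBigO
    (f := pullback (direction true) (smoothOfCurried ψ hsmooth)) (c := fun t => I * |lam t|)
    ?_ x y
  · rwa [wirtinger_pullback, wirtinger_pullback, evalAt_pullback, map_zero] at this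
  · refine (hbigO.trans (.of_bound 1 ?_)).congr_left ?_
    · simp
    · intro z
      simp [smoothOfCurried, pullback, direction, Finset.mul_sum, mul_assoc]

lemma pullback_defect_eq_zero (hφ : PhiOK lam φ) (hψ : Admissible lam φ ψ)
    (x : WirtingerIndex n) :
    pullback (direction false) (defect (smoothOfReal φ hφ.1) (smoothOfCurried ψ hψ.1) x) = 0 := by
  obtain ⟨hsmooth, -, -, -, hwdb, hwd, -⟩ := hψ
  refine smoothFunctions_ext fun z => ?_
  rw [evalAt_pullback, defect, map_sub, map_smul, evalAt_pullback, map_zero, sub_eq_zero]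
  rcases x with ⟨j, _ | _⟩
  · rw [evalAt_wirtingerAlong_false, evalAt_wirtingerCn_false]
    exact (hwd z j).trans (by simp [barSign, direction, smoothOfReal])
  · rw [evalAt_wirtingerAlong_true, evalAt_wirtingerCn_true]
    exact (hwdb z j).trans (by simp [barSign, direction, smoothOfReal])

lemma sum_defect_mul_defect_mem_flatFunctions (hφ : PhiOK lam φ) (hψ : Admissible lam φ ψ) :
    ∑ t, defect (smoothOfReal φ hφ.1) (smoothOfCurried ψ hψ.1) (t, true) *
      defect (smoothOfReal φ hφ.1) (smoothOfCurried ψ hψ.1) (t, false) ∈ flatFunctions 0 := by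
  obtain ⟨hsmooth, -, -, -, -, -, -, -, heikonal, -⟩ := hψ
  intro m
  rw [← heikonal m 0]
  refine congrArg (iteratedFDeriv ℝ m · 0) (funext fun p => ?_)
  change evalAt p _ = _
  simp only [map_sum, map_mul, defect, map_sub, map_smul, smul_eq_mul, evalAt_pullback,
    evalAt_wirtingerAlong_true, evalAt_wirtingerAlong_false, evalAt_wirtingerCn_true,
    evalAt_wirtingerCn_false, barSign, smoothOfCurried, smoothOfReal]
  refine Finset.sum_congr rfl fun t _ => ?_
  simp only [if_true, Bool.false_eq_true, if_false, ofReal_one, ofReal_neg,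
    ContinuousLinearMap.coe_fst']
  generalize wdb t (fun x => ψ x p.2) p.1 = a, wd t (fun x => ψ x p.2) p.1 = b,
    wdb t (cplx φ) p.1 = c, wd t (cplx φ) p.1 = d
  linear_combination (a * b - c * d) * I_sq

lemma Admissible.isPhaseJet (hφ : PhiOK lam φ) (hψ : Admissible lam φ ψ) :
    IsPhaseJet lam (smoothOfReal φ hφ.1) (smoothOfCurried ψ hψ.1) where
  star_weight := star_smoothOfReal hφ.1
  diagonal := smoothFunctions_ext fun z => hψ.2.1 z
  hermitian := smoothFunctions_ext fun p => hψ.2.2.1 p.1 p.2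
  defect_diagonal := pullback_defect_eq_zero hφ hψ
  eikonal := sum_defect_mul_defect_mem_flatFunctions hφ hψ
  hessian_weight := evalAt_wirtingerCn_wirtingerCn_smoothOfReal hφ
  hessian_phase := evalAt_wirtingerAlong_wirtingerAlong_phase hψ

lemma wdb_wd_wdb_wd_slice (f : smoothFunctions (Cn n × Cn n)) (j k : Fin n) :
    wdb j (wd j (wdb k (wd k fun z => (f : Cn n × Cn n → ℂ) (z, 0)))) 0 =
      fourthDeriv (direction true) f (j, true) (j, false) (k, true) (k, false) := by
  have hslice : (fun z => (f : Cn n × Cn n → ℂ) (z, 0)) = pullback (direction true) f := rfl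
  rw [hslice, wd_smoothFunctions, wdb_smoothFunctions, wd_smoothFunctions,
    ← evalAt_wirtingerCn_true, wirtinger_pullback, wirtinger_pullback, wirtinger_pullback,
    wirtinger_pullback, evalAt_pullback, map_zero]
  rfl

end Admissible

theorem statement7_general {n : ℕ} {lam : Fin n → ℝ} {Φ : smoothFunctions (Cn n)}
    {Ψ : smoothFunctions (Cn n × Cn n)} (h : IsPhaseJet lam Φ Ψ) (hlam : ∀ t, lam t ≠ 0)
    {j k : Fin n} (hj : 0 < lam j) (hk : lam k < 0) :
    wdb j (wd j (wdb k (wd k (fun z => (Ψ : Cn n × Cn n → ℂ) (z, 0))))) 0 =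
      (∑ t : Fin n, if lam t < 0 then
        ((2 * |lam j| / ((|lam j| + |lam k|) * (|lam t| + |lam j|)) : ℝ) : ℂ) * I *
            (normSq (wdb t (wd j (wd k Φ)) 0) : ℂ)
        + ((2 * |lam t| * |lam k| * |lam j| /
              ((|lam j| + |lam k|) * (|lam t| + |lam k| + |lam j|) ^ 2) *
              (1 / (|lam j| + |lam t|) + 1 / (|lam j| + |lam k|)) : ℝ) : ℂ) * I *
            (normSq (wdb t (wd j (wdb k Φ)) 0) : ℂ)
        + ((2 * |lam j| / ((|lam j| + |lam t|) * (|lam j| + |lam k|)) : ℝ) : ℂ) * I *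
            (wd t (wdb j (wd j Φ)) 0 * wdb t (wdb k (wd k Φ)) 0)
      else 0)
      + (∑ t : Fin n, if 0 < lam t then
        ((2 * |lam k| / ((|lam j| + |lam k|) * (|lam t| + |lam k|)) : ℝ) : ℂ) * I *
            (normSq (wdb t (wd j (wd k Φ)) 0) : ℂ)
        + ((2 * |lam t| * |lam k| * |lam j| /
              ((|lam j| + |lam k|) * (|lam t| + |lam k| + |lam j|) ^ 2) *
              (1 / (|lam j| + |lam k|) + 1 / (|lam t| + |lam k|)) : ℝ) : ℂ) * I *
            (normSq (wdb t (wdb j (wd k Φ)) 0) : ℂ)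
        + ((2 * |lam k| / ((|lam k| + |lam t|) * (|lam j| + |lam k|)) : ℝ) : ℂ) * I *
            (wd t (wdb j (wd j Φ)) 0 * wdb t (wdb k (wd k Φ)) 0)
      else 0)
      + I * (((lam j + lam k) / (|lam j| + |lam k|) : ℝ) : ℂ) *
          wdb j (wd j (wdb k (wd k Φ))) 0 := by
  rw [wdb_wd_wdb_wd_slice, h.fourthDeriv_phase hj hk, ← Finset.sum_add_distrib]
  simp only [wd_smoothFunctions, wdb_smoothFunctions]
  congr 1
  refine Finset.sum_congr rfl fun t _ => ?_
  rcases lt_or_gt_of_ne (hlam t) with ht | ht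
  · rw [if_pos ht, if_neg ht.not_gt, add_zero, h.one_div_mul_pairingSum_of_neg ht hj hk]
    rfl
  · rw [if_neg ht.not_gt, if_pos ht, zero_add, h.one_div_mul_pairingSum_of_pos ht hj hk]
    rfl

/-- the mixed fourth derivative `∂⁴ψ/∂z̄_j∂z_j∂z̄_k∂z_k(0,0)`
(derivatives in the `z`-variables, `w` held fixed at `0`) for `q+1 ≤ j ≤ n`,
`1 ≤ k ≤ q`. -/
theorem statement7 (n q : ℕ) (hn : 1 ≤ n) (hq : q ≤ n) (lam : Fin n → ℝ)
    (hneg : ∀ j : Fin n, (j : ℕ) < q → lam j < 0)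
    (hpos : ∀ j : Fin n, q ≤ (j : ℕ) → 0 < lam j)
    (φ : Cn n → ℝ) (hφ : PhiOK lam φ)
    (ψ : Cn n → Cn n → ℂ) (hψ : Admissible lam φ ψ)
    (j k : Fin n) (hj : q ≤ (j : ℕ)) (hk : (k : ℕ) < q) :
    wdb j (wd j (wdb k (wd k (fun z => ψ z 0)))) 0 =
      (∑ t : Fin n, if (t : ℕ) < q then
        ((2 * |lam j| / ((|lam j| + |lam k|) * (|lam t| + |lam j|)) : ℝ) : ℂ) * Complex.I *
            (Complex.normSq (wdb t (wd j (wd k (cplx φ))) 0) : ℂ)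
        + ((2 * |lam t| * |lam k| * |lam j| /
              ((|lam j| + |lam k|) * (|lam t| + |lam k| + |lam j|) ^ 2) *
              (1 / (|lam j| + |lam t|) + 1 / (|lam j| + |lam k|)) : ℝ) : ℂ) * Complex.I *
            (Complex.normSq (wdb t (wd j (wdb k (cplx φ))) 0) : ℂ)
        + ((2 * |lam j| / ((|lam j| + |lam t|) * (|lam j| + |lam k|)) : ℝ) : ℂ) * Complex.I *
            (wd t (wdb j (wd j (cplx φ))) 0 * wdb t (wdb k (wd k (cplx φ))) 0)
      else 0)
      + (∑ t : Fin n, if q ≤ (t : ℕ) then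
        ((2 * |lam k| / ((|lam j| + |lam k|) * (|lam t| + |lam k|)) : ℝ) : ℂ) * Complex.I *
            (Complex.normSq (wdb t (wd j (wd k (cplx φ))) 0) : ℂ)
        + ((2 * |lam t| * |lam k| * |lam j| /
              ((|lam j| + |lam k|) * (|lam t| + |lam k| + |lam j|) ^ 2) *
              (1 / (|lam j| + |lam k|) + 1 / (|lam t| + |lam k|)) : ℝ) : ℂ) * Complex.I *
            (Complex.normSq (wdb t (wdb j (wd k (cplx φ))) 0) : ℂ)
        + ((2 * |lam k| / ((|lam k| + |lam t|) * (|lam j| + |lam k|)) : ℝ) : ℂ) * Complex.I *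
            (wd t (wdb j (wd j (cplx φ))) 0 * wdb t (wdb k (wd k (cplx φ))) 0)
      else 0)
      + Complex.I * (((lam j + lam k) / (|lam j| + |lam k|) : ℝ) : ℂ) *
          wdb j (wd j (wdb k (wd k (cplx φ)))) 0 := by
  have hlt (t : Fin n) : lam t < 0 ↔ (t : ℕ) < q :=
    ⟨fun ht => not_le.mp fun hqt => ht.not_gt (hpos t hqt), hneg t⟩
  have hle (t : Fin n) : 0 < lam t ↔ q ≤ (t : ℕ) :=
    ⟨fun ht => not_lt.mp fun htq => ht.not_gt (hneg t htq), hpos t⟩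
  have hlam (t : Fin n) : lam t ≠ 0 :=
    (lt_or_ge (t : ℕ) q).elim (fun ht => (hneg t ht).ne) fun ht => (hpos t ht).ne'
  have h := statement7_general (hψ.isPhaseJet hφ) hlam (hpos j hj) (hneg k hk)
  simp only [hlt, hle] at h
  exact h
end
end
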